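/- arXiv:1912.01994 — 6 statements merged into one kernel-verified Lean document; each statement's English description precedes it below -/
import Mathlib

section
/- The Golomb space ℕ_τ is topologically rigid: every homeomorphism h : ℕ_τ → ℕ_τ is the identity map (equivalently, the homeomorphism group of ℕ_τ is trivial). -/
/-!
Let `h` be a self-homeomorphism of the Golomb space. The closure of `a + bℕ₀` consists of the `w`
which, at each prime `p ∣ b`, are divisible by `p` or congruent to `a` modulo the `p`-part of `b`.
It follows that three distinct points are pairwise coprime exactly when every closure of a nonempty
open set contains an intersection of closures of neighbourhoods of the three points
(`ClosureTriple`). So `h` preserves coprimality; hence it fixes `1`, it induces a permutation `σ`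
of the primes (`primeMap`) with `p ∣ x ↔ σ p ∣ h x`, and it maps powers of `p` to powers
of `σ p`. The same closures show that `h` is continuous from the `p`-adic topology on `ℕ \ pℕ` to
the `σ p`-adic topology on `ℕ \ σ(p)ℕ` (`padic_continuity`).

Consequently `σ` preserves, for each prime `p`, the preorder (`s` lies in the closed subgroup of
`ℤ_p^×` generated by `r`) on the primes different from `p` (`InPowClosure`). By Dirichlet's theorem
every open procyclic subgroup of `ℤ_p^×` is generated by a prime, so this preorder sees the whole
poset of these subgroups. The prime `2` is the only one for which `ℤ_p^×` is not procyclic,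
so `σ 2 = 2`. For odd `p` the subgroups `1 + p ^ n ℤ_p`, `n ≥ 1`, are those below which the poset is
a chain, so `r ≡ 1` modulo `p ^ n` iff `σ r ≡ 1` modulo `σ(p) ^ n`. For `p = 2` the poset
determines the subgroup `1 + 8 ℤ_2`; this forces `h 3, h 5 ∈ {3, 5}`, the values of `h` at `3`
and `4` exclude an interchange, and `1 + 4 ℤ_2` is the subgroup generated by `5 = h 5`.
By density of the primes, `p ^ n ∣ x - 1` iff `σ(p) ^ n ∣ h x - 1` for all `x`
(`pow_dvd_sub_one_iff`). Since the prime divisors of `x - 1` are smaller than `x`, strong induction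
gives `h x - 1 = x - 1`.
-/

open TopologicalSpace

/-- The arithmetic progression `a + bℕ₀ = {a + b*n : n ≥ 0}` inside the positive integers. -/
def golombBasic (a b : ℕ) : Set ℕ+ := {x : ℕ+ | ∃ n : ℕ, (x : ℕ) = a + b * n}

/-- The Golomb topology on the positive integers, generated by the arithmetic
progressions `a + bℕ₀` with coprime `a, b ∈ ℕ`. -/
instance golombTopology : TopologicalSpace ℕ+ :=
  generateFrom {S : Set ℕ+ | ∃ a b : ℕ, 0 < a ∧ 0 < b ∧ Nat.Coprime a b ∧ S = golombBasic a b}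

/-- The positive integers not divisible by `p` (the set `ℕ \ pℕ`). -/
abbrev Np (p : ℕ) : Type := {x : ℕ+ // ¬ p ∣ (x : ℕ)}

/-- The `p`-adic topology on `ℕ \ pℕ`, generated by the traces of the sets
`x + p^nℕ₀`, `x, n ∈ ℕ`. -/
def padicTop (p : ℕ) : TopologicalSpace (Np p) :=
  generateFrom {S : Set (Np p) | ∃ x n : ℕ, 0 < x ∧ 0 < n ∧
    S = {y : Np p | ∃ k : ℕ, ((y : ℕ+) : ℕ) = x + p ^ n * k}}

/-- Closure of a set of positive integers in the `p`-adic topology on `ℕ \ pℕ`,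
viewed again as a set of positive integers. -/
def padicClosure (p : ℕ) (A : Set ℕ+) : Set ℕ+ :=
  Subtype.val '' (@closure (Np p) (padicTop p) (Subtype.val ⁻¹' A))

/-- `a^ℕ = {a^k : k ∈ ℕ}`, the set of positive powers of `a`. -/
def powSet (a : ℕ) : Set ℕ+ := {y : ℕ+ | ∃ k : ℕ, 0 < k ∧ (y : ℕ) = a ^ k}

/-- The closure of `a^ℕ` in the `p`-adic topology on `ℕ \ pℕ`. -/
def clPow (p a : ℕ) : Set ℕ+ := padicClosure p (powSet a)

/-- The family `𝒳_p` of closures of the sets `a^ℕ` for `a ∈ ℕ \ pℕ`, `a ≠ 1`. -/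
def XX (p : ℕ) : Set (Set ℕ+) := {X | ∃ a : ℕ, 0 < a ∧ a ≠ 1 ∧ ¬ p ∣ a ∧ X = clPow p a}

/-- The projection `π_n(X)` of a set of positive integers to `ℤ/p^nℤ`. -/
def pin (p n : ℕ) (X : Set ℕ+) : Set (ZMod (p ^ n)) :=
  (fun y : ℕ+ => ((y : ℕ) : ZMod (p ^ n))) '' X

/-- `n(X)`: the least `n ∈ ℕ` with `X = ℕ ∩ π_n⁻¹(π_n(X))` and `|π_n(X)| ≥ max(p,3)`. -/
noncomputable def nX (p : ℕ) (X : Set ℕ+) : ℕ :=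
  sInf {n : ℕ | 0 < n ∧ X = {y : ℕ+ | ((y : ℕ) : ZMod (p ^ n)) ∈ pin p n X} ∧
    max p 3 ≤ (pin p n X).ncard}

/-- `i(X)`: the index of the subgroup `π_{n(X)}(X)` in the group of units of `ℤ/p^{n(X)}ℤ`. -/
noncomputable def iX (p : ℕ) (X : Set ℕ+) : ℕ :=
  Nat.card ((ZMod (p ^ nX p X))ˣ) / (pin p (nX p X) X).ncard

namespace GolombRigid

/-! ### Closed subgroups of the `p`-adic units generated by primes -/

/-- `InPowClosure p s r` says that `s` lies in the `p`-adic closure of the powers of `r`. -/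
def InPowClosure (p s r : ℕ) : Prop := ∀ n, ∃ k, s ≡ r ^ k [MOD p ^ n]

theorem exists_prime_modEq {p a : ℕ} (hp : p.Prime) (ha : ¬ p ∣ a) (n : ℕ) :
    ∃ r, r.Prime ∧ r ≠ p ∧ r ≡ a [MOD p ^ n] := by
  have hc : a.Coprime (p ^ n) := ((hp.coprime_iff_not_dvd.2 ha).symm).pow_right n
  obtain ⟨r, hr, hrp, h⟩ := Nat.forall_exists_prime_gt_and_modEq p (pow_ne_zero n hp.ne_zero) hc
  exact ⟨r, hrp, hr.ne', h⟩

theorem exists_eq_one_add {p x : ℕ} (hp : p.Prime) (hx : 1 < x) :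
    ∃ n u, x = 1 + p ^ n * u ∧ ¬ p ∣ u := by
  obtain ⟨e, u, hu, h⟩ := Nat.exists_eq_pow_mul_and_not_dvd (n := x - 1) (by omega) p hp.ne_one
  exact ⟨e, u, by omega, hu⟩

theorem modEq_one_iff {p n u m : ℕ} (hp : p.Prime) (hu : ¬ p ∣ u) :
    1 + p ^ n * u ≡ 1 [MOD p ^ m] ↔ m ≤ n := by
  have h1 : 1 + p ^ n * u ≡ 1 [MOD p ^ m] ↔ p ^ m ∣ p ^ n * u := by
    constructor
    · intro h
      have := (Nat.modEq_iff_dvd' (Nat.le_add_right 1 _)).1 h.symm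
      simpa using this
    · intro h
      refine ((Nat.modEq_iff_dvd' (Nat.le_add_right 1 _)).2 ?_).symm
      simpa using h
  rw [h1]
  constructor
  · intro h
    by_contra! hlt
    have h2 : p ^ n * p ∣ p ^ n * u := by
      rw [← pow_succ]
      exact (pow_dvd_pow p hlt).trans h
    exact hu ((Nat.mul_dvd_mul_iff_left (pow_pos hp.pos n)).1 h2)
  · intro h
    exact (pow_dvd_pow p h).trans (dvd_mul_right _ _)

/-- If `r ^ e - 1` has exact `p`-adic order `n`, where `n ≥ 1` for odd `p` and `n ≥ 2` for `p = 2`,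
then the closed subgroup generated by `r` contains `1 + p ^ n ℤ_p`; hence it contains every `s`
which agrees with a power of `r` modulo `p ^ n`. -/
theorem inPowClosure_of_modEq {p n r s e j u : ℕ} (hp : p.Prime) (hn : n + 2 ≤ p * n)
    (hre : r ^ e = 1 + p ^ n * u) (hu : ¬ p ∣ u) (hpr : ¬ p ∣ r)
    (hs : s ≡ r ^ j [MOD p ^ n]) : InPowClosure p s r := by
  have : Fact p.Prime := ⟨hp⟩
  have hn0 : n ≠ 0 := by rintro rfl; omega
  have key : ∀ m, ∃ k, ((p ^ (n + m) : ℕ) : ℤ) ∣ (s : ℤ) - ((r ^ k : ℕ) : ℤ) := by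
    intro m
    induction m with
    | zero => exact ⟨j, by simpa using Nat.modEq_iff_dvd.1 hs.symm⟩
    | succ m ih =>
      obtain ⟨k, a, ha⟩ := ih
      obtain ⟨y, hy⟩ := ZMod.exists_one_add_mul_pow_prime_pow_eq (R := ℤ) (u := (p : ℤ) ^ n)
        (v := (p : ℤ)) hp (dvd_pow_self _ hn0)
        (by
          rw [← pow_mul, ← pow_succ', ← pow_succ]
          exact pow_dvd_pow _ (by rw [mul_comm n p]; omega)) (u : ℤ) m
      set w : ℤ := u + p * y with hw
      have hpw : ((w : ℤ) : ZMod p) ≠ 0 := by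
        rw [Ne, ZMod.intCast_zmod_eq_zero_iff_dvd, hw]
        intro hd
        have : (p : ℤ) ∣ u := (dvd_add_left (dvd_mul_right (p : ℤ) y)).1 hd
        exact hu (by exact_mod_cast this)
      have hprz : ((r : ℕ) : ZMod p) ≠ 0 := by
        rw [Ne, ZMod.natCast_eq_zero_iff]; exact hpr
      -- solve the linear congruence `i * w * r ^ k ≡ a` modulo `p`
      obtain ⟨i, hi⟩ : ∃ i : ℕ, (p : ℤ) ∣ a - i * w * r ^ k := by
        refine ⟨((a : ZMod p) / (w * r ^ k)).val, ?_⟩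
        rw [← ZMod.intCast_zmod_eq_zero_iff_dvd]
        push_cast
        rw [ZMod.natCast_zmod_val]
        field_simp
        ring
      refine ⟨k + e * p ^ m * i, ?_⟩
      obtain ⟨z, hz⟩ := Polynomial.powAddExpansion (1 : ℤ) (p ^ (n + m) * w) i
      have hpow : ((r ^ (k + e * p ^ m * i) : ℕ) : ℤ)
          = r ^ k * (1 + p ^ (n + m) * w) ^ i := by
        have hre' : (r : ℤ) ^ e = 1 + p ^ n * u := by exact_mod_cast hre
        push_cast
        rw [pow_add, pow_mul, pow_mul, hre', hy]
        congr 3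
        ring
      rw [hpow, hz]
      obtain ⟨c, hc⟩ := hi
      obtain ⟨d, hd⟩ : (p : ℤ) ∣ p ^ (n + m) := dvd_pow_self _ (by omega)
      push_cast at ha ⊢
      refine ⟨c - r ^ k * z * d * w ^ 2, ?_⟩
      have e1 : (s : ℤ) = r ^ k + p ^ (n + m) * a := by linarith
      have e2 : a = p * c + i * w * r ^ k := by linarith
      have e3 : ((p : ℤ) ^ (n + m) * w) ^ 2 = p ^ (n + m) * (p * d) * w ^ 2 := by
        rw [← hd]; ring
      rw [e1, e2, e3, ← add_assoc]
      ring
  intro m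
  obtain ⟨k, hk⟩ := key m
  refine ⟨k, (Nat.modEq_iff_dvd.2 hk).symm.of_dvd (pow_dvd_pow p (by omega))⟩

theorem InPowClosure.modEq_one {p s r n : ℕ} (h : InPowClosure p s r) (hr : r ≡ 1 [MOD p ^ n]) :
    s ≡ 1 [MOD p ^ n] := by
  obtain ⟨k, hk⟩ := h n
  simpa using hk.trans (hr.pow k)

theorem add_two_le_mul {p a n : ℕ} (ha : a + 2 ≤ p * a) (h : a ≤ n) :
    n + 2 ≤ p * n := by
  nlinarith

theorem add_two_le_of_odd {p n : ℕ} (hp : p.Prime) (h2 : p ≠ 2) (h : 1 ≤ n) :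
    n + 2 ≤ p * n := by
  have := hp.two_le
  have : 3 ≤ p := by omega
  nlinarith

theorem not_dvd_of_modEq {p a b n : ℕ} (hn : 1 ≤ n) (h : a ≡ b [MOD p ^ n]) (hb : ¬ p ∣ b) :
    ¬ p ∣ a := by
  rwa [(h.of_dvd (dvd_pow_self p (by omega))).dvd_iff dvd_rfl]

/-- If `r - 1` has exact `p`-adic order `n`, then the closed subgroup generated by `r` contains
`1 + p ^ n ℤ_p`. -/
theorem inPowClosure_of_modEq_one {p n r s : ℕ} (hp : p.Prime) (hn : n + 2 ≤ p * n) (hr1 : 1 < r)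
    (hr : r ≡ 1 [MOD p ^ n]) (hr' : ¬ r ≡ 1 [MOD p ^ (n + 1)]) (hs : s ≡ 1 [MOD p ^ n]) :
    InPowClosure p s r := by
  obtain ⟨m, u, rfl, hu⟩ := exists_eq_one_add hp hr1
  rw [modEq_one_iff hp hu] at hr hr'
  obtain rfl : m = n := by omega
  refine inPowClosure_of_modEq (e := 1) (j := 0) hp hn (pow_one _) hu ?_ (by simpa using hs)
  refine not_dvd_of_modEq (b := 1) (n := m) ?_ ((modEq_one_iff hp hu).2 le_rfl) hp.not_dvd_one
  rcases m with _ | m <;> omega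

/-- The `p`-adic order of `r - 1` is determined step by step by the relation `InPowClosure` among
primes. -/
theorem modEq_one_succ_iff {p n r : ℕ} (hp : p.Prime) (hn : n + 2 ≤ p * n) (hr1 : 1 < r)
    (hr : r ≡ 1 [MOD p ^ n]) :
    r ≡ 1 [MOD p ^ (n + 1)] ↔
      ∃ t, t.Prime ∧ t ≠ p ∧ t ≡ 1 [MOD p ^ n] ∧ ¬ InPowClosure p t r := by
  have hn1 : 1 ≤ n := by rcases n with _ | n <;> omega
  constructor
  · intro h
    have hx : ¬ p ∣ 1 + p ^ n * 1 := by
      rw [mul_one, Nat.dvd_add_left (dvd_pow_self p (by omega))]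
      exact hp.not_dvd_one
    obtain ⟨t, ht, htp, hta⟩ := exists_prime_modEq hp hx (n + 1)
    refine ⟨t, ht, htp, ?_, fun hR => ?_⟩
    · exact (hta.of_dvd (pow_dvd_pow p (by omega))).trans
        ((modEq_one_iff hp hp.not_dvd_one).2 le_rfl)
    · have := (modEq_one_iff hp hp.not_dvd_one).1 (hta.symm.trans (hR.modEq_one h))
      omega
  · rintro ⟨t, -, -, ht, hR⟩
    by_contra h
    exact hR (inPowClosure_of_modEq_one hp hn hr1 hr h ht)

theorem one_add_pow_modEq {p n u : ℕ} (hn : 1 ≤ n) (i : ℕ) :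
    (1 + p ^ n * u) ^ i ≡ 1 + p ^ n * (i * u) [MOD p ^ (n + 1)] := by
  obtain ⟨z, hz⟩ := Polynomial.powAddExpansion (1 : ℕ) (p ^ n * u) i
  rw [hz]
  have h1 : p ^ (n + 1) ∣ z * (p ^ n * u) ^ 2 := by
    refine Dvd.dvd.mul_left ?_ z
    rw [mul_pow, ← pow_mul]
    exact Dvd.dvd.mul_right (pow_dvd_pow p (by omega)) _
  have h2 := (Nat.modEq_zero_iff_dvd.2 h1).add_left (1 ^ i + ↑i * 1 ^ (i - 1) * (p ^ n * u))
  refine h2.trans ?_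
  simp only [one_pow, mul_one, add_zero]
  rw [show i * (p ^ n * u) = p ^ n * (i * u) by ring]

theorem not_pow_pred_modEq_one {p n u : ℕ} (hp : p.Prime) (hn : 1 ≤ n) (hu : ¬ p ∣ u) :
    ¬ (1 + p ^ n * u) ^ (p - 1) ≡ 1 [MOD p ^ (n + 1)] := by
  intro h
  have h1 : ¬ p ∣ (p - 1) * u := by
    rw [hp.dvd_mul]
    rintro (h | h)
    · have := hp.two_le
      have := Nat.le_of_dvd (by omega) h
      omega
    · exact hu h
  have := (modEq_one_iff hp h1).1 ((one_add_pow_modEq hn _).symm.trans h)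
  omega

theorem pow_pred_modEq_one {p r : ℕ} (hp : p.Prime) (hr : ¬ p ∣ r) :
    r ^ (p - 1) ≡ 1 [MOD p] := by
  have := Nat.ModEq.pow_totient (hp.coprime_iff_not_dvd.2 hr).symm
  rwa [Nat.totient_prime hp] at this

theorem not_dvd_prime {p r : ℕ} (hp : p.Prime) (hr : r.Prime) (h : r ≠ p) : ¬ p ∣ r :=
  fun hd => h ((Nat.prime_dvd_prime_iff_eq hp hr).1 hd).symm

theorem exists_pow_pred_eq {p r : ℕ} (hp : p.Prime) (hr1 : 1 < r) (hr : ¬ p ∣ r) :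
    ∃ n u, 1 ≤ n ∧ r ^ (p - 1) = 1 + p ^ n * u ∧ ¬ p ∣ u := by
  have := hp.two_le
  obtain ⟨n, u, h, hu⟩ := exists_eq_one_add hp (x := r ^ (p - 1)) (one_lt_pow₀ hr1 (by omega))
  refine ⟨n, u, ?_, h, hu⟩
  have h3 := pow_pred_modEq_one hp hr
  rw [h, ← pow_one p, ← pow_mul, one_mul, modEq_one_iff hp hu] at h3
  exact h3

/-- For odd `p`, the primes `r ≡ 1` modulo `p` are those below which the preorder `InPowClosure p`
is total: otherwise the closed subgroup generated by `r` contains the incomparable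
subgroups generated by `r ^ (p - 1)` and by `r ^ p`. -/
theorem modEq_one_iff_total {p r : ℕ} (hp : p.Prime) (h2 : p ≠ 2) (hr : r.Prime) (hrp : r ≠ p) :
    r ≡ 1 [MOD p ^ 1] ↔ ∀ s t, s.Prime → t.Prime → s ≠ p → t ≠ p → InPowClosure p s r →
      InPowClosure p t r → InPowClosure p s t ∨ InPowClosure p t s := by
  constructor
  · intro h s t hs ht hsp htp hsr htr
    obtain ⟨a, u, rfl, hu⟩ := exists_eq_one_add hp hs.one_lt
    obtain ⟨b, v, rfl, hv⟩ := exists_eq_one_add hp ht.one_lt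
    have ha := (modEq_one_iff hp hu).1 (hsr.modEq_one h)
    have hb := (modEq_one_iff hp hv).1 (htr.modEq_one h)
    rcases le_total a b with hab | hab
    · right
      refine inPowClosure_of_modEq_one (n := a) hp (add_two_le_of_odd hp h2 ha) hs.one_lt ?_ ?_ ?_
      · exact (modEq_one_iff hp hu).2 le_rfl
      · rw [modEq_one_iff hp hu]; omega
      · exact (modEq_one_iff hp hv).2 hab
    · left
      refine inPowClosure_of_modEq_one (n := b) hp (add_two_le_of_odd hp h2 hb) ht.one_lt ?_ ?_ ?_
      · exact (modEq_one_iff hp hv).2 le_rfl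
      · rw [modEq_one_iff hp hv]; omega
      · exact (modEq_one_iff hp hu).2 hab
  · intro h
    by_contra hne
    have hpr := not_dvd_prime hp hr hrp
    obtain ⟨n, u, hn, hru, hu⟩ := exists_pow_pred_eq hp hr.one_lt hpr
    obtain ⟨t, ht, htp, hta⟩ := exists_prime_modEq hp
      (fun hd => hpr (hp.dvd_of_dvd_pow hd) : ¬ p ∣ r ^ (p - 1)) (n + 1)
    obtain ⟨s, hs, hsp, hsa⟩ := exists_prime_modEq hp
      (fun hd => hpr (hp.dvd_of_dvd_pow hd) : ¬ p ∣ r ^ p) (n + 1)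
    have hdvd : p ^ n ∣ p ^ (n + 1) := pow_dvd_pow p (by omega)
    have hdvd1 : p ^ 1 ∣ p ^ (n + 1) := pow_dvd_pow p (by omega)
    have hn2 := add_two_le_of_odd hp h2 hn
    have hpp : p = p - 1 + 1 := by have := hp.two_le; omega
    rcases h s t hs ht hsp htp (inPowClosure_of_modEq hp hn2 hru hu hpr (hsa.of_dvd hdvd))
      (inPowClosure_of_modEq hp hn2 hru hu hpr (hta.of_dvd hdvd)) with hR | hR
    · have ht1 : t ≡ 1 [MOD p ^ 1] := by
        refine (hta.of_dvd hdvd1).trans ?_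
        rw [pow_one]
        exact pow_pred_modEq_one hp hpr
      have hs1 := hR.modEq_one ht1
      have hs2 : s ≡ r [MOD p ^ 1] := by
        refine (hsa.of_dvd hdvd1).trans ?_
        have : r ^ p = r ^ (p - 1) * r := by rw [← pow_succ, ← hpp]
        rw [this, pow_one]
        simpa using (pow_pred_modEq_one hp hpr).mul_right r
      exact hne (hs2.symm.trans hs1)
    · obtain ⟨k, hk⟩ := hR (n + 1)
      have h3 : (r ^ (p - 1)) ^ p ≡ 1 [MOD p ^ (n + 1)] := by
        rw [hru]
        refine (one_add_pow_modEq hn p).trans ?_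
        rw [← mul_assoc, ← pow_succ]
        simp [Nat.ModEq]
      refine not_pow_pred_modEq_one hp hn hu ?_
      rw [← hru]
      have h4 : (r ^ (p - 1)) ≡ (r ^ p) ^ k [MOD p ^ (n + 1)] :=
        hta.symm.trans (hk.trans (hsa.pow k))
      refine (h4.pow (p - 1)).trans ?_
      have h5 : ((r ^ p) ^ k) ^ (p - 1) = ((r ^ (p - 1)) ^ p) ^ k := by
        simp only [← pow_mul]; congr 1; ring
      rw [h5]
      simpa using h3.pow k

/-- For odd `p` the group of `p`-adic units is procyclic, and it is generated by a prime. -/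
theorem exists_generator {p : ℕ} (hp : p.Prime) (h2 : p ≠ 2) :
    ∃ r, r.Prime ∧ r ≠ p ∧ ∀ s, s.Prime → s ≠ p → InPowClosure p s r := by
  have : Fact p.Prime := ⟨hp⟩
  have : NeZero (p ^ 2) := ⟨pow_ne_zero 2 hp.ne_zero⟩
  have hcyc := ZMod.isCyclic_units_of_prime_pow p hp h2 2
  obtain ⟨g, hg⟩ := hcyc.exists_generator
  have hgc : Nat.Coprime (g : ZMod (p ^ 2)).val (p ^ 2) := ZMod.val_coe_unit_coprime g
  have hgp : ¬ p ∣ (g : ZMod (p ^ 2)).val := by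
    intro hd
    have := Nat.dvd_gcd hd (dvd_pow_self p two_ne_zero)
    rw [hgc] at this
    exact hp.not_dvd_one this
  obtain ⟨r, hr, hrp, hra⟩ := exists_prime_modEq hp hgp 2
  have hrg : (r : ZMod (p ^ 2)) = g := by
    rw [(ZMod.natCast_eq_natCast_iff _ _ _).2 hra, ZMod.natCast_zmod_val]
  have hgen : ∀ s, ¬ p ∣ s → ∃ k, s ≡ r ^ k [MOD p ^ 2] := by
    intro s hs
    have hsc : s.Coprime (p ^ 2) := ((hp.coprime_iff_not_dvd.2 hs).symm).pow_right 2
    obtain ⟨k, hk⟩ := (mem_powers_iff_mem_zpowers (x := g)).2 (hg (ZMod.unitOfCoprime s hsc))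
    refine ⟨k, (ZMod.natCast_eq_natCast_iff _ _ _).1 ?_⟩
    have := congrArg (Units.val) hk
    simp only [Units.val_pow_eq_pow_val, ZMod.coe_unitOfCoprime] at this
    rw [← this, Nat.cast_pow, hrg]
  have hpr := not_dvd_prime hp hr hrp
  obtain ⟨n, u, hn, hru, hu⟩ := exists_pow_pred_eq hp hr.one_lt hpr
  have hn1 : n = 1 := by
    by_contra hne
    have hx : ¬ p ∣ 1 + p ^ 1 * 1 := by
      rw [mul_one, pow_one, Nat.dvd_add_left dvd_rfl]
      exact hp.not_dvd_one
    obtain ⟨k, hk⟩ := hgen _ hx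
    refine not_pow_pred_modEq_one hp le_rfl hp.not_dvd_one ((hk.pow (p - 1)).trans ?_)
    have h3 : r ^ (p - 1) ≡ 1 [MOD p ^ 2] := by
      rw [hru, modEq_one_iff hp hu]; omega
    rw [← pow_mul, mul_comm, pow_mul]
    simpa using h3.pow k
  subst hn1
  refine ⟨r, hr, hrp, fun s hs hsp => ?_⟩
  obtain ⟨k, hk⟩ := hgen s (not_dvd_prime hp hs hsp)
  exact inPowClosure_of_modEq hp (add_two_le_of_odd hp h2 le_rfl) hru hu hpr
    (hk.of_dvd (pow_dvd_pow p (by omega)))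

theorem sq_modEq_one_eight {t : ℕ} (ht : ¬ 2 ∣ t) : t ^ 2 ≡ 1 [MOD 8] := by
  have h : t % 8 = 1 ∨ t % 8 = 3 ∨ t % 8 = 5 ∨ t % 8 = 7 := by omega
  unfold Nat.ModEq
  rw [Nat.pow_mod]
  rcases h with h | h | h | h <;> rw [h]

theorem pow_modEq_eight {t k : ℕ} (ht : ¬ 2 ∣ t) :
    t ^ k ≡ 1 [MOD 8] ∧ ¬ k % 2 = 1 ∨ t ^ k ≡ t [MOD 8] ∧ k % 2 = 1 := by
  have hk := Nat.div_add_mod k 2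
  have h1 : t ^ (2 * (k / 2)) ≡ 1 [MOD 8] := by
    rw [pow_mul]; simpa using (sq_modEq_one_eight ht).pow (k / 2)
  rcases Nat.mod_two_eq_zero_or_one k with h | h
  · left
    rw [h, add_zero] at hk
    rw [hk] at h1
    exact ⟨h1, by omega⟩
  · right
    refine ⟨?_, h⟩
    rw [← hk, h, pow_succ]
    simpa using h1.mul_right t

/-- The group of `2`-adic units is not procyclic. -/
theorem not_exists_generator_two :
    ¬ ∃ r, r.Prime ∧ r ≠ 2 ∧ ∀ s, s.Prime → s ≠ 2 → InPowClosure 2 s r := by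
  rintro ⟨r, hr, hr2, h⟩
  have hodd := not_dvd_prime Nat.prime_two hr hr2
  obtain ⟨k, hk⟩ := h 3 Nat.prime_three (by norm_num) 3
  obtain ⟨l, hl⟩ := h 5 Nat.prime_five (by norm_num) 3
  norm_num at hk hl
  rcases pow_modEq_eight (k := k) hodd with ⟨a, -⟩ | ⟨a, -⟩ <;>
  rcases pow_modEq_eight (k := l) hodd with ⟨b, -⟩ | ⟨b, -⟩ <;>
  · have h1 := hk.trans a
    have h2 := hl.trans b
    unfold Nat.ModEq at h1 h2
    omega

theorem inPowClosure_two_five {r : ℕ} : InPowClosure 2 r 5 ↔ r ≡ 1 [MOD 2 ^ 2] := by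
  constructor
  · intro h
    exact h.modEq_one (by decide)
  · intro h
    exact inPowClosure_of_modEq_one Nat.prime_two (by norm_num) (by norm_num) (by decide)
      (by decide) h

/-- The numbers `r ≡ 1` modulo `8` are those lying strictly below some odd prime in the preorder
`InPowClosure 2`. -/
theorem modEq_one_eight_iff {r : ℕ} :
    r ≡ 1 [MOD 8] ↔ ∃ t, t.Prime ∧ t ≠ 2 ∧ InPowClosure 2 r t ∧ ¬ InPowClosure 2 t r := by
  constructor
  · intro h
    refine ⟨5, Nat.prime_five, by norm_num, inPowClosure_two_five.2
      (h.of_dvd (by norm_num)), fun hR => ?_⟩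
    have := hR.modEq_one (n := 3) h
    revert this
    decide
  · rintro ⟨t, ht, ht2, hR, hR'⟩
    by_contra hne
    refine hR' fun n => ?_
    have hodd := not_dvd_prime Nat.prime_two ht ht2
    obtain ⟨k, hk⟩ := hR (n + 3)
    have hk8 : r ≡ t ^ k [MOD 8] := hk.of_dvd (pow_dvd_pow 2 (by omega : 3 ≤ n + 3))
    have hkodd : k % 2 = 1 := by
      rcases pow_modEq_eight (k := k) hodd with ⟨a, -⟩ | ⟨-, a⟩
      · exact absurd (hk8.trans a) hne
      · exact a
    -- `x ↦ x ^ k` is injective on the `2`-group of units modulo `2 ^ (n + 3)`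
    obtain ⟨l, -, hl⟩ := Nat.exists_mul_mod_eq_one_of_coprime (n := k) (k := 2 ^ (n + 2))
      (Nat.Coprime.pow_right _ (Nat.odd_iff.2 hkodd).coprime_two_right)
      (Nat.one_lt_two_pow (by omega))
    refine ⟨l, ?_⟩
    have h1 : t ^ (2 ^ (n + 2)) ≡ 1 [MOD 2 ^ (n + 3)] := by
      have := Nat.ModEq.pow_totient (x := t) (n := 2 ^ (n + 3))
        (((Nat.prime_two.coprime_iff_not_dvd.2 hodd).symm).pow_right _)
      rw [Nat.totient_prime_pow_succ Nat.prime_two (n + 2)] at this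
      simpa using this
    have h2 : r ^ l ≡ t [MOD 2 ^ (n + 3)] := by
      refine (hk.pow l).trans ?_
      rw [← pow_mul, ← Nat.div_add_mod (k * l) (2 ^ (n + 2)), hl, pow_succ t, pow_mul]
      simpa using (h1.pow (k * l / 2 ^ (n + 2))).mul_right t
    exact h2.symm.of_dvd (pow_dvd_pow 2 (by omega))

/-! ### Closures of arithmetic progressions -/

theorem mem_golombBasic_iff {a b : ℕ} {x : ℕ+} :
    x ∈ golombBasic a b ↔ a ≤ x ∧ (x : ℕ) ≡ a [MOD b] := by
  constructor
  · rintro ⟨n, hn⟩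
    refine ⟨by omega, ?_⟩
    rw [hn]
    simp [Nat.ModEq]
  · rintro ⟨h, h'⟩
    obtain ⟨c, hc⟩ := (Nat.modEq_iff_dvd' h).1 h'.symm
    exact ⟨c, by omega⟩

theorem self_mem_golombBasic (x : ℕ+) (b : ℕ) : x ∈ golombBasic x b := ⟨0, by simp⟩

theorem isOpen_golombBasic {a b : ℕ} (ha : 0 < a) (hb : 0 < b) (h : a.Coprime b) :
    IsOpen (golombBasic a b) :=
  isOpen_generateFrom_of_mem ⟨a, b, ha, hb, h, rfl⟩

theorem exists_golombBasic_subset {U : Set ℕ+} (hU : IsOpen U) {x : ℕ+} (hx : x ∈ U) :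
    ∃ b : ℕ, 0 < b ∧ (x : ℕ).Coprime b ∧ golombBasic x b ⊆ U := by
  induction hU with
  | basic s hs =>
    obtain ⟨a, b, ha, hb, hab, rfl⟩ := hs
    obtain ⟨h1, h2⟩ := mem_golombBasic_iff.1 hx
    refine ⟨b, hb, ?_, fun y hy => ?_⟩
    · rw [Nat.Coprime, h2.gcd_eq]; exact hab
    · obtain ⟨h3, h4⟩ := mem_golombBasic_iff.1 hy
      exact mem_golombBasic_iff.2 ⟨h1.trans h3, h4.trans h2⟩
  | univ => exact ⟨1, one_pos, Nat.coprime_one_right _, Set.subset_univ _⟩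
  | inter s t _ _ ihs iht =>
    obtain ⟨b, hb, hxb, hbs⟩ := ihs hx.1
    obtain ⟨c, hc, hxc, hct⟩ := iht hx.2
    refine ⟨b * c, Nat.mul_pos hb hc, hxb.mul_right hxc, fun y hy => ?_⟩
    obtain ⟨h3, h4⟩ := mem_golombBasic_iff.1 hy
    exact ⟨hbs (mem_golombBasic_iff.2 ⟨h3, h4.of_dvd (dvd_mul_right _ _)⟩),
      hct (mem_golombBasic_iff.2 ⟨h3, h4.of_dvd (dvd_mul_left _ _)⟩)⟩
  | sUnion S _ ih =>
    obtain ⟨s, hs, hxs⟩ := hx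
    obtain ⟨b, hb, hxb, hbs⟩ := ih s hs hxs
    exact ⟨b, hb, hxb, hbs.trans (Set.subset_sUnion_of_mem hs)⟩

theorem modEq_of_mem_closure {a b p k : ℕ} {w : ℕ+} (hp : p.Prime) (hk : p ^ k ∣ b)
    (hw : w ∈ closure (golombBasic a b)) (hpw : ¬ p ∣ (w : ℕ)) : (w : ℕ) ≡ a [MOD p ^ k] := by
  have hc : (w : ℕ).Coprime (p ^ k) := ((hp.coprime_iff_not_dvd.2 hpw).symm).pow_right k
  obtain ⟨y, hy1, hy2⟩ := mem_closure_iff.1 hw _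
    (isOpen_golombBasic w.pos (pow_pos hp.pos k) hc) (self_mem_golombBasic w _)
  exact (mem_golombBasic_iff.1 hy1).2.symm.trans ((mem_golombBasic_iff.1 hy2).2.of_dvd hk)

/-- At each prime divisor of the modulus, a point of the closure of a progression may either be
divisible by that prime or satisfy the defining congruence. -/
theorem mem_closure_golombBasic {a b₁ b₂ : ℕ} {w : ℕ+} (hb : 0 < b₁ * b₂)
    (h₁ : ∀ p, p.Prime → p ∣ b₁ → p ∣ (w : ℕ)) (h₂ : (w : ℕ) ≡ a [MOD b₂]) :
    w ∈ closure (golombBasic a (b₁ * b₂)) := by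
  rw [mem_closure_iff]
  intro U hU hwU
  obtain ⟨c, hc, hwc, hcU⟩ := exists_golombBasic_subset hU hwU
  have hcop : c.Coprime b₁ := by
    refine Nat.coprime_of_dvd fun p hp hpc hpb => ?_
    have := Nat.dvd_gcd (h₁ p hp hpb) hpc
    rw [hwc] at this
    exact hp.not_dvd_one this
  have hgcd : (w : ℕ) ≡ a [MOD c.gcd (b₁ * b₂)] := by
    rw [hcop.symm.gcd_mul_left_cancel_right]
    exact h₂.of_dvd (Nat.gcd_dvd_right _ _)
  obtain ⟨k, hk1, hk2⟩ := Nat.chineseRemainder' hgcd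
  -- a multiple of both moduli is added to pass the initial terms of both progressions
  have hbig : (w : ℕ) + a ≤ c * (b₁ * b₂) * (w + a) :=
    Nat.le_mul_of_pos_left _ (Nat.mul_pos hc hb)
  have hpos := w.pos
  let z : ℕ+ := ⟨k + c * (b₁ * b₂) * (w + a), by omega⟩
  have hz : (z : ℕ) = k + c * (b₁ * b₂) * (w + a) := rfl
  refine ⟨z, hcU (mem_golombBasic_iff.2 ⟨by omega, ?_⟩), mem_golombBasic_iff.2 ⟨by omega, ?_⟩⟩
  · rw [hz, mul_assoc]
    exact (by simp [Nat.ModEq] : k + c * (b₁ * b₂ * (w + a)) ≡ k [MOD c]).trans hk1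
  · rw [hz, mul_comm c, mul_assoc]
    exact (by simp [Nat.ModEq] : k + b₁ * b₂ * (c * (w + a)) ≡ k [MOD b₁ * b₂]).trans hk2

/-! ### Coprimality is a topological relation -/

/-- A topological property of three points which, for distinct points, expresses that they are
pairwise coprime: the closure of every nonempty open set contains
the intersection of the closures of some neighbourhoods of the three points. -/
def ClosureTriple (x y z : ℕ+) : Prop :=
  ∀ V : Set ℕ+, IsOpen V → V.Nonempty → ∃ A B C : Set ℕ+, (IsOpen A ∧ x ∈ A) ∧
    (IsOpen B ∧ y ∈ B) ∧ (IsOpen C ∧ z ∈ C) ∧ closure A ∩ closure B ∩ closure C ⊆ closure V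

theorem ClosureTriple.map (h : ℕ+ ≃ₜ ℕ+) {x y z : ℕ+} (H : ClosureTriple x y z) :
    ClosureTriple (h x) (h y) (h z) := by
  intro V hV hne
  obtain ⟨A, B, C, ⟨hA, hxA⟩, ⟨hB, hyB⟩, ⟨hC, hzC⟩, hsub⟩ := H (h ⁻¹' V) (hV.preimage h.continuous)
    (by obtain ⟨v, hv⟩ := hne; exact ⟨h.symm v, by simpa using hv⟩)
  refine ⟨h '' A, h '' B, h '' C, ⟨h.isOpenMap _ hA, Set.mem_image_of_mem h hxA⟩,
    ⟨h.isOpenMap _ hB, Set.mem_image_of_mem h hyB⟩,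
    ⟨h.isOpenMap _ hC, Set.mem_image_of_mem h hzC⟩, ?_⟩
  rw [← h.image_closure, ← h.image_closure, ← h.image_closure, ← Set.image_inter h.injective,
    ← Set.image_inter h.injective]
  rintro _ ⟨w, hw, rfl⟩
  have := hsub hw
  rwa [← h.preimage_closure] at this

theorem exists_modulus (x b K : ℕ) : ∃ B, 0 < B ∧ x.Coprime B ∧
    ∀ p, p.Prime → p ∣ b → b ≠ 0 → ¬ p ∣ x → p ^ K ∣ B := by
  refine ⟨∏ p ∈ b.primeFactors.filter (fun p => ¬ p ∣ x), p ^ K, ?_, ?_, ?_⟩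
  · refine Finset.prod_pos fun p hp => pow_pos ?_ _
    exact (Nat.prime_of_mem_primeFactors (Finset.mem_filter.1 hp).1).pos
  · refine Nat.Coprime.prod_right fun p hp => Nat.Coprime.pow_right _ ?_
    obtain ⟨h1, h2⟩ := Finset.mem_filter.1 hp
    exact ((Nat.prime_of_mem_primeFactors h1).coprime_iff_not_dvd.2 h2).symm
  · intro p hp hpb hb hpx
    exact Finset.dvd_prod_of_mem (fun p => p ^ K)
      (Finset.mem_filter.2 ⟨Nat.mem_primeFactors.2 ⟨hp, hpb, hb⟩, hpx⟩)

theorem dvd_of_mem_closures {x y w : ℕ+} {B C p K : ℕ} (hp : p.Prime) (hxy : x ≠ y)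
    (hK : (x : ℕ) + y ≤ K) (hB : p ^ K ∣ B) (hC : p ^ K ∣ C) (hwB : w ∈ closure (golombBasic x B))
    (hwC : w ∈ closure (golombBasic y C)) : p ∣ (w : ℕ) := by
  by_contra hpw
  have h := (modEq_of_mem_closure hp hB hwB hpw).symm.trans (modEq_of_mem_closure hp hC hwC hpw)
  have hlt : K < p ^ K := Nat.lt_pow_self hp.one_lt
  have := x.pos
  have := y.pos
  exact hxy (PNat.coe_injective (h.eq_of_lt_of_lt (by omega) (by omega)))

theorem closureTriple_of_coprime {x y z : ℕ+} (hxy : x ≠ y) (hxz : x ≠ z) (hyz : y ≠ z)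
    (cxy : (x : ℕ).Coprime y) (cxz : (x : ℕ).Coprime z) (cyz : (y : ℕ).Coprime z) :
    ClosureTriple x y z := by
  rintro V hV ⟨a, ha⟩
  obtain ⟨b, hb, hab, hbV⟩ := exists_golombBasic_subset hV ha
  obtain ⟨A, hA, hxA, hA'⟩ := exists_modulus x b (x + y + z)
  obtain ⟨B, hB, hyB, hB'⟩ := exists_modulus y b (x + y + z)
  obtain ⟨C, hC, hzC, hC'⟩ := exists_modulus z b (x + y + z)
  refine ⟨golombBasic x A, golombBasic y B, golombBasic z C,
    ⟨isOpen_golombBasic x.pos hA hxA, self_mem_golombBasic _ _⟩,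
    ⟨isOpen_golombBasic y.pos hB hyB, self_mem_golombBasic _ _⟩,
    ⟨isOpen_golombBasic z.pos hC hzC, self_mem_golombBasic _ _⟩, ?_⟩
  rintro w ⟨⟨hwA, hwB⟩, hwC⟩
  refine closure_mono hbV ?_
  rw [← mul_one b]
  refine mem_closure_golombBasic (by omega) (fun p hp hpb => ?_) (Nat.modEq_one)
  have hno : ∀ {u v : ℕ}, u.Coprime v → p ∣ u → ¬ p ∣ v := fun huv hu hv => by
    have := Nat.dvd_gcd hu hv
    rw [huv] at this
    exact hp.not_dvd_one this
  -- `p` divides at most one of `x`, `y`, `z`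
  by_cases hx : p ∣ (x : ℕ)
  · exact dvd_of_mem_closures hp hyz (by omega) (hB' p hp hpb hb.ne' (hno cxy hx))
      (hC' p hp hpb hb.ne' (hno cxz hx)) hwB hwC
  · by_cases hy : p ∣ (y : ℕ)
    · exact dvd_of_mem_closures hp hxz (by omega) (hA' p hp hpb hb.ne' hx)
        (hC' p hp hpb hb.ne' (hno cyz hy)) hwA hwC
    · exact dvd_of_mem_closures hp hxy (by omega) (hA' p hp hpb hb.ne' hx)
        (hB' p hp hpb hb.ne' hy) hwA hwB

theorem not_dvd_of_coprime {p x B : ℕ} (hp : p.Prime) (h : x.Coprime B) (hx : p ∣ x) : ¬ p ∣ B := by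
  intro hB
  have := Nat.dvd_gcd hx hB
  rw [h] at this
  exact hp.not_dvd_one this

theorem exists_pnat_crt {p M c L : ℕ} (hp : p.Prime) (hM : ¬ p ∣ M) (hc : ¬ p ∣ c) (hL : 1 ≤ L) :
    ∃ w : ℕ+, (w : ℕ) ≡ c [MOD p ^ L] ∧ M ∣ w ∧ ¬ p ∣ (w : ℕ) := by
  obtain ⟨w, h1, h2⟩ := Nat.chineseRemainder
    ((hp.coprime_iff_not_dvd.2 hM).pow_left L : (p ^ L).Coprime M) c 0
  have h3 := not_dvd_of_modEq hL h1 hc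
  refine ⟨⟨w, Nat.pos_of_ne_zero ?_⟩, h1, (Nat.modEq_zero_iff_dvd.1 h2), h3⟩
  rintro rfl
  exact h3 (dvd_zero p)

theorem ClosureTriple.coprime {x y z : ℕ+} (H : ClosureTriple x y z) : (x : ℕ).Coprime y := by
  refine Nat.coprime_of_dvd fun p hp hpx hpy => ?_
  -- the `p`-component of the closures is constrained by `z` only
  obtain ⟨c, hpc, hc⟩ : ∃ c : ℕ, ¬ p ∣ c ∧ (¬ p ∣ (z : ℕ) → c = z) := by
    by_cases hz : p ∣ (z : ℕ)
    · exact ⟨1, hp.not_dvd_one, fun h => absurd hz h⟩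
    · exact ⟨z, hz, fun _ => rfl⟩
  have hpcp : ¬ p ∣ c + p := by rwa [Nat.dvd_add_left dvd_rfl]
  have hV : IsOpen (golombBasic (c + p) (p ^ 2)) := isOpen_golombBasic
    (by have := hp.pos; omega) (pow_pos hp.pos 2)
    (((hp.coprime_iff_not_dvd.2 hpcp).symm).pow_right 2)
  obtain ⟨A, B, C, ⟨hA, hxA⟩, ⟨hB, hyB⟩, ⟨hC, hzC⟩, hsub⟩ := H _ hV
    ⟨⟨c + p, by have := hp.pos; omega⟩, ⟨0, by simp⟩⟩
  obtain ⟨a, ha, hxa, haA⟩ := exists_golombBasic_subset hA hxA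
  obtain ⟨b, hb, hyb, hbB⟩ := exists_golombBasic_subset hB hyB
  obtain ⟨d, hd, hzd, hdC⟩ := exists_golombBasic_subset hC hzC
  obtain ⟨l, m, hm, rfl⟩ := Nat.exists_eq_pow_mul_and_not_dvd (n := d) hd.ne' p hp.ne_one
  have hM : ¬ p ∣ a * b * m := by
    rw [hp.dvd_mul, hp.dvd_mul]
    have := not_dvd_of_coprime hp hxa hpx
    have := not_dvd_of_coprime hp hyb hpy
    tauto
  obtain ⟨w, hwc, hwM, hpw⟩ := exists_pnat_crt hp hM hpc (by omega : 1 ≤ l + 2)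
  have hwA : w ∈ closure A := by
    refine closure_mono haA ?_
    rw [← mul_one a]
    exact mem_closure_golombBasic (by omega) (fun q _ hq =>
      (hq.trans (Dvd.intro (b * m) (by ring))).trans hwM) Nat.modEq_one
  have hwB : w ∈ closure B := by
    refine closure_mono hbB ?_
    rw [← mul_one b]
    exact mem_closure_golombBasic (by omega) (fun q _ hq =>
      (hq.trans (Dvd.intro (a * m) (by ring))).trans hwM) Nat.modEq_one
  have hwC : w ∈ closure C := by
    refine closure_mono hdC ?_
    rw [mul_comm]
    refine mem_closure_golombBasic (by rwa [mul_comm]) (fun q _ hq =>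
      (hq.trans (Dvd.intro_left (a * b) rfl)).trans hwM) ?_
    by_cases hz : p ∣ (z : ℕ)
    · have hl : l = 0 := by
        by_contra hl
        exact not_dvd_of_coprime hp hzd hz (Dvd.dvd.mul_right (dvd_pow_self p hl) _)
      rw [hl, pow_zero]
      exact Nat.modEq_one
    · rw [← hc hz]
      exact hwc.of_dvd (pow_dvd_pow p (by omega))
  have h1 := modEq_of_mem_closure hp dvd_rfl (hsub ⟨⟨hwA, hwB⟩, hwC⟩) hpw
  have h2 : c + 0 ≡ c + p [MOD p ^ 2] :=
    (hwc.of_dvd (pow_dvd_pow p (by omega))).symm.trans h1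
  have h3 : p ^ 2 ∣ p ^ 1 := by
    rw [pow_one]
    exact Nat.modEq_zero_iff_dvd.1 (Nat.ModEq.add_left_cancel' c h2).symm
  have := (Nat.pow_dvd_pow_iff_le_right hp.one_lt).1 h3
  omega

theorem coprime_map_of_ne (h : ℕ+ ≃ₜ ℕ+) {x y : ℕ+} (hne : x ≠ y) (hc : (x : ℕ).Coprime y) :
    (h x : ℕ).Coprime (h y) := by
  obtain ⟨q, hq, hqp⟩ := Nat.exists_infinite_primes ((x : ℕ) + y + 1)
  have hnd : ∀ u : ℕ+, (u : ℕ) < q → (u : ℕ).Coprime q := fun u hu =>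
    ((hqp.coprime_iff_not_dvd.2 (Nat.not_dvd_of_pos_of_lt u.pos hu)).symm)
  let z : ℕ+ := ⟨q, hqp.pos⟩
  have hz : (z : ℕ) = q := rfl
  have hne' : ∀ u : ℕ+, (u : ℕ) < q → u ≠ z := by
    rintro u hu rfl
    omega
  have h1 : (x : ℕ) < q := by omega
  have h2 : (y : ℕ) < q := by omega
  exact ((closureTriple_of_coprime hne (hne' x h1) (hne' y h2) hc (hnd x h1) (hnd y h2)).map h).coprime

theorem map_one_eq (h : ℕ+ ≃ₜ ℕ+) : h 1 = 1 := by
  by_contra hne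
  have h1 : (1 : ℕ+) ≠ h.symm (h 1 * h 1) := by
    intro he
    have h2 := congrArg h he
    rw [h.apply_symm_apply] at h2
    exact hne (mul_eq_left.1 h2.symm)
  have h3 := coprime_map_of_ne h h1 (by simp)
  rw [h.apply_symm_apply, PNat.mul_coe] at h3
  have h4 := (Nat.Coprime.coprime_mul_left_right h3)
  rw [Nat.coprime_self] at h4
  exact hne (PNat.coe_injective h4)

theorem coprime_map (h : ℕ+ ≃ₜ ℕ+) {x y : ℕ+} (hc : (x : ℕ).Coprime y) :
    (h x : ℕ).Coprime (h y) := by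
  by_cases hne : x = y
  · subst hne
    have : x = 1 := PNat.coe_injective ((Nat.coprime_self _).1 hc)
    simp [this, map_one_eq]
  · exact coprime_map_of_ne h hne hc

theorem coprime_map_iff (h : ℕ+ ≃ₜ ℕ+) {x y : ℕ+} :
    (h x : ℕ).Coprime (h y) ↔ (x : ℕ).Coprime y :=
  ⟨fun hc => by simpa using coprime_map h.symm hc, coprime_map h⟩

/-- The permutation of the primes induced by a homeomorphism. -/
def primeMap (h : ℕ+ ≃ₜ ℕ+) (p : ℕ) : ℕ := (h p.toPNat' : ℕ).minFac

theorem coe_toPNat' {n : ℕ} (hn : 0 < n) : (n.toPNat' : ℕ) = n := by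
  simp [hn.ne']

theorem prime_primeMap (h : ℕ+ ≃ₜ ℕ+) {p : ℕ} (hp : p.Prime) : (primeMap h p).Prime := by
  refine Nat.minFac_prime fun h1 => ?_
  have h2 : h p.toPNat' = h 1 := by
    rw [map_one_eq]
    exact PNat.coe_injective h1
  have h3 := congrArg PNat.val (h.injective h2)
  rw [show PNat.val p.toPNat' = p from coe_toPNat' hp.pos] at h3
  exact hp.one_lt.ne' h3

theorem dvd_iff_primeMap_dvd (h : ℕ+ ≃ₜ ℕ+) {p : ℕ} (hp : p.Prime) (x : ℕ+) :
    p ∣ (x : ℕ) ↔ primeMap h p ∣ (h x : ℕ) := by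
  have hq := prime_primeMap h hp
  have hqd : primeMap h p ∣ (h p.toPNat' : ℕ) := Nat.minFac_dvd _
  have key : ∀ u : ℕ+, p ∣ (u : ℕ) ↔ ¬ (h p.toPNat' : ℕ).Coprime (h u) := fun u => by
    rw [coprime_map_iff, coe_toPNat' hp.pos, hp.coprime_iff_not_dvd, not_not]
  constructor
  · intro hx
    have hy : h (h.symm (primeMap h p).toPNat') = (primeMap h p).toPNat' := h.apply_symm_apply _
    have hpy : p ∣ (h.symm (primeMap h p).toPNat' : ℕ) := by
      rw [key, hy, coe_toPNat' hq.pos]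
      exact Nat.not_coprime_of_dvd_of_dvd hq.one_lt hqd dvd_rfl
    have h1 : ¬ (h.symm (primeMap h p).toPNat' : ℕ).Coprime x :=
      Nat.not_coprime_of_dvd_of_dvd hp.one_lt hpy hx
    rwa [← coprime_map_iff h, hy, coe_toPNat' hq.pos, hq.coprime_iff_not_dvd, not_not] at h1
  · intro hx
    rw [key]
    exact Nat.not_coprime_of_dvd_of_dvd hq.one_lt hqd hx

/-! ### Continuity for the `p`-adic topologies -/

theorem exists_modulus_map (h : ℕ+ ≃ₜ ℕ+) {p : ℕ} (hp : p.Prime) (n : ℕ) {x : ℕ+}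
    (hx : ¬ p ∣ (x : ℕ)) : ∃ l m : ℕ, ¬ p ∣ m ∧ ∀ w : ℕ+, m ∣ w → (w : ℕ) ≡ x [MOD p ^ l] →
      ¬ p ∣ (w : ℕ) → (h w : ℕ) ≡ h x [MOD primeMap h p ^ n] := by
  have hq := prime_primeMap h hp
  rw [dvd_iff_primeMap_dvd h hp] at hx
  have hW : IsOpen (golombBasic (h x) (primeMap h p ^ n)) := isOpen_golombBasic (h x).pos
    (pow_pos hq.pos n) (((hq.coprime_iff_not_dvd.2 hx).symm).pow_right n)
  obtain ⟨b, hb, hxb, hbW⟩ := exists_golombBasic_subset (hW.preimage h.continuous)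
    (show x ∈ _ from self_mem_golombBasic (h x) _)
  obtain ⟨l, m, hm, rfl⟩ := Nat.exists_eq_pow_mul_and_not_dvd (n := b) hb.ne' p hp.ne_one
  refine ⟨l, m, hm, fun w hmw hwx hpw => ?_⟩
  have hw : w ∈ closure (golombBasic x (p ^ l * m)) := by
    rw [mul_comm]
    exact mem_closure_golombBasic (by rwa [mul_comm]) (fun r _ hr => hr.trans hmw) hwx
  have hhw : h w ∈ closure (golombBasic (h x) (primeMap h p ^ n)) :=
    map_mem_closure h.continuous hw hbW
  exact modEq_of_mem_closure hq dvd_rfl hhw (by rwa [← dvd_iff_primeMap_dvd h hp])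

/-- A homeomorphism is continuous from the `p`-adic topology on `ℕ \ pℕ` to the
`primeMap h p`-adic one. The values at `x` and at a `p`-adically close `y` are compared through a
point lying in the closures of Golomb neighbourhoods of both. -/
theorem padic_continuity (h : ℕ+ ≃ₜ ℕ+) {p : ℕ} (hp : p.Prime) (n : ℕ) {x : ℕ+}
    (hx : ¬ p ∣ (x : ℕ)) : ∃ l : ℕ, ∀ y : ℕ+, (y : ℕ) ≡ x [MOD p ^ l] →
      (h y : ℕ) ≡ h x [MOD primeMap h p ^ n] := by
  obtain ⟨l, m, hm, hl⟩ := exists_modulus_map h hp n hx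
  refine ⟨l + 1, fun y hyx => ?_⟩
  have hy := not_dvd_of_modEq (by omega) hyx hx
  obtain ⟨l', m', hm', hl'⟩ := exists_modulus_map h hp n hy
  obtain ⟨w, hw, hmw, hpw⟩ := exists_pnat_crt (M := m * m') (L := l + l' + 1) hp
    (by rw [hp.dvd_mul]; tauto) hy (by omega)
  have h1 := hl' w ((dvd_mul_left _ _).trans hmw) (hw.of_dvd (pow_dvd_pow p (by omega))) hpw
  have h2 := hl w ((dvd_mul_right _ _).trans hmw) ((hw.of_dvd (pow_dvd_pow p (by omega))).trans
    (hyx.of_dvd (pow_dvd_pow p (by omega)))) hpw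
  exact h1.symm.trans h2

/-! ### The induced permutation of the primes -/

theorem primeMap_symm (h : ℕ+ ≃ₜ ℕ+) {p : ℕ} (hp : p.Prime) :
    primeMap h.symm (primeMap h p) = p := by
  have hq := prime_primeMap h hp
  have h1 : p ∣ (p.toPNat' : ℕ) := by rw [coe_toPNat' hp.pos]
  rw [dvd_iff_primeMap_dvd h hp, dvd_iff_primeMap_dvd h.symm hq, h.symm_apply_apply,
    coe_toPNat' hp.pos] at h1
  exact (Nat.prime_dvd_prime_iff_eq (prime_primeMap h.symm hq) hp).1 h1

theorem primeMap_symm' (h : ℕ+ ≃ₜ ℕ+) {p : ℕ} (hp : p.Prime) :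
    primeMap h (primeMap h.symm p) = p :=
  primeMap_symm h.symm hp

theorem primeMap_ne (h : ℕ+ ≃ₜ ℕ+) {p q : ℕ} (hp : p.Prime) (hq : q.Prime) (hne : p ≠ q) :
    primeMap h p ≠ primeMap h q := by
  intro he
  rw [← primeMap_symm h hp, he, primeMap_symm h hq] at hne
  exact hne rfl

theorem exists_map_eq_pow (h : ℕ+ ≃ₜ ℕ+) {p k : ℕ} (hp : p.Prime) {x : ℕ+}
    (hx : (x : ℕ) = p ^ k) : ∃ l, (h x : ℕ) = primeMap h p ^ l := by
  refine ⟨_, Nat.eq_prime_pow_of_unique_prime_dvd (h x).pos.ne' fun {d} hd hdx => ?_⟩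
  rw [dvd_iff_primeMap_dvd h.symm hd, h.symm_apply_apply, hx] at hdx
  have hd' := prime_primeMap h.symm hd
  have := (Nat.prime_dvd_prime_iff_eq hd' hp).1 (hd'.dvd_of_dvd_pow hdx)
  rw [← this, primeMap_symm' h hd]

theorem InPowClosure.map (h : ℕ+ ≃ₜ ℕ+) {p s r : ℕ} (hp : p.Prime) (hs : s.Prime) (hr : r.Prime)
    (hsp : s ≠ p) (H : InPowClosure p s r) :
    InPowClosure (primeMap h p) (primeMap h s) (primeMap h r) := by
  intro n
  have hs' := prime_primeMap h hs
  set y := h.symm (primeMap h s).toPNat' with hy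
  have hhy : (h y : ℕ) = primeMap h s := by
    rw [hy, h.apply_symm_apply, coe_toPNat' hs'.pos]
  obtain ⟨j, hj⟩ := exists_map_eq_pow h.symm (k := 1) (x := (primeMap h s).toPNat') hs'
    (by rw [coe_toPNat' hs'.pos, pow_one])
  rw [← hy, primeMap_symm h hs] at hj
  have hpy : ¬ p ∣ (y : ℕ) := by
    rw [hj]
    exact fun hd => not_dvd_prime hp hs hsp (hp.dvd_of_dvd_pow hd)
  obtain ⟨l, hl⟩ := padic_continuity h hp n hpy
  obtain ⟨k, hk⟩ := H l
  have hz : ((r ^ (k * j)).toPNat' : ℕ) = r ^ (k * j) := coe_toPNat' (pow_pos hr.pos _)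
  have h1 := hl (r ^ (k * j)).toPNat' (by
    rw [hz, hj, pow_mul]
    exact (hk.pow j).symm)
  obtain ⟨i, hi⟩ := exists_map_eq_pow h hr hz
  exact ⟨i, by rw [← hi, ← hhy]; exact h1.symm⟩

theorem inPowClosure_map_iff (h : ℕ+ ≃ₜ ℕ+) {p s r : ℕ} (hp : p.Prime) (hs : s.Prime)
    (hr : r.Prime) (hsp : s ≠ p) :
    InPowClosure p s r ↔ InPowClosure (primeMap h p) (primeMap h s) (primeMap h r) := by
  refine ⟨InPowClosure.map h hp hs hr hsp, fun H => ?_⟩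
  have := H.map h.symm (prime_primeMap h hp) (prime_primeMap h hs) (prime_primeMap h hr)
    (primeMap_ne h hs hp hsp)
  rwa [primeMap_symm h hp, primeMap_symm h hs, primeMap_symm h hr] at this

/-- Statements about all primes different from `primeMap h p` may be checked on the values of
`primeMap h`. -/
theorem exists_primeMap_eq (h : ℕ+ ≃ₜ ℕ+) {p s : ℕ} (hp : p.Prime) (hs : s.Prime)
    (hne : s ≠ primeMap h p) : ∃ t, t.Prime ∧ t ≠ p ∧ primeMap h t = s := by
  refine ⟨primeMap h.symm s, prime_primeMap h.symm hs, ?_, primeMap_symm' h hs⟩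
  rintro rfl
  exact hne (primeMap_symm' h hs).symm

theorem primeMap_ne_two (h : ℕ+ ≃ₜ ℕ+) {p : ℕ} (hp : p.Prime) (h2 : p ≠ 2) :
    primeMap h p ≠ 2 := by
  intro he
  obtain ⟨r, hr, hrp, H⟩ := exists_generator hp h2
  refine not_exists_generator_two ⟨primeMap h r, prime_primeMap h hr, ?_, fun s hs hs2 => ?_⟩
  · rw [← he]
    exact primeMap_ne h hr hp hrp
  · rw [← he] at hs2 ⊢
    obtain ⟨t, ht, htp, rfl⟩ := exists_primeMap_eq h hp hs hs2
    exact (H t ht htp).map h hp ht hr htp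

theorem primeMap_two (h : ℕ+ ≃ₜ ℕ+) : primeMap h 2 = 2 := by
  by_contra hne
  exact primeMap_ne_two h.symm (prime_primeMap h Nat.prime_two) hne (primeMap_symm h Nat.prime_two)

/-! ### Preservation of the order of `x - 1` at each prime -/

/-- `primeMap h` preserves the congruence to `1` modulo the `n`-th power of `p`. -/
def PreservesOne (h : ℕ+ ≃ₜ ℕ+) (p n : ℕ) : Prop :=
  ∀ r, r.Prime → r ≠ p → (r ≡ 1 [MOD p ^ n] ↔ primeMap h r ≡ 1 [MOD primeMap h p ^ n])

theorem PreservesOne.symm {h : ℕ+ ≃ₜ ℕ+} {p n : ℕ} (hp : p.Prime) (H : PreservesOne h p n) :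
    PreservesOne h.symm (primeMap h p) n := by
  intro s hs hsp
  obtain ⟨t, ht, htp, rfl⟩ := exists_primeMap_eq h hp hs hsp
  rw [primeMap_symm h ht, primeMap_symm h hp]
  exact (H t ht htp).symm

theorem PreservesOne.succ {h : ℕ+ ≃ₜ ℕ+} {p n : ℕ} (hp : p.Prime) (hn : n + 2 ≤ p * n)
    (hn' : n + 2 ≤ primeMap h p * n) (H : PreservesOne h p n) : PreservesOne h p (n + 1) := by
  intro r hr hrp
  have hq := prime_primeMap h hp
  have hdvd : ∀ q : ℕ, q ^ n ∣ q ^ (n + 1) := fun q => pow_dvd_pow q (by omega)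
  by_cases h1 : r ≡ 1 [MOD p ^ n]
  · rw [modEq_one_succ_iff hp hn hr.one_lt h1,
      modEq_one_succ_iff hq hn' (prime_primeMap h hr).one_lt ((H r hr hrp).1 h1)]
    constructor
    · rintro ⟨t, ht, htp, ht1, hR⟩
      exact ⟨primeMap h t, prime_primeMap h ht, primeMap_ne h ht hp htp, (H t ht htp).1 ht1,
        by rwa [← inPowClosure_map_iff h hp ht hr htp]⟩
    · rintro ⟨s, hs, hsp, hs1, hR⟩
      obtain ⟨t, ht, htp, rfl⟩ := exists_primeMap_eq h hp hs hsp
      exact ⟨t, ht, htp, (H t ht htp).2 hs1, by rwa [inPowClosure_map_iff h hp ht hr htp]⟩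
  · constructor
    · exact fun h2 => absurd (h2.of_dvd (hdvd p)) h1
    · exact fun h2 => absurd ((H r hr hrp).2 (h2.of_dvd (hdvd _))) h1

theorem PreservesOne.of_le {h : ℕ+ ≃ₜ ℕ+} {p a n : ℕ} (hp : p.Prime) (ha : a + 2 ≤ p * a)
    (ha' : a + 2 ≤ primeMap h p * a) (han : a ≤ n) (H : PreservesOne h p a) :
    PreservesOne h p n := by
  induction n, han using Nat.le_induction with
  | base => exact H
  | succ n hn ih => exact ih.succ hp (add_two_le_mul ha hn) (add_two_le_mul ha' hn)

theorem preservesOne_of_odd (h : ℕ+ ≃ₜ ℕ+) {p n : ℕ} (hp : p.Prime) (h2 : p ≠ 2) (hn : 1 ≤ n) :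
    PreservesOne h p n := by
  have hq := prime_primeMap h hp
  have hq2 := primeMap_ne_two h hp h2
  refine PreservesOne.of_le hp (add_two_le_of_odd hp h2 le_rfl)
    (add_two_le_of_odd hq hq2 le_rfl) hn fun r hr hrp => ?_
  rw [modEq_one_iff_total hp h2 hr hrp,
    modEq_one_iff_total hq hq2 (prime_primeMap h hr) (primeMap_ne h hr hp hrp)]
  constructor
  · intro H s' t' hs' ht' hsp' htp' hsr htr
    obtain ⟨s, hs, hsp, rfl⟩ := exists_primeMap_eq h hp hs' hsp'
    obtain ⟨t, ht, htp, rfl⟩ := exists_primeMap_eq h hp ht' htp'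
    rw [← inPowClosure_map_iff h hp hs hr hsp] at hsr
    rw [← inPowClosure_map_iff h hp ht hr htp] at htr
    rw [← inPowClosure_map_iff h hp hs ht hsp, ← inPowClosure_map_iff h hp ht hs htp]
    exact H s t hs ht hsp htp hsr htr
  · intro H s t hs ht hsp htp hsr htr
    rw [inPowClosure_map_iff h hp hs ht hsp, inPowClosure_map_iff h hp ht hs htp]
    exact H _ _ (prime_primeMap h hs) (prime_primeMap h ht) (primeMap_ne h hs hp hsp)
      (primeMap_ne h ht hp htp) (hsr.map h hp hs hr hsp) (htr.map h hp ht hr htp)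

theorem preservesOne_two_three (h : ℕ+ ≃ₜ ℕ+) : PreservesOne h 2 3 := by
  intro r hr hr2
  rw [primeMap_two, show 2 ^ 3 = 8 by norm_num, modEq_one_eight_iff, modEq_one_eight_iff]
  have key : ∀ s t, s.Prime → t.Prime → s ≠ 2 → (InPowClosure 2 s t ↔
      InPowClosure 2 (primeMap h s) (primeMap h t)) := fun s t hs ht hs2 => by
    have := inPowClosure_map_iff h Nat.prime_two hs ht hs2
    rwa [primeMap_two] at this
  constructor
  · rintro ⟨t, ht, ht2, h1, h3⟩
    exact ⟨primeMap h t, prime_primeMap h ht, primeMap_ne_two h ht ht2, (key r t hr ht hr2).1 h1,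
      by rwa [← key t r ht hr ht2]⟩
  · rintro ⟨s, hs, hs2, h1, h3⟩
    obtain ⟨t, ht, ht2, rfl⟩ := exists_primeMap_eq h Nat.prime_two hs (by rwa [primeMap_two])
    exact ⟨t, ht, ht2, (key r t hr ht hr2).2 h1, by rwa [key t r ht hr ht2]⟩

/-- The passage from primes to all numbers, by `p`-adic continuity and density of the primes. -/
theorem PreservesOne.map_modEq {h : ℕ+ ≃ₜ ℕ+} {p n : ℕ} (hp : p.Prime) (hn : 1 ≤ n)
    (H : PreservesOne h p n) {x : ℕ+} (hx : (x : ℕ) ≡ 1 [MOD p ^ n]) :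
    (h x : ℕ) ≡ 1 [MOD primeMap h p ^ n] := by
  have hpx := not_dvd_of_modEq hn hx hp.not_dvd_one
  obtain ⟨l, hl⟩ := padic_continuity h hp n hpx
  obtain ⟨r, hr, hrp, hrx⟩ := exists_prime_modEq hp hpx (l + n)
  have hr1 := (H r hr hrp).1 ((hrx.of_dvd (pow_dvd_pow p (by omega))).trans hx)
  have hrc : (r.toPNat' : ℕ) = r := coe_toPNat' hr.pos
  obtain ⟨k, hk⟩ := exists_map_eq_pow h hr (k := 1) (x := r.toPNat') (by rw [hrc, pow_one])
  have h1 := hl r.toPNat' (by rw [hrc]; exact hrx.of_dvd (pow_dvd_pow p (by omega)))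
  rw [hk] at h1
  simpa using h1.symm.trans (hr1.pow k)

theorem PreservesOne.modEq_iff {h : ℕ+ ≃ₜ ℕ+} {p n : ℕ} (hp : p.Prime) (hn : 1 ≤ n)
    (H : PreservesOne h p n) (x : ℕ+) :
    (x : ℕ) ≡ 1 [MOD p ^ n] ↔ (h x : ℕ) ≡ 1 [MOD primeMap h p ^ n] := by
  refine ⟨H.map_modEq hp hn, fun hx => ?_⟩
  have := (H.symm hp).map_modEq (prime_primeMap h hp) hn hx
  rwa [h.symm_apply_apply, primeMap_symm h hp] at this

theorem modEq_one_iff_dvd (x : ℕ+) (m : ℕ) : (x : ℕ) ≡ 1 [MOD m] ↔ m ∣ (x : ℕ) - 1 :=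
  ⟨fun h => (Nat.modEq_iff_dvd' x.pos).1 h.symm, fun h => ((Nat.modEq_iff_dvd' x.pos).2 h).symm⟩

/-- An odd prime dividing `h x - 1` corresponds to an odd prime dividing `x - 1`. -/
theorem dvd_sub_one_of_odd (h : ℕ+ ≃ₜ ℕ+) {x : ℕ+} {q : ℕ} (hq : q.Prime) (hq2 : q ≠ 2)
    (hd : q ∣ (h x : ℕ) - 1) :
    ∃ p, p.Prime ∧ p ≠ 2 ∧ primeMap h p = q ∧ p ∣ (x : ℕ) - 1 := by
  obtain ⟨p, hp, hp2, rfl⟩ := exists_primeMap_eq h Nat.prime_two hq (by rwa [primeMap_two])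
  refine ⟨p, hp, hp2, rfl, ?_⟩
  have := (preservesOne_of_odd h hp hp2 le_rfl).modEq_iff hp le_rfl x
  rw [pow_one, pow_one, modEq_one_iff_dvd, modEq_one_iff_dvd] at this
  exact this.2 hd

theorem map_sub_one_ne_zero (h : ℕ+ ≃ₜ ℕ+) {x : ℕ+} (hx : x ≠ 1) : (h x : ℕ) - 1 ≠ 0 := by
  intro h0
  have := (h x).pos
  have h1 : h x = h 1 := by
    rw [map_one_eq]
    exact PNat.coe_injective (by rw [PNat.one_coe]; omega)
  exact hx (h.injective h1)

theorem map_three_or_five (h : ℕ+ ≃ₜ ℕ+) {x : ℕ+} (hx : (x : ℕ) = 3 ∨ (x : ℕ) = 5) :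
    (h x : ℕ) = 3 ∨ (h x : ℕ) = 5 := by
  have hx1 : x ≠ 1 := by rintro rfl; simp at hx
  have hpow := Nat.eq_prime_pow_of_unique_prime_dvd (p := 2) (map_sub_one_ne_zero h hx1)
    fun {d} hd hdx => by
      by_contra hd2
      obtain ⟨p, hp, hp2, -, hpx⟩ := dvd_sub_one_of_odd h hd hd2 hdx
      have h4 : p ∣ 2 ^ 2 := by
        rcases hx with hx | hx <;> rw [hx] at hpx <;> exact hpx.trans (by norm_num)
      exact hp2 ((Nat.prime_dvd_prime_iff_eq hp Nat.prime_two).1 (hp.dvd_of_dvd_pow h4))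
  have h8 := (preservesOne_two_three h).modEq_iff Nat.prime_two (by norm_num) x
  rw [primeMap_two, modEq_one_iff_dvd, modEq_one_iff_dvd] at h8
  have hodd := dvd_iff_primeMap_dvd h Nat.prime_two x
  rw [primeMap_two] at hodd
  have hpos := (h x).pos
  set a := ((h x : ℕ) - 1).primeFactorsList.length
  have ha : a < 3 := by
    by_contra ha
    have : 2 ^ 3 ∣ (x : ℕ) - 1 := h8.2 (by rw [hpow]; exact pow_dvd_pow 2 (by omega))
    rcases hx with hx | hx <;> rw [hx] at this <;> omega
  interval_cases a <;> omega

theorem primeMap_eq_of_map_eq (h : ℕ+ ≃ₜ ℕ+) {p q : ℕ} (hp : p.Prime) (hq : q.Prime) {x : ℕ+}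
    (hx : (x : ℕ) = p) (hhx : (h x : ℕ) = q) : primeMap h p = q := by
  have := (dvd_iff_primeMap_dvd h hp x).1 (by rw [hx])
  rw [hhx] at this
  exact (Nat.prime_dvd_prime_iff_eq (prime_primeMap h hp) hq).1 this

/-- The numbers `3` and `5` are not interchanged: otherwise `h 4 - 1` would be `5`, whereas
`h 4` is a power of `2`. -/
theorem map_three (h : ℕ+ ≃ₜ ℕ+) : (h 3 : ℕ) = 3 := by
  rcases map_three_or_five h (x := 3) (Or.inl rfl) with h3 | h3
  · exact h3
  exfalso
  have hσ := primeMap_eq_of_map_eq h Nat.prime_three Nat.prime_five (x := 3) rfl h3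
  have H : ∀ n, 1 ≤ n → (3 ^ n ∣ 3 ↔ 5 ^ n ∣ (h 4 : ℕ) - 1) := fun n hn => by
    have := (preservesOne_of_odd h Nat.prime_three (by norm_num) hn).modEq_iff
      Nat.prime_three hn 4
    rwa [hσ, modEq_one_iff_dvd, modEq_one_iff_dvd] at this
  have h4 := dvd_iff_primeMap_dvd h Nat.prime_two 4
  rw [primeMap_two] at h4
  have heven : 2 ∣ (h 4 : ℕ) := h4.1 (by decide)
  have hpos := (h 4).pos
  have hpow := Nat.eq_prime_pow_of_unique_prime_dvd (p := 5)
    (map_sub_one_ne_zero h (x := 4) (by decide)) fun {d} hd hdx => by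
      obtain ⟨p, hp, -, rfl, hpx⟩ := dvd_sub_one_of_odd h hd (by rintro rfl; omega) hdx
      rw [(Nat.prime_dvd_prime_iff_eq hp Nat.prime_three).1 hpx, hσ]
  have h5 := H 1 le_rfl
  have h25 := H 2 (by norm_num)
  set a := ((h 4 : ℕ) - 1).primeFactorsList.length
  have ha : a < 2 := by
    by_contra ha
    have : 3 ^ 2 ∣ 3 := h25.2 (by rw [hpow]; exact pow_dvd_pow 5 (by omega))
    omega
  have h6 : (h 4 : ℕ) = 6 := by interval_cases a <;> omega
  obtain ⟨l, hl⟩ := exists_map_eq_pow h Nat.prime_two (k := 2) (x := 4) rfl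
  rw [primeMap_two, h6] at hl
  have : 3 ∣ 2 ^ l := by rw [← hl]; norm_num
  have := Nat.prime_three.dvd_of_dvd_pow this
  omega

theorem map_five (h : ℕ+ ≃ₜ ℕ+) : (h 5 : ℕ) = 5 := by
  rcases map_three_or_five h (x := 5) (Or.inr rfl) with h5 | h5
  · have : h 5 = h 3 := PNat.coe_injective (h5.trans (map_three h).symm)
    exact absurd (h.injective this) (by decide)
  · exact h5

theorem preservesOne_two (h : ℕ+ ≃ₜ ℕ+) {n : ℕ} (hn : 2 ≤ n) : PreservesOne h 2 n := by
  refine PreservesOne.of_le (a := 2) Nat.prime_two (by norm_num)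
    (by rw [primeMap_two]) hn fun r hr hr2 => ?_
  have hσ := primeMap_eq_of_map_eq h Nat.prime_five Nat.prime_five (x := 5) rfl (map_five h)
  have := inPowClosure_map_iff h Nat.prime_two hr Nat.prime_five hr2
  rw [hσ, primeMap_two, inPowClosure_two_five, inPowClosure_two_five] at this
  rw [primeMap_two]
  exact this

theorem pow_dvd_sub_one_iff (h : ℕ+ ≃ₜ ℕ+) {p n : ℕ} (hp : p.Prime) (x : ℕ+) :
    p ^ n ∣ (x : ℕ) - 1 ↔ primeMap h p ^ n ∣ (h x : ℕ) - 1 := by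
  rcases Nat.eq_zero_or_pos n with rfl | hn
  · simp
  by_cases h2 : p = 2
  · subst h2
    by_cases hn1 : n = 1
    · subst hn1
      have hodd := dvd_iff_primeMap_dvd h Nat.prime_two x
      rw [primeMap_two] at hodd ⊢
      have := x.pos
      have := (h x).pos
      omega
    · have := (preservesOne_two h (n := n) (by omega)).modEq_iff hp hn x
      rwa [modEq_one_iff_dvd, modEq_one_iff_dvd] at this
  · have := (preservesOne_of_odd h hp h2 hn).modEq_iff hp hn x
    rwa [modEq_one_iff_dvd, modEq_one_iff_dvd] at this

end GolombRigid

open GolombRigid in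
/-- The Golomb space is topologically rigid: every self-homeomorphism is the identity. -/
theorem golomb_rigid (h : ℕ+ ≃ₜ ℕ+) : ∀ x : ℕ+, h x = x := by
  intro x
  induction x using PNat.strongInductionOn with
  | _ x ih =>
    by_cases hx1 : x = 1
    · rw [hx1, map_one_eq]
    have hx0 : (x : ℕ) - 1 ≠ 0 := by
      intro h0
      have := x.pos
      exact hx1 (PNat.coe_injective (by rw [PNat.one_coe]; omega))
    -- the primes dividing `x - 1` are fixed by the inductive hypothesis
    have hfix : ∀ p, p.Prime → p ∣ (x : ℕ) - 1 → primeMap h p = p := by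
      intro p hp hpx
      have hle := Nat.le_of_dvd (Nat.pos_of_ne_zero hx0) hpx
      have hc : (p.toPNat' : ℕ) = p := coe_toPNat' hp.pos
      have hlt : p.toPNat' < x := by
        rw [← PNat.coe_lt_coe, hc]
        omega
      exact primeMap_eq_of_map_eq h hp hp hc (by rw [ih _ hlt, hc])
    have hdvd : (x : ℕ) - 1 ∣ (h x : ℕ) - 1 := by
      rw [Nat.dvd_iff_prime_pow_dvd_dvd]
      intro p k hp hpk
      rcases Nat.eq_zero_or_pos k with rfl | hk
      · simp
      have := (pow_dvd_sub_one_iff h hp x).1 hpk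
      rwa [hfix p hp ((dvd_pow_self p (by omega)).trans hpk)] at this
    have hdvd' : (h x : ℕ) - 1 ∣ (x : ℕ) - 1 := by
      rw [Nat.dvd_iff_prime_pow_dvd_dvd]
      intro q k hq hqk
      rcases Nat.eq_zero_or_pos k with rfl | hk
      · simp
      have hp := prime_primeMap h.symm hq
      rw [← primeMap_symm' h hq] at hqk
      have h1 := (pow_dvd_sub_one_iff h hp x).2 hqk
      have h2 := hfix _ hp ((dvd_pow_self _ (by omega)).trans h1)
      rw [primeMap_symm' h hq] at h2
      rwa [← h2] at h1
    have heq := Nat.dvd_antisymm hdvd hdvd'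
    have := x.pos
    have := (h x).pos
    exact PNat.coe_injective (by omega)
end

section
/- For any a,b ∈ ℕ, the closure of the arithmetic progression a+bℕ₀ in the Golomb space ℕ_τ equals ℕ ∩ ⋂_{p ∈ Π_b} ( pℕ ∪ (a + p^{l_p(b)}ℤ) ), where the intersection is over all prime divisors p of b. -/
/-!
The progressions `x + cℕ₀` with `c` coprime to `x` form a neighbourhood base at `x`
(`golomb_exists_basic_subset`), so `x` lies in the closure of `a + bℕ₀` iff every such progression
meets `a + bℕ₀`. By the Chinese remainder theorem, this happens as soon as `x ≡ a` modulo
`gcd(c, b)` (`golombBasic_inter_nonempty`). Taking `c = p ^ l_p(b)` for a prime `p ∣ b` with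
`p ∤ x` shows that the local conditions are necessary. Conversely, a prime dividing `gcd(c, b)`
does not divide `x`, so the local conditions give `x ≡ a` modulo every prime power dividing
`gcd(c, b)`, hence modulo `gcd(c, b)` itself.
-/

open TopologicalSpace

lemma golombBasic_isOpen {x c : ℕ} (hx : 0 < x) (hc : 0 < c) (h : Nat.Coprime x c) :
    IsOpen (golombBasic x c) :=
  isOpen_generateFrom_of_mem ⟨x, c, hx, hc, h, rfl⟩

/-- Together with `golombBasic_isOpen`: the progressions `x + cℕ₀` with `c` coprime to `x` form a
neighbourhood base at `x`. -/
lemma golomb_exists_basic_subset {U : Set ℕ+} (hU : IsOpen U) (x : ℕ+) (hx : x ∈ U) :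
    ∃ c : ℕ, 0 < c ∧ Nat.Coprime x c ∧ golombBasic x c ⊆ U := by
  change GenerateOpen _ U at hU
  induction hU with
  | basic s hs =>
    obtain ⟨a, b, -, hb, hab, rfl⟩ := hs
    obtain ⟨n, hn⟩ := hx
    refine ⟨b, hb, by simpa [hn] using hab, ?_⟩
    rintro y ⟨m, hm⟩
    exact ⟨n + m, by rw [hm, hn]; ring⟩
  | univ => exact ⟨1, one_pos, Nat.coprime_one_right _, Set.subset_univ _⟩
  | inter s t _ _ ihs iht =>
    obtain ⟨c, hc, hxc, hcs⟩ := ihs hx.1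
    obtain ⟨d, hd, hxd, hdt⟩ := iht hx.2
    refine ⟨c * d, Nat.mul_pos hc hd, hxc.mul_right hxd, ?_⟩
    rintro y ⟨m, hm⟩
    exact ⟨hcs ⟨d * m, by rw [hm]; ring⟩, hdt ⟨c * m, by rw [hm]; ring⟩⟩
  | sUnion S _ ih =>
    obtain ⟨s, hs, hxs⟩ := hx
    obtain ⟨c, hc, hxc, hcs⟩ := ih s hs hxs
    exact ⟨c, hc, hxc, hcs.trans (Set.subset_sUnion_of_mem hs)⟩

lemma modEq_of_mem_golombBasic {a b : ℕ} {y : ℕ+} (h : y ∈ golombBasic a b) :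
    (y : ℕ) ≡ a [MOD b] := by
  obtain ⟨n, hn⟩ := h
  simp [hn, Nat.ModEq]

lemma mem_golombBasic_of_modEq {a b : ℕ} {y : ℕ+} (h : (y : ℕ) ≡ a [MOD b]) (hay : a ≤ y) :
    y ∈ golombBasic a b := by
  obtain ⟨n, hn⟩ := (Nat.modEq_iff_dvd' hay).1 h.symm
  exact ⟨n, by omega⟩

lemma golombBasic_inter_nonempty {x c a b : ℕ} (hx : 0 < x) (hc : 0 < c) (hb : 0 < b)
    (h : x ≡ a [MOD Nat.gcd c b]) : (golombBasic x c ∩ golombBasic a b).Nonempty := by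
  obtain ⟨k, hkx, hka⟩ := Nat.chineseRemainder' h
  -- Adding a multiple of `c * b` keeps both congruences and makes the solution at least `x + a`.
  have hle : x + a ≤ c * b * (x + a) := Nat.le_mul_of_pos_left _ (Nat.mul_pos hc hb)
  refine ⟨⟨k + c * b * (x + a), by omega⟩, mem_golombBasic_of_modEq ?_ ?_,
    mem_golombBasic_of_modEq ?_ ?_⟩
  · simpa [Nat.ModEq, mul_assoc] using hkx
  · simp only [PNat.mk_coe]; omega
  · simpa [Nat.ModEq, mul_assoc, mul_left_comm c b] using hka
  · simp only [PNat.mk_coe]; omega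

/-- The closure of the arithmetic progression `a + bℕ₀` in the Golomb space equals
`ℕ ∩ ⋂_{p ∈ Π_b} (pℕ ∪ (a + p^{l_p(b)}ℤ))`. -/
theorem golomb_closure_progression (a b : ℕ) (ha : 0 < a) (hb : 0 < b) :
    closure (golombBasic a b) =
      {x : ℕ+ | ∀ p : ℕ, p.Prime → p ∣ b →
        p ∣ (x : ℕ) ∨ (x : ℕ) ≡ a [MOD p ^ (b.factorization p)]} := by
  ext x
  rw [mem_closure_iff, Set.mem_ofPred_eq]
  constructor
  · intro h p hp _
    refine or_iff_not_imp_left.2 fun hpx => ?_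
    have hcop : Nat.Coprime x (p ^ b.factorization p) :=
      (((Nat.Prime.coprime_iff_not_dvd hp).2 hpx).symm).pow_right _
    obtain ⟨y, hyx, hya⟩ := h _ (golombBasic_isOpen x.pos (pow_pos hp.pos _) hcop) ⟨0, by simp⟩
    exact (modEq_of_mem_golombBasic hyx).symm.trans
      ((modEq_of_mem_golombBasic hya).of_dvd (Nat.ordProj_dvd b p))
  · intro h U hU hxU
    obtain ⟨c, hc, hxc, hcU⟩ := golomb_exists_basic_subset hU x hxU
    refine (golombBasic_inter_nonempty x.pos hc hb ?_).mono (Set.inter_subset_inter_left _ hcU)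
    rw [Nat.modEq_iff_dvd, Int.natCast_dvd, Nat.dvd_iff_prime_pow_dvd_dvd]
    intro p k hp hk
    rcases Nat.eq_zero_or_pos k with rfl | hk0
    · simp
    have hpk : p ∣ p ^ k := dvd_pow_self p hk0.ne'
    have hkb : p ^ k ∣ b := hk.trans (Nat.gcd_dvd_right _ _)
    have hpc : p ∣ c := hpk.trans (hk.trans (Nat.gcd_dvd_left _ _))
    rcases h p hp (hpk.trans hkb) with hpx | hmod
    · exact absurd (Nat.dvd_gcd hpx hpc) (by rw [hxc]; exact hp.one_lt.ne' ∘ Nat.dvd_one.1)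
    · have hle := (hp.pow_dvd_iff_le_factorization hb.ne').1 hkb
      exact Int.natCast_dvd.1 (Nat.modEq_iff_dvd.1 (hmod.of_dvd (pow_dvd_pow p hle)))
end

section
/- Every homeomorphism h : ℕ_τ → ℕ_τ of the Golomb space satisfies: (1) h(1)=1; (2) h(Π)=Π, where Π is the set of prime numbers; (3) Π_{h(x)} = h(Π_x) for every x ∈ ℕ; (4) h(x^ℕ) = h(x)^ℕ for every x ∈ ℕ. -/
/-!
In fact every self-homeomorphism `h` of the Golomb space is the identity (`homeo_apply`), and all four
claims follow at once.

*Coprimality is topological.* Distinct points `x, y, z` are pairwise coprime exactly when they have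
neighbourhoods whose closures meet inside the closure of any given nonempty open set (`Tri`). Hence
`h` preserves coprimality and fixes `1`, and there is a permutation of the primes `p ↦ p'` such that `p`
divides `z` if and only if `p'` divides `h z` (`Pair`). In particular `h` maps the powers of a prime `q`
to powers of `q'`, say `h (q ^ n) = q' ^ e n` with `e 0 = 0`.

*The `p`-adic topologies are topological.* A relatively clopen subset of `ℕ \ pℕ` is open in the `p`-adic
topology, so `h` is a homeomorphism from `ℕ \ pℕ` with the `p`-adic topology to `ℕ \ p'ℕ` with the
`p'`-adic one (`Pair.padic_continuous`).

*Exponents.* Let `p₁ ≠ p₂` be primes other than `q`. There are powers of `q` simultaneously close to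
`q ^ a` in the `p₁`-adic sense and to `q ^ b` in the `p₂`-adic sense if and only if `a ≡ b` modulo `G`, the
stable value of the gcd of the orders of `q` modulo `p₁ ^ k` and `p₂ ^ k`. Thus `e` transports congruence
modulo `G` to congruence modulo the analogous number `G'` for `q', p₁', p₂'`, and counting classes gives
`G = G'`. Every prime power except possibly `2` occurs as such a `G` (`exists_gcd_eq_prime_pow`), which
forces `e = id` (`eq_id_of_modEq_iff`).

*Rigidity.* Since `e = id`, the orders of `q'` modulo powers of `p'` divide orders of `q` modulo powers of
`p`, which is possible only for `p' = p`. So `h` fixes every prime, and the primes are dense by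
Dirichlet's theorem.
-/

open TopologicalSpace

/-! ### Neighbourhoods and closures in the Golomb topology -/

/-- Every Golomb neighbourhood of `x` contains a progression `x + bℕ₀` based at `x` itself. -/
lemma exists_progression_subset {U : Set ℕ+} (hU : IsOpen U) {x : ℕ+} (hx : x ∈ U) :
    ∃ b : ℕ, 0 < b ∧ Nat.Coprime x b ∧ ∀ (y : ℕ+) (n : ℕ), (y : ℕ) = x + b * n → y ∈ U := by
  induction hU with
  | basic S hS =>
    obtain ⟨a, b, -, hb, hab, rfl⟩ := hS
    obtain ⟨n, hn⟩ := hx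
    refine ⟨b, hb, ?_, ?_⟩
    · rw [hn]; simpa using hab
    · rintro y m hy
      exact ⟨n + m, by rw [hy, hn]; ring⟩
  | univ => exact ⟨1, one_pos, by simp, fun _ _ _ => trivial⟩
  | inter S T _ _ ihS ihT =>
    obtain ⟨b, hb, hxb, h1⟩ := ihS hx.1
    obtain ⟨c, hc, hxc, h2⟩ := ihT hx.2
    refine ⟨b * c, Nat.mul_pos hb hc, Nat.Coprime.mul_right hxb hxc, fun y n hy => ⟨?_, ?_⟩⟩
    · exact h1 y (c * n) (by rw [hy]; ring)
    · exact h2 y (b * n) (by rw [hy]; ring)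
  | sUnion 𝒮 _ ih =>
    obtain ⟨S, hS, hxS⟩ := hx
    obtain ⟨b, hb, hxb, h1⟩ := ih S hS hxS
    exact ⟨b, hb, hxb, fun y n hy => ⟨S, hS, h1 y n hy⟩⟩

lemma isOpen_residue_class {c b : ℕ} (hb : 0 < b) (hcb : Nat.Coprime c b) :
    IsOpen {z : ℕ+ | (z : ℕ) ≡ c [MOD b]} := by
  rw [isOpen_iff_forall_mem_open]
  intro z hz
  refine ⟨golombBasic z b, ?_, ?_, ⟨0, by simp⟩⟩
  · rintro y ⟨n, hn⟩
    have : (y : ℕ) ≡ z [MOD b] := by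
      rw [hn]; exact Nat.add_mul_mod_self_left _ _ _
    exact this.trans hz
  · refine isOpen_generateFrom_of_mem ⟨z, b, z.pos, hb, ?_, rfl⟩
    have : Nat.gcd (z : ℕ) b = Nat.gcd c b := Nat.ModEq.gcd_eq hz
    rw [Nat.Coprime, this]; exact hcb

/-- Two progressions meet as soon as their bases agree modulo the gcd of their steps. -/
lemma exists_common_term {x w b c : ℕ} (hb : 0 < b) (hc : 0 < c) (h : x ≡ w [MOD Nat.gcd b c]) :
    ∃ m n, x + b * m = w + c * n := by
  obtain ⟨k, hk1, hk2⟩ := Nat.chineseRemainder' h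
  have hbc : 0 < b * c := Nat.mul_pos hb hc
  set K := k + b * c * (x + w) with hK
  have hxK : x ≤ K := by nlinarith
  have hwK : w ≤ K := by nlinarith
  have h1 : x ≡ K [MOD b] := by
    refine hk1.symm.trans ?_
    rw [hK, mul_assoc]
    exact (Nat.add_mul_mod_self_left _ _ _).symm
  have h2 : w ≡ K [MOD c] := by
    refine hk2.symm.trans ?_
    rw [hK, mul_comm b c, mul_assoc]
    exact (Nat.add_mul_mod_self_left _ _ _).symm
  obtain ⟨m, hm⟩ := (Nat.modEq_iff_dvd' hxK).1 h1
  obtain ⟨n, hn⟩ := (Nat.modEq_iff_dvd' hwK).1 h2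
  exact ⟨m, n, by omega⟩

/-- A lower bound for the closure of an open set: a point `w` whose residue agrees with `x` modulo
every divisor of `b` coprime to `w` cannot be separated from `x + bℕ₀`. -/
lemma exists_mem_closure {U : Set ℕ+} (hU : IsOpen U) {x : ℕ+} (hx : x ∈ U) :
    ∃ b : ℕ, 0 < b ∧ Nat.Coprime x b ∧
      ∀ w : ℕ+, (∀ d, d ∣ b → Nat.Coprime w d → (w : ℕ) ≡ x [MOD d]) → w ∈ closure U := by
  obtain ⟨b, hb, hxb, hsub⟩ := exists_progression_subset hU hx
  refine ⟨b, hb, hxb, fun w hw => ?_⟩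
  rw [mem_closure_iff]
  intro V hV hwV
  obtain ⟨c, hc, hwc, hsub'⟩ := exists_progression_subset hV hwV
  have hmod := hw (Nat.gcd b c) (Nat.gcd_dvd_left _ _) (hwc.coprime_dvd_right (Nat.gcd_dvd_right _ _))
  obtain ⟨m, n, hmn⟩ := exists_common_term hb hc hmod.symm
  refine ⟨⟨x + b * m, Nat.add_pos_left x.pos _⟩, hsub' _ n ?_, hsub _ m rfl⟩
  exact hmn

lemma modEq_of_mem_closure {U : Set ℕ+} {w : ℕ+} (hw : w ∈ closure U) {c b : ℕ} (hb : 0 < b)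
    (hU : ∀ u ∈ U, (u : ℕ) ≡ c [MOD b]) (hwb : Nat.Coprime w b) : (w : ℕ) ≡ c [MOD b] := by
  obtain ⟨u, hu1, hu2⟩ := mem_closure_iff.1 hw _ (isOpen_residue_class hb hwb) (by exact Nat.ModEq.refl _)
  exact Nat.ModEq.trans (Nat.ModEq.symm hu1) (hU u hu2)

/-! ### Coprimality and the induced permutation of the primes -/

/-- Points `x, y, z` have neighbourhoods whose closures meet inside the closure of any
prescribed nonempty open set. This is a topological property of the triple, and for distinct points
it says that they are pairwise coprime. -/
def Tri (x y z : ℕ+) : Prop :=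
  ∀ V : Set ℕ+, IsOpen V → V.Nonempty → ∃ A B C : Set ℕ+,
    (IsOpen A ∧ x ∈ A) ∧ (IsOpen B ∧ y ∈ B) ∧ (IsOpen C ∧ z ∈ C) ∧
      closure A ∩ closure B ∩ closure C ⊆ closure V

lemma Tri.map (h : ℕ+ ≃ₜ ℕ+) {x y z : ℕ+} (H : Tri x y z) : Tri (h x) (h y) (h z) := by
  intro V hV hne
  obtain ⟨A, B, C, ⟨hA, hxA⟩, ⟨hB, hyB⟩, ⟨hC, hzC⟩, hsub⟩ :=
    H (h ⁻¹' V) (hV.preimage h.continuous) (hne.preimage h.surjective)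
  refine ⟨h '' A, h '' B, h '' C, ⟨h.isOpenMap _ hA, ⟨x, hxA, rfl⟩⟩,
    ⟨h.isOpenMap _ hB, ⟨y, hyB, rfl⟩⟩, ⟨h.isOpenMap _ hC, ⟨z, hzC, rfl⟩⟩, ?_⟩
  rw [← h.image_closure, ← h.image_closure, ← h.image_closure, ← Set.image_inter h.injective,
    ← Set.image_inter h.injective]
  rintro _ ⟨w, hw, rfl⟩
  have := hsub hw
  rw [← h.preimage_closure] at this
  exact this

lemma Tri.coprime {x y z : ℕ+} (H : Tri x y z) : Nat.Coprime x y := by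
  by_contra hxy
  obtain ⟨p, hp, hpx, hpy⟩ := Nat.Prime.not_coprime_iff_dvd.1 hxy
  -- `t` is a unit residue that `C` cannot exclude, and the closure of `t + p + p²ℤ` misses `t + p²ℤ`
  obtain ⟨t, ht, htz⟩ : ∃ t : ℕ, ¬ p ∣ t ∧ (¬ p ∣ (z : ℕ) → t = z) := by
    by_cases hz : p ∣ (z : ℕ)
    · exact ⟨1, hp.one_lt.ne' ∘ Nat.dvd_one.1, fun h => absurd hz h⟩
    · exact ⟨z, hz, fun _ => rfl⟩
  have hp2 : 0 < p ^ 2 := pow_pos hp.pos 2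
  have hcop : Nat.Coprime (t + p) (p ^ 2) := by
    refine Nat.Coprime.pow_right 2 ?_
    rw [Nat.coprime_comm, hp.coprime_iff_not_dvd]
    simpa using ht
  obtain ⟨A, B, C, ⟨hA, hxA⟩, ⟨hB, hyB⟩, ⟨hC, hzC⟩, hsub⟩ :=
    H _ (isOpen_residue_class hp2 hcop) ⟨⟨t + p, by have := hp.pos; omega⟩, Nat.ModEq.refl _⟩
  obtain ⟨a, ha, hxa, hwa⟩ := exists_mem_closure hA hxA
  obtain ⟨b, hb, hyb, hwb⟩ := exists_mem_closure hB hyB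
  obtain ⟨c, hc, hzc, hwc⟩ := exists_mem_closure hC hzC
  obtain ⟨i, c', hc', rfl⟩ := Nat.exists_eq_pow_mul_and_not_dvd hc.ne' p hp.ne_one
  have hpa : Nat.Coprime p a := hxa.coprime_dvd_left hpx
  have hpb : Nat.Coprime p b := hyb.coprime_dvd_left hpy
  have hpc : Nat.Coprime p c' := hp.coprime_iff_not_dvd.2 hc'
  have hco : Nat.Coprime (a * b * c') (p ^ (i + 2)) :=
    (((hpa.mul_right hpb).mul_right hpc).pow_left _).symm
  obtain ⟨w, hw0, hwt⟩ := Nat.chineseRemainder hco 0 t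
  have hwt2 : w ≡ t [MOD p ^ 2] := hwt.of_dvd (pow_dvd_pow _ (by omega))
  have hpw : ¬ p ∣ w := fun h => ht (((hwt2.of_dvd (dvd_pow_self p two_ne_zero)).dvd_iff dvd_rfl).1 h)
  have hwpos : 0 < w := Nat.pos_of_ne_zero fun h => hpw (h ▸ dvd_zero p)
  have hdw : a * b * c' ∣ w := (Nat.modEq_zero_iff_dvd).1 hw0
  have triv : ∀ d, d ∣ a * b * c' → Nat.Coprime w d → d = 1 := fun d hd hc =>
    Nat.eq_one_of_dvd_coprimes hc (hd.trans hdw) dvd_rfl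
  let W : ℕ+ := ⟨w, hwpos⟩
  have hmem : W ∈ closure A ∩ closure B ∩ closure C := by
    refine ⟨⟨hwa W fun d hd hc => ?_, hwb W fun d hd hc => ?_⟩, hwc W fun d hd hc => ?_⟩
    · rw [triv d (hd.trans ⟨b * c', by ring⟩) hc]; exact Nat.modEq_one
    · rw [triv d (hd.trans ⟨a * c', by ring⟩) hc]; exact Nat.modEq_one
    · have hdc : Nat.Coprime d c' :=
        (Nat.Coprime.coprime_dvd_left ((dvd_mul_left c' (a * b)).trans hdw) hc).symm
      have hdp : d ∣ p ^ i := hdc.dvd_of_dvd_mul_right hd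
      by_cases hz : p ∣ (z : ℕ)
      · have hi : i = 0 := by
          by_contra hi
          have : Nat.Coprime p (p ^ i) := (hzc.coprime_dvd_left hz).coprime_dvd_right ⟨c', rfl⟩
          exact hp.one_lt.ne' (Nat.eq_one_of_dvd_coprimes this dvd_rfl (dvd_pow_self p hi))
        subst hi
        have : d = 1 := by simpa using hdp
        rw [this]; exact Nat.modEq_one
      · have := htz hz
        rw [← this]
        exact hwt.of_dvd (hdp.trans (pow_dvd_pow _ (by omega)))
  have h1 : w ≡ t + p [MOD p ^ 2] := modEq_of_mem_closure (hsub hmem) hp2 (fun u hu => hu)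
    (Nat.Coprime.pow_right 2 ((hp.coprime_iff_not_dvd.2 hpw).symm))
  have h2 : t ≡ t + p [MOD p ^ 2] := hwt2.symm.trans h1
  have h3 : p ^ 2 ∣ p := by
    have := (Nat.modEq_iff_dvd' (by omega)).1 h2
    simpa using this
  have := Nat.le_of_dvd hp.pos h3
  nlinarith [hp.two_le]

lemma tri_of_coprime {x y z : ℕ+} (hxy : x ≠ y) (hxz : x ≠ z) (hyz : y ≠ z)
    (cxy : Nat.Coprime x y) (cxz : Nat.Coprime x z) (cyz : Nat.Coprime y z) : Tri x y z := by
  rintro V hV ⟨a, ha⟩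
  obtain ⟨b, hb, hab, hcl⟩ := exists_mem_closure hV ha
  set N : ℕ := x + y + z with hN
  let U : ℕ+ → Set ℕ+ := fun x => ⋂ p ∈ b.primeFactors.filter (fun p => ¬ p ∣ (x : ℕ)),
    {v : ℕ+ | (v : ℕ) ≡ x [MOD p ^ N]}
  have hU : ∀ x, IsOpen (U x) ∧ x ∈ U x := by
    intro x
    constructor
    · refine isOpen_biInter_finset fun p hp => ?_
      rw [Finset.mem_filter, Nat.mem_primeFactors] at hp
      exact isOpen_residue_class (pow_pos hp.1.1.pos _)
        (((hp.1.1.coprime_iff_not_dvd.2 hp.2).pow_left N).symm)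
    · simp only [U, Set.mem_iInter]
      exact fun p hp => Nat.ModEq.refl _
  have key : ∀ (w x : ℕ+) (p : ℕ), w ∈ closure (U x) → p.Prime → p ∣ b → ¬ p ∣ (w : ℕ) →
      ¬ p ∣ (x : ℕ) → (w : ℕ) ≡ x [MOD p ^ N] := by
    intro w x p hw hp hpb hpw hpx
    refine modEq_of_mem_closure hw (pow_pos hp.pos _) (fun u hu => ?_)
      (((hp.coprime_iff_not_dvd.2 hpw).pow_left N).symm)
    simp only [U, Set.mem_iInter] at hu
    exact hu p (by simp [hp, hpb, hpx, hb.ne'])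
  have sep : ∀ (w x y : ℕ+) (p : ℕ), w ∈ closure (U x) → w ∈ closure (U y) → p.Prime → p ∣ b →
      ¬ p ∣ (w : ℕ) → ¬ p ∣ (x : ℕ) → ¬ p ∣ (y : ℕ) → (x : ℕ) ≤ N → (y : ℕ) ≤ N → x = y := by
    intro w x y p hx hy hp hpb hpw hpx hpy hxN hyN
    have h := (key w x p hx hp hpb hpw hpx).symm.trans (key w y p hy hp hpb hpw hpy)
    have hlt : N < p ^ N := Nat.lt_pow_self hp.one_lt
    exact PNat.coe_injective (Nat.ModEq.eq_of_lt_of_lt h (by omega) (by omega))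
  refine ⟨U x, U y, U z, hU x, hU y, hU z, ?_⟩
  rintro w ⟨⟨hwx, hwy⟩, hwz⟩
  have hdiv : ∀ p, p.Prime → p ∣ b → p ∣ (w : ℕ) := by
    intro p hp hpb
    by_contra hpw
    have no : ∀ u v : ℕ+, Nat.Coprime u v → p ∣ (u : ℕ) → ¬ p ∣ (v : ℕ) := fun u v huv hu hv =>
      hp.one_lt.ne' (Nat.eq_one_of_dvd_coprimes huv hu hv)
    by_cases hpx : p ∣ (x : ℕ)
    · exact hyz (sep w y z p hwy hwz hp hpb hpw (no _ _ cxy hpx) (no _ _ cxz hpx) (by omega) (by omega))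
    · by_cases hpy : p ∣ (y : ℕ)
      · exact hxz (sep w x z p hwx hwz hp hpb hpw hpx (no _ _ cyz hpy) (by omega) (by omega))
      · exact hxy (sep w x y p hwx hwy hp hpb hpw hpx hpy (by omega) (by omega))
  refine hcl w fun d hd hc => ?_
  have : d = 1 := by
    by_contra h1
    obtain ⟨p, hp, hpd⟩ := Nat.exists_prime_and_dvd h1
    exact hp.one_lt.ne' (Nat.eq_one_of_dvd_coprimes hc (hdiv p hp (hpd.trans hd)) hpd)
  rw [this]; exact Nat.modEq_one

lemma exists_tri {x y : ℕ+} (hxy : x ≠ y) (c : Nat.Coprime x y) : ∃ z, Tri x y z := by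
  obtain ⟨p, hle, hp⟩ := Nat.exists_infinite_primes ((x : ℕ) + y + 1)
  have cop : ∀ u : ℕ+, (u : ℕ) < p → Nat.Coprime u p := fun u hu =>
    (Nat.coprime_of_lt_prime u.pos.ne' hu hp).symm
  have ne : ∀ u : ℕ+, (u : ℕ) < p → u ≠ ⟨p, hp.pos⟩ := fun u hu h => by
    rw [h] at hu; exact lt_irrefl _ hu
  exact ⟨⟨p, hp.pos⟩, tri_of_coprime hxy (ne x (by omega)) (ne y (by omega)) c
    (cop x (by omega)) (cop y (by omega))⟩

lemma coprime_map_of_ne (h : ℕ+ ≃ₜ ℕ+) {x y : ℕ+} (hxy : x ≠ y) (c : Nat.Coprime x y) :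
    Nat.Coprime (h x) (h y) := by
  obtain ⟨z, hz⟩ := exists_tri hxy c
  exact (hz.map h).coprime

/-- `1` is the only point coprime to every other point. -/
lemma map_one_eq (h : ℕ+ ≃ₜ ℕ+) : h 1 = 1 := by
  by_contra hne
  have h2 : h 1 ≠ h 1 ^ 2 := by
    intro he
    rw [sq] at he
    exact hne (mul_eq_left.1 he.symm)
  obtain ⟨y, hy⟩ := h.surjective (h 1 ^ 2)
  have hy1 : (1 : ℕ+) ≠ y := by rintro rfl; exact h2 hy
  have := coprime_map_of_ne h hy1 (by simp)
  rw [hy] at this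
  apply hne
  have h3 := Nat.eq_one_of_dvd_coprimes this dvd_rfl (by rw [PNat.pow_coe]; exact dvd_pow_self _ two_ne_zero)
  exact PNat.coe_eq_one_iff.1 h3

lemma coprime_map (h : ℕ+ ≃ₜ ℕ+) {x y : ℕ+} (c : Nat.Coprime x y) : Nat.Coprime (h x) (h y) := by
  by_cases hxy : x = y
  · subst hxy
    have : x = 1 := PNat.coe_eq_one_iff.1 ((Nat.coprime_self _).1 c)
    rw [this, map_one_eq]; simp
  · exact coprime_map_of_ne h hxy c

lemma coprime_map_iff (h : ℕ+ ≃ₜ ℕ+) {x y : ℕ+} :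
    Nat.Coprime (h x) (h y) ↔ Nat.Coprime x y :=
  ⟨fun c => by simpa using coprime_map h.symm c, coprime_map h⟩

/-- The homeomorphism `h` carries the multiples of the prime `p` onto the multiples of the
prime `q`. -/
structure Pair (h : ℕ+ ≃ₜ ℕ+) (p q : ℕ) : Prop where
  left : p.Prime
  right : q.Prime
  iff : ∀ z : ℕ+, p ∣ (z : ℕ) ↔ q ∣ (h z : ℕ)

lemma Pair.symm {h : ℕ+ ≃ₜ ℕ+} {p q : ℕ} (H : Pair h p q) : Pair h.symm q p :=
  ⟨H.right, H.left, fun z => by rw [H.iff]; simp⟩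

lemma exists_pair (h : ℕ+ ≃ₜ ℕ+) {p : ℕ} (hp : p.Prime) : ∃ q, Pair h p q := by
  let P : ℕ+ := ⟨p, hp.pos⟩
  have hP1 : (h P : ℕ) ≠ 1 := by
    intro h1
    have : h P = h 1 := by rw [map_one_eq]; exact PNat.coe_eq_one_iff.1 h1
    have := congrArg PNat.val (h.injective this)
    exact hp.ne_one this
  obtain ⟨q, hq, hqP⟩ := Nat.exists_prime_and_dvd hP1
  let Q : ℕ+ := ⟨q, hq.pos⟩
  have hpQ : p ∣ (h.symm Q : ℕ) := by
    by_contra hno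
    have h1 : Nat.Coprime P (h.symm Q) := hp.coprime_iff_not_dvd.2 hno
    have h2 := coprime_map h h1
    rw [h.apply_symm_apply] at h2
    exact hq.one_lt.ne' (Nat.eq_one_of_dvd_coprimes h2 hqP dvd_rfl)
  refine ⟨q, hp, hq, fun z => ⟨fun hz => ?_, fun hz => ?_⟩⟩
  · by_contra hno
    have h1 : Nat.Coprime Q (h z) := hq.coprime_iff_not_dvd.2 hno
    have h2 := coprime_map h.symm h1
    rw [h.symm_apply_apply] at h2
    exact hp.one_lt.ne' (Nat.eq_one_of_dvd_coprimes h2 hpQ hz)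
  · by_contra hno
    have h1 : Nat.Coprime P z := hp.coprime_iff_not_dvd.2 hno
    exact hq.one_lt.ne' (Nat.eq_one_of_dvd_coprimes (coprime_map h h1) hqP hz)

lemma Pair.right_unique {h : ℕ+ ≃ₜ ℕ+} {p q q' : ℕ} (H : Pair h p q) (H' : Pair h p q') :
    q = q' := by
  let Q : ℕ+ := ⟨q', H'.right.pos⟩
  have h1 := (H.iff (h.symm Q)).1 ((H'.iff _).2 (by rw [h.apply_symm_apply]; exact dvd_rfl))
  rw [h.apply_symm_apply] at h1
  exact (Nat.prime_dvd_prime_iff_eq H.right H'.right).1 h1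

lemma Pair.left_unique {h : ℕ+ ≃ₜ ℕ+} {p p' q : ℕ} (H : Pair h p q) (H' : Pair h p' q) :
    p = p' :=
  (H'.symm.right_unique H.symm).symm

/-! ### Continuity for the `p`-adic topologies -/

/-- The relatively clopen subsets of `ℕ \ pℕ` are open in the `p`-adic topology. -/
lemma exists_padic_nhd {p : ℕ} (hp : p.Prime) {C D : Set ℕ+} (hC : IsOpen C) (hD : IsOpen D)
    (hCD : Disjoint C D) (hcov : ∀ z : ℕ+, ¬ p ∣ (z : ℕ) → z ∈ C ∨ z ∈ D) {x : ℕ+} (hx : x ∈ C)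
    (hpx : ¬ p ∣ (x : ℕ)) : ∃ m, ∀ z : ℕ+, (z : ℕ) ≡ x [MOD p ^ m] → z ∈ C := by
  obtain ⟨b, hb, hxb, hcl⟩ := exists_mem_closure hC hx
  obtain ⟨i, b', hb', rfl⟩ := Nat.exists_eq_pow_mul_and_not_dvd hb.ne' p hp.ne_one
  refine ⟨i + 1, fun w hw => ?_⟩
  have hpw : ¬ p ∣ (w : ℕ) := fun h =>
    hpx (((hw.of_dvd (dvd_pow_self p (by omega))).dvd_iff dvd_rfl).1 h)
  refine (hcov w hpw).resolve_right fun hwD => ?_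
  obtain ⟨c, hc, hwc, hcl'⟩ := exists_mem_closure hD hwD
  obtain ⟨j, c', hc', rfl⟩ := Nat.exists_eq_pow_mul_and_not_dvd hc.ne' p hp.ne_one
  -- `u` lies in both closures: it is `p`-adically close to `w` and divisible by all other primes
  have hco : Nat.Coprime (b' * c') (p ^ (i + j + 1)) :=
    (((hp.coprime_iff_not_dvd.2 hb').mul_right (hp.coprime_iff_not_dvd.2 hc')).pow_left _).symm
  obtain ⟨u, hu0, huw⟩ := Nat.chineseRemainder hco 0 (w : ℕ)
  have hpu : ¬ p ∣ u := fun h =>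
    hpw (((huw.of_dvd (dvd_pow_self p (by omega))).dvd_iff dvd_rfl).1 h)
  have hupos : 0 < u := Nat.pos_of_ne_zero fun h => hpu (h ▸ dvd_zero p)
  have hdu : b' * c' ∣ u := (Nat.modEq_zero_iff_dvd).1 hu0
  let W : ℕ+ := ⟨u, hupos⟩
  have red : ∀ {d k e : ℕ}, d ∣ p ^ k * e → e ∣ b' * c' → Nat.Coprime u d → d ∣ p ^ k :=
    fun hd he hc => (hc.coprime_dvd_left (he.trans hdu)).symm.dvd_of_dvd_mul_right hd
  have hWC : W ∈ closure C := hcl W fun d hd hc => by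
    have hdp := red hd (dvd_mul_right _ _) hc
    exact (huw.of_dvd (hdp.trans (pow_dvd_pow _ (by omega)))).trans
      (hw.of_dvd (hdp.trans (pow_dvd_pow _ (by omega))))
  have hWD : W ∈ closure D := hcl' W fun d hd hc => by
    have hdp := red hd (dvd_mul_left _ _) hc
    exact huw.of_dvd (hdp.trans (pow_dvd_pow _ (by omega)))
  rcases hcov W hpu with h | h
  · obtain ⟨v, hv⟩ := mem_closure_iff.1 hWD C hC h
    exact Set.disjoint_left.1 hCD hv.1 hv.2
  · obtain ⟨v, hv⟩ := mem_closure_iff.1 hWC D hD h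
    exact Set.disjoint_left.1 hCD hv.2 hv.1

/-- `h` is continuous from the `p`-adic topology on `ℕ \ pℕ` to the `q`-adic one on `ℕ \ qℕ`. -/
lemma Pair.padic_continuous {h : ℕ+ ≃ₜ ℕ+} {p q : ℕ} (H : Pair h p q) {x : ℕ+}
    (hx : ¬ p ∣ (x : ℕ)) (k : ℕ) :
    ∃ m, ∀ z : ℕ+, (z : ℕ) ≡ x [MOD p ^ m] → (h z : ℕ) ≡ h x [MOD q ^ k] := by
  have hqk : 0 < q ^ k := pow_pos H.right.pos k
  have cop : ∀ z : ℕ+, ¬ q ∣ (z : ℕ) → Nat.Coprime z (q ^ k) := fun z hz =>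
    ((H.right.coprime_iff_not_dvd.2 hz).pow_left k).symm
  have hx' : ¬ q ∣ (h x : ℕ) := fun h' => hx ((H.iff x).2 h')
  let C' : Set ℕ+ := {z : ℕ+ | (z : ℕ) ≡ h x [MOD q ^ k]}
  let D' : Set ℕ+ := ⋃ y ∈ {y : ℕ+ | ¬ q ∣ (y : ℕ) ∧ ¬ (y : ℕ) ≡ h x [MOD q ^ k]},
    {z : ℕ+ | (z : ℕ) ≡ y [MOD q ^ k]}
  have hC' : IsOpen C' := isOpen_residue_class hqk (cop _ hx')
  have hD' : IsOpen D' := isOpen_biUnion fun y hy => isOpen_residue_class hqk (cop _ hy.1)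
  have hdis : Disjoint C' D' := by
    rw [Set.disjoint_left]
    intro z hz hz'
    simp only [D', Set.mem_iUnion] at hz'
    obtain ⟨y, hy, hzy⟩ := hz'
    exact hy.2 ((Nat.ModEq.symm hzy).trans hz)
  refine exists_padic_nhd H.left (hC'.preimage h.continuous) (hD'.preimage h.continuous)
    (hdis.preimage h) (fun z hz => ?_) (show x ∈ h ⁻¹' C' from Nat.ModEq.refl _) hx
  have hz' : ¬ q ∣ (h z : ℕ) := fun h' => hz ((H.iff z).2 h')
  by_cases hm : (h z : ℕ) ≡ h x [MOD q ^ k]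
  · exact Or.inl hm
  · refine Or.inr ?_
    simp only [D', Set.mem_preimage, Set.mem_iUnion]
    exact ⟨h z, ⟨hz', hm⟩, Nat.ModEq.refl _⟩

/-! ### Multiplicative orders modulo prime powers -/

/-- The multiplicative order of `q` modulo `p ^ k`. -/
noncomputable def ord (q p k : ℕ) : ℕ := orderOf (q : ZMod (p ^ k))

lemma ord_dvd_iff {q p k n : ℕ} : ord q p k ∣ n ↔ q ^ n ≡ 1 [MOD p ^ k] := by
  rw [ord, orderOf_dvd_iff_pow_eq_one, ← ZMod.natCast_eq_natCast_iff]
  push_cast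
  rfl

lemma pow_modEq_pow_iff {q p k : ℕ} (hq : Nat.Coprime q p) (a b : ℕ) :
    q ^ a ≡ q ^ b [MOD p ^ k] ↔ a ≡ b [MOD ord q p k] := by
  have hq' : Nat.Coprime q (p ^ k) := hq.pow_right k
  have h1 : ((ZMod.unitOfCoprime q hq' : (ZMod (p ^ k))ˣ) : ZMod (p ^ k)) = q :=
    ZMod.coe_unitOfCoprime q hq'
  rw [ord, ← h1, orderOf_units, ← pow_eq_pow_iff_modEq, ← ZMod.natCast_eq_natCast_iff, Units.ext_iff]
  push_cast
  rw [h1]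

lemma ord_dvd_mul_pow {q p d : ℕ} (k : ℕ) (h : q ^ d ≡ 1 [MOD p]) : ord q p k ∣ d * p ^ k := by
  rw [ord_dvd_iff, ← Int.natCast_modEq_iff, Int.modEq_comm, Int.modEq_iff_dvd]
  have h1 : (p : ℤ) ∣ (q : ℤ) ^ d - 1 := by
    have := (Int.modEq_iff_dvd.1 ((Int.natCast_modEq_iff.2 h).symm))
    simpa using this
  have h2 := dvd_sub_pow_of_dvd_sub h1 k
  rw [one_pow, ← pow_mul] at h2
  push_cast
  exact (pow_dvd_pow _ (Nat.le_succ k)).trans h2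

lemma ord_dvd_pred_mul {q p : ℕ} (hp : p.Prime) (hq : Nat.Coprime q p) (k : ℕ) :
    ord q p k ∣ (p - 1) * p ^ k :=
  ord_dvd_mul_pow k (by rw [← Nat.totient_prime hp]; exact Nat.ModEq.pow_totient hq)

lemma ord_pos {q p : ℕ} (hp : p.Prime) (hq : Nat.Coprime q p) (k : ℕ) : 0 < ord q p k :=
  Nat.pos_of_dvd_of_pos (ord_dvd_pred_mul hp hq k)
    (Nat.mul_pos (Nat.sub_pos_of_lt hp.one_lt) (pow_pos hp.pos k))

lemma ord_dvd_ord {q p k l : ℕ} (hkl : k ≤ l) : ord q p k ∣ ord q p l :=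
  ord_dvd_iff.2 ((ord_dvd_iff.1 dvd_rfl).of_dvd (pow_dvd_pow p hkl))

/-- The gcd of the orders of `q` modulo `p₁ ^ k` and `p₂ ^ k` stabilizes as `k` grows, because
these orders divide `(p₁ - 1) * p₁ ^ k` and `(p₂ - 1) * p₂ ^ k`. -/
lemma exists_stable_gcd {q p₁ p₂ : ℕ} (hp₁ : p₁.Prime) (hp₂ : p₂.Prime) (hne : p₁ ≠ p₂)
    (h₁ : Nat.Coprime q p₁) (h₂ : Nat.Coprime q p₂) :
    ∃ G, 0 < G ∧ (∀ k, Nat.gcd (ord q p₁ k) (ord q p₂ k) ∣ G) ∧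
      ∃ k, Nat.gcd (ord q p₁ k) (ord q p₂ k) = G := by
  set f : ℕ → ℕ := fun k => Nat.gcd (ord q p₁ k) (ord q p₂ k) with hf
  have hmono : ∀ {k l}, k ≤ l → f k ∣ f l := fun hkl =>
    Nat.gcd_dvd_gcd_of_dvd_left _ (ord_dvd_ord hkl) |>.trans
      (Nat.gcd_dvd_gcd_of_dvd_right _ (ord_dvd_ord hkl))
  have hpos : ∀ k, 0 < f k := fun k => Nat.gcd_pos_of_pos_left _ (ord_pos hp₁ h₁ k)
  have hbound : ∀ k, f k ≤ (p₁ - 1) * (p₂ - 1) := by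
    intro k
    have hA : 0 < p₁ - 1 := Nat.sub_pos_of_lt hp₁.one_lt
    have hC : 0 < p₂ - 1 := Nat.sub_pos_of_lt hp₂.one_lt
    have hcop : Nat.Coprime (p₁ ^ k) (p₂ ^ k) :=
      Nat.Coprime.pow k k ((Nat.coprime_primes hp₁ hp₂).2 hne)
    have d1 : f k ∣ (p₁ - 1) * (p₂ - 1) * p₁ ^ k :=
      ((Nat.gcd_dvd_left _ _).trans (ord_dvd_pred_mul hp₁ h₁ k)).trans ⟨p₂ - 1, by ring⟩
    have d2 : f k ∣ (p₁ - 1) * (p₂ - 1) * p₂ ^ k :=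
      ((Nat.gcd_dvd_right _ _).trans (ord_dvd_pred_mul hp₂ h₂ k)).trans ⟨p₁ - 1, by ring⟩
    have d3 := Nat.dvd_gcd d1 d2
    rw [Nat.gcd_mul_left, hcop.gcd_eq_one, mul_one] at d3
    exact Nat.le_of_dvd (Nat.mul_pos hA hC) d3
  have hfin : (Set.range f).Finite := (Set.finite_Iic ((p₁ - 1) * (p₂ - 1))).subset (by
    rintro _ ⟨k, rfl⟩; exact hbound k)
  obtain ⟨_, ⟨K, rfl⟩, hmax⟩ := hfin.exists_maximal (Set.range_nonempty f)
  refine ⟨f K, hpos K, fun k => ?_, K, rfl⟩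
  have hle : f K ≤ f (max k K) := Nat.le_of_dvd (hpos _) (hmono (le_max_right k K))
  have heq : f (max k K) = f K := le_antisymm (hmax ⟨_, rfl⟩ hle) hle
  exact heq ▸ hmono (le_max_left k K)

/-- A weak form of Zsigmondy's theorem: some prime `p ≠ l` has `q` of order exactly `l ^ (i + 1)`
modulo `p`. The excluded case `l = 2`, `i = 0` fails for instance for `q = 3`. -/
lemma exists_prime_order {q l i : ℕ} (hq : 2 ≤ q) (hl : l.Prime) (hi : l = 2 → i ≠ 0) :
    ∃ p, p.Prime ∧ p ≠ l ∧ Nat.Coprime q p ∧ ∀ n, q ^ n ≡ 1 [MOD p] ↔ l ^ (i + 1) ∣ n := by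
  have : Fact l.Prime := ⟨hl⟩
  set Q := q ^ l ^ i with hQ
  have hQ2 : 2 ≤ Q := hq.trans (Nat.le_self_pow (pow_pos hl.pos i).ne' q)
  set S := ∑ t ∈ Finset.range l, Q ^ t with hS
  have hSQ : S * (Q - 1) = Q ^ l - 1 := by
    have := Nat.geomSum_eq hQ2 l
    rw [hS, this]
    exact Nat.div_mul_cancel (by simpa using Nat.sub_dvd_pow_sub_pow Q 1 l)
  have hlS : l < S := by
    calc l = ∑ t ∈ Finset.range l, 1 := by simp
      _ < S := Finset.sum_lt_sum (fun t _ => Nat.one_le_pow _ _ (by omega))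
          ⟨1, Finset.mem_range.2 hl.one_lt, by rw [pow_one]; exact hQ2⟩
  obtain ⟨p, hp, hpS, hpl⟩ : ∃ p, p.Prime ∧ p ∣ S ∧ p ≠ l := by
    by_contra hno
    push Not at hno
    have hpow := Nat.eq_prime_pow_of_unique_prime_dvd (p := l) (n := S) (by omega)
      (fun hd hdS => hno _ hd hdS)
    set s := S.primeFactorsList.length
    have hs : 2 ≤ s := by
      by_contra hs
      have : l ^ s ≤ l ^ 1 := Nat.pow_le_pow_right hl.pos (by omega)
      rw [← hpow, pow_one] at this
      omega
    have hl2 : l ^ 2 ∣ S := by rw [hpow]; exact pow_dvd_pow l hs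
    rcases hl.eq_two_or_odd' with rfl | hodd
    · -- here `S = 1 + R ^ 2` is not divisible by `4`
      obtain ⟨j, rfl⟩ := Nat.exists_eq_succ_of_ne_zero (hi rfl)
      have hR : Q = (q ^ 2 ^ j) ^ 2 := by rw [hQ, pow_succ, pow_mul]
      have hS2 : S = 1 + (q ^ 2 ^ j) ^ 2 := by
        rw [hS, hR]; simp [Finset.sum_range_succ]
      rw [hS2] at hl2
      generalize q ^ 2 ^ j = R at hl2
      rcases Nat.even_or_odd' R with ⟨r, rfl | rfl⟩
      · ring_nf at hl2; omega
      · ring_nf at hl2; omega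
    · -- lifting the exponent shows that `l` divides `S` at most once
      have hlQ : l ∣ Q ^ l - 1 := by
        rw [← hSQ]; exact ((dvd_pow_self l two_ne_zero).trans hl2).mul_right _
      have hmod : Q ^ l ≡ 1 [MOD l] :=
        ((Nat.modEq_iff_dvd' (Nat.one_le_pow _ _ (by omega))).2 hlQ).symm
      have hQ1 : Q ≡ 1 [MOD l] := by
        rw [← ZMod.natCast_eq_natCast_iff] at hmod ⊢
        push_cast at hmod ⊢
        rwa [ZMod.pow_card] at hmod
      have hdvd : l ∣ Q - 1 := (Nat.modEq_iff_dvd' (by omega)).1 hQ1.symm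
      have hndvd : ¬ l ∣ Q := fun h =>
        hl.one_lt.ne' (Nat.dvd_one.1 ((hQ1.dvd_iff dvd_rfl).1 h))
      have hlte := padicValNat.pow_sub_pow (p := l) (x := Q) (y := 1) hodd (by omega) hdvd hndvd
        (n := l) hl.ne_zero
      rw [one_pow, ← hSQ, padicValNat.mul (by omega) (by omega), padicValNat_self] at hlte
      have : 2 ≤ padicValNat l S := (padicValNat_dvd_iff_le (by omega)).1 hl2
      omega
  have : Fact p.Prime := ⟨hp⟩
  have hS0 : ∑ t ∈ Finset.range l, (Q : ZMod p) ^ t = 0 := by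
    have : (S : ZMod p) = 0 := (ZMod.natCast_eq_zero_iff _ _).2 hpS
    rw [hS] at this
    push_cast at this
    exact this
  have hQc : (Q : ZMod p) = (q : ZMod p) ^ l ^ i := by rw [hQ]; push_cast; rfl
  have hone : (q : ZMod p) ^ l ^ (i + 1) = 1 := by
    rw [pow_succ, pow_mul, ← hQc]
    have := geom_sum_mul (Q : ZMod p) l
    rw [hS0, zero_mul] at this
    exact (sub_eq_zero.1 this.symm)
  have hnone : ¬ (q : ZMod p) ^ l ^ i = 1 := by
    rw [← hQc]
    intro h1
    rw [h1] at hS0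
    simp only [one_pow, Finset.sum_const, Finset.card_range, nsmul_eq_mul, mul_one] at hS0
    exact hpl ((Nat.prime_dvd_prime_iff_eq hp hl).1 ((ZMod.natCast_eq_zero_iff _ _).1 hS0))
  have hord := orderOf_eq_prime_pow hnone hone
  refine ⟨p, hp, hpl, ?_, fun n => ?_⟩
  · rw [Nat.coprime_comm, hp.coprime_iff_not_dvd]
    intro hpq
    rw [(ZMod.natCast_eq_zero_iff _ _).2 hpq, zero_pow (pow_pos hl.pos _).ne'] at hone
    exact zero_ne_one hone
  · rw [← hord, orderOf_dvd_iff_pow_eq_one, ← ZMod.natCast_eq_natCast_iff]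
    push_cast
    rfl

/-- Every prime power `l ^ j` other than `2` is the stable value of the gcd of the orders of `q`
modulo powers of two suitable primes. -/
lemma exists_gcd_eq_prime_pow {q l i : ℕ} (hq : 2 ≤ q) (hl : l.Prime) (hi : l = 2 → i ≠ 0) :
    ∃ p₁ p₂, p₁.Prime ∧ p₂.Prime ∧ p₁ ≠ p₂ ∧ Nat.Coprime q p₁ ∧ Nat.Coprime q p₂ ∧
      (∀ k, Nat.gcd (ord q p₁ k) (ord q p₂ k) ∣ l ^ (i + 1)) ∧
      ∃ k, Nat.gcd (ord q p₁ k) (ord q p₂ k) = l ^ (i + 1) := by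
  obtain ⟨p₁, hp₁, hl₁, hc₁, ho₁⟩ := exists_prime_order hq hl hi
  obtain ⟨p₂, hp₂, hl₂, hc₂, ho₂⟩ := exists_prime_order (i := i + 1) hq hl (by omega)
  have hne : p₁ ≠ p₂ := by
    rintro rfl
    have := (ho₂ _).1 ((ho₁ _).2 dvd_rfl)
    rw [Nat.pow_dvd_pow_iff_le_right hl.one_lt] at this
    omega
  have hbound : ∀ k, Nat.gcd (ord q p₁ k) (ord q p₂ k) ∣ l ^ (i + 1) := by
    intro k
    have d1 : Nat.gcd (ord q p₁ k) (ord q p₂ k) ∣ l ^ (i + 1) * p₁ ^ k :=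
      (Nat.gcd_dvd_left _ _).trans (ord_dvd_mul_pow k ((ho₁ _).2 dvd_rfl))
    have d2 : Nat.gcd (ord q p₁ k) (ord q p₂ k) ∣ l ^ (i + 1) * (l * p₂ ^ k) :=
      ((Nat.gcd_dvd_right _ _).trans (ord_dvd_mul_pow k ((ho₂ _).2 dvd_rfl))).trans
        ⟨1, by ring⟩
    have d3 := Nat.dvd_gcd d1 d2
    have hcop : Nat.Coprime (p₁ ^ k) (l * p₂ ^ k) :=
      Nat.Coprime.mul_right (((Nat.coprime_primes hp₁ hl).2 hl₁).pow_left k)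
        (((Nat.coprime_primes hp₁ hp₂).2 hne).pow k k)
    rwa [Nat.gcd_mul_left, hcop.gcd_eq_one, mul_one] at d3
  refine ⟨p₁, p₂, hp₁, hp₂, hne, hc₁, hc₂, hbound, 1, Nat.dvd_antisymm (hbound 1) ?_⟩
  refine Nat.dvd_gcd ((ho₁ _).1 ?_) ((pow_dvd_pow l (Nat.le_succ _)).trans ((ho₂ _).1 ?_))
  · have := ord_dvd_iff.1 (dvd_refl (ord q p₁ 1))
    rwa [pow_one] at this
  · have := ord_dvd_iff.1 (dvd_refl (ord q p₂ 1))
    rwa [pow_one] at this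

/-- A self-map of `ℕ` that reflects congruence modulo `G` to congruence modulo `G'` shows that
there are at most as many classes modulo `G` as modulo `G'`. -/
lemma modulus_le {e : ℕ → ℕ} {G G' : ℕ} (hG' : 0 < G')
    (h : ∀ a b, e a ≡ e b [MOD G'] → a ≡ b [MOD G]) : G ≤ G' := by
  have := Finset.card_le_card_of_injOn (s := Finset.range G) (t := Finset.range G')
    (fun a => e a % G') (fun a _ => Finset.mem_coe.2 (Finset.mem_range.2 (Nat.mod_lt _ hG')))
    (fun a ha b hb hab => by
      have h1 := h a b hab
      exact Nat.ModEq.eq_of_lt_of_lt h1 (Finset.mem_range.1 ha) (Finset.mem_range.1 hb))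
  simpa using this

/-- A self-map of `ℕ` fixing `0` and preserving and reflecting congruences modulo all prime powers
other than `2` is the identity. -/
lemma eq_id_of_modEq_iff {e : ℕ → ℕ} (h0 : e 0 = 0)
    (h : ∀ l i a b, l.Prime → (l = 2 → i ≠ 0) →
      (a ≡ b [MOD l ^ (i + 1)] ↔ e a ≡ e b [MOD l ^ (i + 1)])) (n : ℕ) : e n = n := by
  have hdvd : ∀ l i a, l.Prime → (l = 2 → i ≠ 0) → (l ^ (i + 1) ∣ a ↔ l ^ (i + 1) ∣ e a) := by
    intro l i a hl hi
    have := h l i a 0 hl hi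
    rwa [h0, Nat.modEq_zero_iff_dvd, Nat.modEq_zero_iff_dvd] at this
  have hfix : ∀ m, 4 ∣ m → e m = m := by
    intro m hm
    have hm' : 4 ∣ e m := (hdvd 2 1 m Nat.prime_two (by simp)).1 hm
    have key : ∀ l k, l.Prime → (l ^ k ∣ m ↔ l ^ k ∣ e m) := by
      intro l k hl
      rcases k with _ | i
      · simp
      · by_cases hi : l = 2 ∧ i = 0
        · obtain ⟨rfl, rfl⟩ := hi
          constructor <;> intro _ <;> omega
        · exact hdvd l i m hl (fun h2 h3 => hi ⟨h2, h3⟩)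
    exact Nat.dvd_antisymm
      ((Nat.dvd_iff_prime_pow_dvd_dvd _ _).2 fun l k hl hk => (key l k hl).2 hk)
      ((Nat.dvd_iff_prime_pow_dvd_dvd _ _).2 fun l k hl hk => (key l k hl).1 hk)
  -- the multiples of `4` are fixed and approximate `n` in the `3`-adic topology
  set J := n + e n with hJ
  set m := n * 4 ^ Nat.totient (3 ^ (J + 1)) with hm
  have hmn : m ≡ n [MOD 3 ^ (J + 1)] := by
    have h1 : 4 ^ Nat.totient (3 ^ (J + 1)) ≡ 1 [MOD 3 ^ (J + 1)] :=
      Nat.ModEq.pow_totient (Nat.Coprime.pow_right _ (by norm_num))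
    simpa using h1.mul_left n
  have h4 : 4 ∣ m := Dvd.dvd.mul_left
    (dvd_pow_self 4 (Nat.totient_pos.2 (by positivity)).ne') n
  have h1 := (h 3 J m n Nat.prime_three (by simp)).1 hmn
  rw [hfix m h4] at h1
  have hlt : J + 1 < 3 ^ (J + 1) := Nat.lt_pow_self (by norm_num)
  exact Nat.ModEq.eq_of_lt_of_lt (h1.symm.trans hmn) (by omega) (by omega)

/-- If the orders of `b` modulo powers of `p'` all divide orders of `a` modulo powers of `p`,
then `p' = p`: the former involve arbitrarily large powers of `p'`. -/
lemma eq_of_ord_dvd {a b p p' : ℕ} (hb : 2 ≤ b) (hp : p.Prime) (hp' : p'.Prime)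
    (ha : Nat.Coprime a p) (hb' : Nat.Coprime b p') (h : ∀ k, ∃ m, ord b p' k ∣ ord a p m) :
    p' = p := by
  by_contra hne
  have hcop : Nat.Coprime p' p := (Nat.coprime_primes hp' hp).2 hne
  set k := b ^ ((p' - 1) * (p - 1)) with hk
  obtain ⟨m, hm⟩ := h k
  have hA : 0 < p - 1 := Nat.sub_pos_of_lt hp.one_lt
  have hC : 0 < p' - 1 := Nat.sub_pos_of_lt hp'.one_lt
  have d1 : ord b p' k ∣ (p' - 1) * (p - 1) * p' ^ k :=
    (ord_dvd_pred_mul hp' hb' k).trans ⟨p - 1, by ring⟩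
  have d2 : ord b p' k ∣ (p' - 1) * (p - 1) * p ^ m :=
    (hm.trans (ord_dvd_pred_mul hp ha m)).trans ⟨p' - 1, by ring⟩
  have d3 := Nat.dvd_gcd d1 d2
  rw [Nat.gcd_mul_left, (hcop.pow k m).gcd_eq_one, mul_one, ord_dvd_iff] at d3
  have hlt : k < p' ^ k := Nat.lt_pow_self hp'.one_lt
  have h1 : 1 < p' ^ k := lt_of_le_of_lt (Nat.one_le_pow _ _ (by omega)) hlt
  have h2 : k = 1 := Nat.ModEq.eq_of_lt_of_lt d3 hlt h1
  have h3 : 1 < k := Nat.one_lt_pow (Nat.mul_pos hC hA).ne' (by omega)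
  omega

/-! ### Powers of primes and rigidity -/

lemma Pair.exists_pow {h : ℕ+ ≃ₜ ℕ+} {Q Q' : ℕ+} (H : Pair h Q Q') (n : ℕ) :
    ∃ m, h (Q ^ n) = Q' ^ m := by
  refine ⟨(h (Q ^ n) : ℕ).primeFactorsList.length, PNat.coe_injective ?_⟩
  rw [PNat.pow_coe]
  refine Nat.eq_prime_pow_of_unique_prime_dvd (h (Q ^ n)).pos.ne' fun {r'} hr' hd => ?_
  obtain ⟨r, hr⟩ := exists_pair h.symm hr'
  have h1 : r ∣ ((Q ^ n : ℕ+) : ℕ) := (hr.symm.iff (Q ^ n)).2 hd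
  rw [PNat.pow_coe] at h1
  have h2 : r = Q := (Nat.prime_dvd_prime_iff_eq hr.right H.left).1 (hr.right.dvd_of_dvd_pow h1)
  subst h2
  exact hr.symm.right_unique H

/-- The exponent map of `h` on the powers of a prime `Q` is continuous from the topology of the
orders of `Q` modulo powers of `p` to the one of the orders of `Q'` modulo powers of `p'`. -/
lemma exponent_continuous {h : ℕ+ ≃ₜ ℕ+} {Q Q' : ℕ+} {e : ℕ → ℕ}
    (he : ∀ n, h (Q ^ n) = Q' ^ e n) {p p' : ℕ} (hp : Pair h p p') (hc : Nat.Coprime Q p)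
    (hc' : Nat.Coprime Q' p') (a k : ℕ) :
    ∃ m, ∀ n, n ≡ a [MOD ord Q p m] → e n ≡ e a [MOD ord Q' p' k] := by
  have hx : ¬ p ∣ ((Q ^ a : ℕ+) : ℕ) := by
    rw [← hp.left.coprime_iff_not_dvd, PNat.pow_coe]
    exact (hc.pow_left a).symm
  obtain ⟨m, hm⟩ := hp.padic_continuous hx k
  refine ⟨m, fun n hn => ?_⟩
  have h1 := hm (Q ^ n) (by
    rw [PNat.pow_coe, PNat.pow_coe]; exact (pow_modEq_pow_iff hc n a).2 hn)
  rw [he, he, PNat.pow_coe, PNat.pow_coe] at h1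
  exact (pow_modEq_pow_iff hc' _ _).1 h1

/-- Exponents `a, b` congruent modulo `G` have a common approximation `n`, close to `a` for
the first prime and to `b` for the second one; its image forces `e a` and `e b` to be congruent. -/
lemma exponent_modEq {h : ℕ+ ≃ₜ ℕ+} {Q Q' : ℕ+} {e : ℕ → ℕ}
    (he : ∀ n, h (Q ^ n) = Q' ^ e n) {p₁ p₁' p₂ p₂' : ℕ} (hp₁ : Pair h p₁ p₁')
    (hp₂ : Pair h p₂ p₂') (hc₁ : Nat.Coprime Q p₁) (hc₁' : Nat.Coprime Q' p₁')
    (hc₂ : Nat.Coprime Q p₂) (hc₂' : Nat.Coprime Q' p₂') {G G' : ℕ}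
    (hG : ∀ k, Nat.gcd (ord Q p₁ k) (ord Q p₂ k) ∣ G)
    (hG' : ∃ k, Nat.gcd (ord Q' p₁' k) (ord Q' p₂' k) = G') {a b : ℕ} (hab : a ≡ b [MOD G]) :
    e a ≡ e b [MOD G'] := by
  obtain ⟨k, rfl⟩ := hG'
  obtain ⟨m₁, hm₁⟩ := exponent_continuous he hp₁ hc₁ hc₁' a k
  obtain ⟨m₂, hm₂⟩ := exponent_continuous he hp₂ hc₂ hc₂' b k
  have d1 : ord Q p₁ m₁ ∣ ord Q p₁ (max m₁ m₂) := ord_dvd_ord (le_max_left _ _)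
  have d2 : ord Q p₂ m₂ ∣ ord Q p₂ (max m₁ m₂) := ord_dvd_ord (le_max_right _ _)
  obtain ⟨n, hn1, hn2⟩ := Nat.chineseRemainder' (hab.of_dvd (hG (max m₁ m₂)))
  exact (((hm₁ n (hn1.of_dvd d1)).symm).of_dvd (Nat.gcd_dvd_left _ _)).trans
    ((hm₂ n (hn2.of_dvd d2)).of_dvd (Nat.gcd_dvd_right _ _))

lemma Pair.coprime_right {h : ℕ+ ≃ₜ ℕ+} {q q' p p' : ℕ} (H : Pair h q q') (hp : Pair h p p')
    (hc : Nat.Coprime q p) : Nat.Coprime q' p' := by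
  rw [Nat.coprime_primes H.right hp.right]
  rintro rfl
  exact (Nat.coprime_primes H.left hp.left).1 hc (H.left_unique hp)

lemma Pair.map_pow {h : ℕ+ ≃ₜ ℕ+} {Q Q' : ℕ+} (H : Pair h Q Q') (n : ℕ) :
    h (Q ^ n) = Q' ^ n := by
  choose e he using H.exists_pow
  choose e' he' using H.symm.exists_pow
  have inj : ∀ {R : ℕ+}, (R : ℕ).Prime → ∀ {a b : ℕ}, R ^ a = R ^ b → a = b := by
    intro R hR a b hab
    have := congrArg PNat.val hab
    exact Nat.pow_right_injective hR.two_le (by simpa using this)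
  have hee' : ∀ a, e (e' a) = a := fun a => inj H.right (by
    rw [← he, ← he', h.apply_symm_apply])
  have he0 : e 0 = 0 := inj H.right (by rw [← he, pow_zero, pow_zero, map_one_eq])
  suffices hid : e n = n by rw [he, hid]
  refine eq_id_of_modEq_iff he0 (fun l i a b hl hi => ?_) n
  obtain ⟨p₁, p₂, hp₁, hp₂, hne, hc₁, hc₂, hG, hGk⟩ := exists_gcd_eq_prime_pow H.left.two_le hl hi
  obtain ⟨p₁', P₁⟩ := exists_pair h hp₁
  obtain ⟨p₂', P₂⟩ := exists_pair h hp₂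
  have hc₁' := H.coprime_right P₁ hc₁
  have hc₂' := H.coprime_right P₂ hc₂
  have hne' : p₁' ≠ p₂' := by
    rintro rfl
    exact hne (P₁.left_unique P₂)
  obtain ⟨G', hG'pos, hG', hGk'⟩ := exists_stable_gcd P₁.right P₂.right hne' hc₁' hc₂'
  have fwd : ∀ a b, a ≡ b [MOD l ^ (i + 1)] → e a ≡ e b [MOD G'] := fun a b =>
    exponent_modEq he P₁ P₂ hc₁ hc₁' hc₂ hc₂' hG hGk'
  have bwd' : ∀ a b, a ≡ b [MOD G'] → e' a ≡ e' b [MOD l ^ (i + 1)] := fun a b =>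
    exponent_modEq he' P₁.symm P₂.symm hc₁' hc₁ hc₂' hc₂ hG' hGk
  have he'e : ∀ a, e' (e a) = a := fun a => inj H.left (by
    rw [← he', ← he, h.symm_apply_apply])
  have bwd : ∀ a b, e a ≡ e b [MOD G'] → a ≡ b [MOD l ^ (i + 1)] := fun a b hab => by
    simpa only [he'e] using bwd' _ _ hab
  have hGG : l ^ (i + 1) = G' := by
    refine le_antisymm (modulus_le hG'pos bwd) (modulus_le (e := e') (pow_pos hl.pos _) ?_)
    intro a b hab
    simpa only [hee'] using fwd _ _ hab
  rw [hGG] at fwd bwd ⊢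
  exact ⟨fwd a b, bwd a b⟩

/-- The permutation of the primes induced by `h` is the identity. -/
lemma Pair.eq {h : ℕ+ ≃ₜ ℕ+} {p p' : ℕ} (hp : Pair h p p') : p' = p := by
  obtain ⟨q, hle, hq⟩ := Nat.exists_infinite_primes (p + 1)
  obtain ⟨q', H⟩ := exists_pair h hq
  have hc : Nat.Coprime q p := (Nat.coprime_primes hq hp.left).2 (by omega)
  have hc' := H.coprime_right hp hc
  let Q : ℕ+ := ⟨q, hq.pos⟩
  let Q' : ℕ+ := ⟨q', H.right.pos⟩
  have H' : Pair h Q Q' := H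
  refine eq_of_ord_dvd (a := q) (b := q') H.right.two_le hp.left hp.right hc hc' fun k => ?_
  obtain ⟨m, hm⟩ := exponent_continuous (e := id) (fun n => H'.map_pow n) hp hc hc' 0 k
  refine ⟨m, Nat.modEq_zero_iff_dvd.1 (hm (ord q p m) ?_)⟩
  exact Nat.modEq_zero_iff_dvd.2 dvd_rfl

lemma map_prime (h : ℕ+ ≃ₜ ℕ+) {q : ℕ} (hq : q.Prime) : h ⟨q, hq.pos⟩ = ⟨q, hq.pos⟩ := by
  obtain ⟨q', H⟩ := exists_pair h hq
  obtain rfl := H.eq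
  let Q : ℕ+ := ⟨q', hq.pos⟩
  have H' : Pair h Q Q := H
  have h1 := H'.map_pow 1
  rw [pow_one] at h1
  exact h1

/-- The Golomb space is rigid: `h` fixes the primes, which are dense by Dirichlet's theorem. -/
lemma homeo_apply (h : ℕ+ ≃ₜ ℕ+) (x : ℕ+) : h x = x := by
  obtain ⟨p, hle, hp⟩ := Nat.exists_infinite_primes ((x : ℕ) + h x + 1)
  have hpx : ¬ p ∣ (x : ℕ) := fun hd => by have := Nat.le_of_dvd x.pos hd; omega
  obtain ⟨p', P⟩ := exists_pair h hp
  obtain rfl := P.eq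
  obtain ⟨m, hm⟩ := P.padic_continuous hpx 1
  have hcop : Nat.Coprime x (p' ^ (m + 1)) := ((hp.coprime_iff_not_dvd.2 hpx).pow_left _).symm
  obtain ⟨r, -, hr, hrx⟩ := Nat.forall_exists_prime_gt_and_modEq 0 (pow_pos hp.pos (m + 1)).ne' hcop
  have h1 := hm ⟨r, hr.pos⟩ (hrx.of_dvd (pow_dvd_pow _ (Nat.le_succ m)))
  rw [map_prime h hr, pow_one] at h1
  have h2 : r ≡ x [MOD p'] := hrx.of_dvd (dvd_pow_self p' (Nat.succ_ne_zero m))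
  exact PNat.coe_injective (Nat.ModEq.eq_of_lt_of_lt (h1.symm.trans h2) (by omega) (by omega))

/-- Every homeomorphism of the Golomb space fixes `1`, permutes the primes,
satisfies `Π_{h(x)} = h(Π_x)` and `h(x^ℕ) = h(x)^ℕ`. -/
theorem golomb_homeo_properties (h : ℕ+ ≃ₜ ℕ+) :
    h 1 = 1 ∧
    h '' {p : ℕ+ | (p : ℕ).Prime} = {p : ℕ+ | (p : ℕ).Prime} ∧
    (∀ x : ℕ+, {q : ℕ+ | (q : ℕ).Prime ∧ (q : ℕ) ∣ (↑(h x) : ℕ)} =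
      h '' {q : ℕ+ | (q : ℕ).Prime ∧ (q : ℕ) ∣ (x : ℕ)}) ∧
    (∀ x : ℕ+, h '' {y : ℕ+ | ∃ k : ℕ, 0 < k ∧ y = x ^ k} =
      {y : ℕ+ | ∃ k : ℕ, 0 < k ∧ y = h x ^ k}) := by
  have hid : (h : ℕ+ → ℕ+) = id := funext (homeo_apply h)
  simp [hid]
end

section
/- Let p be a prime number. For any clopen subset Ω of the subspace ℕ_τ \ pℕ of the Golomb space and any x ∈ Ω, there exists n ∈ ℕ such that x + p^nℕ₀ ⊆ Ω. -/
/-!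
Every open set of `ℕ \ pℕ` containing `x` contains a progression `x + bℕ₀` with `b` coprime
to `x`; as `p ∤ x`, one may take `b = p ^ n * c` with `n ≥ 1` and `p ∤ c`. The closure of this
progression contains every `z ≡ x` modulo `p ^ n` that is a multiple of `c`: a basic neighbourhood
`z + dℕ₀` has `d` coprime to `z`, hence to `c`, so `gcd(b, d)` divides `p ^ n`, which divides
`z - x`, and the two progressions meet by the Chinese remainder theorem. So a clopen set containing
`x` contains `{z : z ≡ x mod p ^ n, c ∣ z}` (`exists_multiples_mem_of_isClopen`).

If some `y ≡ x` modulo `p ^ n` were outside `Ω`, the same fact for the clopen set `Ωᶜ` and `y` would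
give `m` and `e` with `p ∤ e` such that `{z : z ≡ y mod p ^ m, e ∣ z} ⊆ Ωᶜ`. The Chinese remainder
theorem yields `z ≡ y` modulo `p ^ (n + m)` divisible by `c * e`, which lies both in `Ω` and in `Ωᶜ`.
-/

open TopologicalSpace

theorem exists_progression_subset_of_isOpen {U : Set ℕ+} (hU : IsOpen U) (x : ℕ+) (hx : x ∈ U) :
    ∃ b : ℕ, 0 < b ∧ Nat.Coprime x b ∧ ∀ (y : ℕ+) (k : ℕ), (y : ℕ) = x + b * k → y ∈ U := by
  induction hU with
  | basic s hs =>
    obtain ⟨a, b, -, hb, hab, rfl⟩ := hs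
    obtain ⟨n, hn⟩ := hx
    refine ⟨b, hb, ?_, fun y k hy => ⟨n + k, ?_⟩⟩
    · rw [hn]
      simpa using hab
    · rw [hy, hn]
      ring
  | univ => exact ⟨1, one_pos, by simp, fun _ _ _ => Set.mem_univ _⟩
  | inter s t _ _ ihs iht =>
    obtain ⟨b, hb, hxb, h⟩ := ihs hx.1
    obtain ⟨c, hc, hxc, h'⟩ := iht hx.2
    refine ⟨b * c, Nat.mul_pos hb hc, hxb.mul_right hxc, fun y k hy => ⟨h y (c * k) ?_, h' y (b * k) ?_⟩⟩
    · rw [hy]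
      ring
    · rw [hy]
      ring
  | sUnion S _ ih =>
    obtain ⟨s, hs, hxs⟩ := hx
    obtain ⟨b, hb, hxb, h⟩ := ih s hs hxs
    exact ⟨b, hb, hxb, fun y k hy => ⟨s, hs, h y k hy⟩⟩

theorem exists_progression_subset_of_isOpen_subtype {p : ℕ} {S : Set (Np p)} (hS : IsOpen S)
    (x : Np p) (hx : x ∈ S) :
    ∃ b : ℕ, 0 < b ∧ Nat.Coprime (x : ℕ+) b ∧
      ∀ (y : Np p) (k : ℕ), ((y : ℕ+) : ℕ) = (x : ℕ+) + b * k → y ∈ S := by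
  obtain ⟨U, hU, rfl⟩ := isOpen_induced_iff.mp hS
  obtain ⟨b, hb, hxb, h⟩ := exists_progression_subset_of_isOpen hU x hx
  exact ⟨b, hb, hxb, fun y k hy => h y k hy⟩

theorem exists_eq_add_mul_of_modEq {x w b : ℕ} (h : w ≡ x [MOD b]) (hle : x ≤ w) :
    ∃ k, w = x + b * k := by
  obtain ⟨k, hk⟩ := (Nat.modEq_iff_dvd' hle).mp h.symm
  exact ⟨k, by omega⟩

/-- A clopen set containing `x` contains, for some `n` and some `c` prime to `p`, all multiples of
`c` that are congruent to `x` modulo `p ^ n`: they lie in the closure of `x + p ^ n * cℕ₀`. -/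
theorem exists_multiples_mem_of_isClopen {p : ℕ} (hp : p.Prime) {S : Set (Np p)}
    (hS : IsClopen S) (x : Np p) (hx : x ∈ S) :
    ∃ n c : ℕ, 0 < n ∧ ¬ p ∣ c ∧ ∀ z : Np p,
      ((z : ℕ+) : ℕ) ≡ (x : ℕ+) [MOD p ^ n] → c ∣ ((z : ℕ+) : ℕ) → z ∈ S := by
  obtain ⟨b, hb, -, h⟩ := exists_progression_subset_of_isOpen_subtype hS.isOpen x hx
  obtain ⟨n, c, hpc, rfl⟩ := Nat.exists_eq_pow_mul_and_not_dvd hb.ne' p hp.ne_one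
  -- The exponent is raised by one so that it is positive.
  refine ⟨n + 1, c, n.succ_pos, hpc, fun z hzx hcz => ?_⟩
  by_contra hz
  obtain ⟨d, hd, hzd, h'⟩ :=
    exists_progression_subset_of_isOpen_subtype hS.compl.isOpen z hz
  have hcop : Nat.Coprime (Nat.gcd (p ^ (n + 1) * c) d) c :=
    (Nat.Coprime.coprime_dvd_left hcz hzd).symm.coprime_dvd_left (Nat.gcd_dvd_right _ _)
  have hdvd : Nat.gcd (p ^ (n + 1) * c) d ∣ p ^ (n + 1) :=
    hcop.dvd_of_dvd_mul_right (Nat.gcd_dvd_left _ _)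
  obtain ⟨k, hkx, hkz⟩ := Nat.chineseRemainder' (hzx.symm.of_dvd hdvd)
  -- The common point of the two progressions must exceed both starting points.
  set w : ℕ := k + p ^ (n + 1) * c * d * ((x : ℕ+) + (z : ℕ+)) with hw
  have hpos : 0 < p ^ (n + 1) * c * d :=
    Nat.mul_pos (Nat.mul_pos (pow_pos hp.pos _) (Nat.pos_of_ne_zero (by rintro rfl; simp at hpc))) hd
  have hle : ((x : ℕ+) : ℕ) + (z : ℕ+) ≤ w :=
    (Nat.le_mul_of_pos_left _ hpos).trans (Nat.le_add_left _ _)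
  have hwx : w ≡ (x : ℕ+) [MOD p ^ (n + 1) * c] := by
    refine Nat.ModEq.trans ?_ hkx
    rw [hw, mul_assoc (p ^ (n + 1) * c)]
    simp [Nat.ModEq]
  have hwz : w ≡ (z : ℕ+) [MOD d] := by
    refine Nat.ModEq.trans ?_ hkz
    rw [hw, mul_comm _ d, mul_assoc]
    simp [Nat.ModEq]
  have hpw : ¬ p ∣ w := fun hdiv => x.2 <|
    ((hwx.of_dvd ((dvd_pow_self p n.succ_ne_zero).mul_right c)).dvd_iff dvd_rfl).mp hdiv
  have hw0 : 0 < w := lt_of_lt_of_le (Nat.add_pos_left (x : ℕ+).pos _) hle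
  obtain ⟨i, hi⟩ := exists_eq_add_mul_of_modEq hwx (le_trans (Nat.le_add_right _ _) hle)
  obtain ⟨j, hj⟩ := exists_eq_add_mul_of_modEq hwz (le_trans (Nat.le_add_left _ _) hle)
  refine h' ⟨⟨w, hw0⟩, hpw⟩ j hj (h ⟨⟨w, hw0⟩, hpw⟩ (p * i) ?_)
  refine hi.trans ?_
  ring

/-- For any clopen subset `Ω` of the subspace `ℕ_τ \ pℕ` of the Golomb space and
any `x ∈ Ω` there is `n ∈ ℕ` with `x + p^nℕ₀ ⊆ Ω`. -/
theorem golomb_clopen_padic_nbhd (p : ℕ) (hp : p.Prime) (Ω : Set (Np p))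
    (hΩ : IsClopen Ω) (x : Np p) (hx : x ∈ Ω) :
    ∃ n : ℕ, 0 < n ∧ ∀ y : Np p,
      (∃ k : ℕ, ((y : ℕ+) : ℕ) = ((x : ℕ+) : ℕ) + p ^ n * k) → y ∈ Ω := by
  obtain ⟨n, c, hn, hpc, h⟩ := exists_multiples_mem_of_isClopen hp hΩ x hx
  refine ⟨n, hn, ?_⟩
  rintro y ⟨k, hk⟩
  by_contra hy
  obtain ⟨m, e, hm, hpe, h'⟩ := exists_multiples_mem_of_isClopen hp hΩ.compl y hy
  have hcop : Nat.Coprime (p ^ (n + m)) (c * e) :=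
    Nat.Coprime.pow_left _ (Nat.Coprime.mul_right
      ((Nat.Prime.coprime_iff_not_dvd hp).mpr hpc) ((Nat.Prime.coprime_iff_not_dvd hp).mpr hpe))
  obtain ⟨z, hzy, hz0⟩ := Nat.chineseRemainder hcop (y : ℕ+) 0
  have hdvd : c * e ∣ z := (Nat.modEq_zero_iff_dvd).mp hz0
  have hpz : ¬ p ∣ z := fun hdiv => y.2 <|
    ((hzy.of_dvd (dvd_pow_self p (by omega))).dvd_iff dvd_rfl).mp hdiv
  have hzpos : 0 < z := Nat.pos_of_ne_zero (by rintro rfl; simp at hpz)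
  have hyx : ((y : ℕ+) : ℕ) ≡ (x : ℕ+) [MOD p ^ n] := by
    rw [hk]
    simp [Nat.ModEq]
  exact h' ⟨⟨z, hzpos⟩, hpz⟩ (hzy.of_dvd (pow_dvd_pow p (Nat.le_add_left m n)))
    ((dvd_mul_left e c).trans hdvd)
    (h ⟨⟨z, hzpos⟩, hpz⟩ ((hzy.of_dvd (pow_dvd_pow p (Nat.le_add_right n m))).trans hyx)
      ((dvd_mul_right c e).trans hdvd))
end

section
/- For any prime p, the p-adic topology on ℕ \ pℕ coincides with the zero-dimensional reflection of the subspace ℕ_τ \ pℕ of the Golomb space ℕ_τ, i.e., the topology on ℕ \ pℕ generated by the sets (ℕ \ pℕ) ∩ (x+p^nℕ₀), x,n ∈ ℕ, equals the topology generated by the clopen subsets of the subspace ℕ_τ \ pℕ. -/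
/-!
The residue classes modulo `p ^ m` are clopen in the subspace `ℕ_τ \ pℕ`. If `y ∈ x + p ^ n ℕ₀` and
`m ≥ n` is so large that `y < p ^ m`, then `y` is the least member of its class modulo `p ^ m`, so
that this class is contained in `x + p ^ n ℕ₀`. Hence the `p`-adic topology is coarser than the
zero-dimensional reflection.

Conversely let `S` be clopen and `x ∈ S`. Some progression `x + p ^ n b ℕ₀` with `p ∤ b`, `n ≥ 1`
lies in `S`, and the closedness of `S` forces `S` to contain every `w ≡ x [MOD p ^ n]` with `b ∣ w`
(`mem_of_isClosed`): a neighbourhood `w + dℕ₀` of such a `w` has `d` coprime to `b`, so by the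
Chinese remainder theorem it meets the progression. If some `z ≡ x [MOD p ^ n]` were outside `S`,
the same would hold for the complement, with some `p ^ m c` and `z`. A number `w ≡ z` modulo
`p ^ (m + n)` divisible by `b c` would then lie both in `S` and in its complement. Hence
`x + p ^ n ℕ₀` is contained in `S`, so `S` is `p`-adically open.
-/

open TopologicalSpace

/-- The progressions starting at `x` with difference coprime to `x` form a neighbourhood base at
`x` in the Golomb space. -/
lemma golomb_exists_progression {U : Set ℕ+} (hU : IsOpen U) {x : ℕ+} (hx : x ∈ U) :
    ∃ b : ℕ, 0 < b ∧ Nat.Coprime x b ∧ golombBasic x b ⊆ U := by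
  change GenerateOpen _ U at hU
  induction hU with
  | basic s hs =>
    obtain ⟨a, b, -, hb, hab, rfl⟩ := hs
    obtain ⟨n, hn⟩ := hx
    refine ⟨b, hb, ?_, ?_⟩
    · rw [hn]; simpa using hab
    · rintro y ⟨k, hk⟩
      exact ⟨n + k, by rw [hk, hn]; ring⟩
  | univ => exact ⟨1, one_pos, Nat.coprime_one_right _, Set.subset_univ _⟩
  | inter s t _ _ ihs iht =>
    obtain ⟨b, hb, hxb, hs⟩ := ihs hx.1
    obtain ⟨c, hc, hxc, ht⟩ := iht hx.2
    refine ⟨b * c, Nat.mul_pos hb hc, hxb.mul_right hxc, ?_⟩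
    rintro y ⟨k, hk⟩
    exact ⟨hs ⟨c * k, by rw [hk]; ring⟩, ht ⟨b * k, by rw [hk]; ring⟩⟩
  | sUnion T _ ih =>
    obtain ⟨t, ht, hxt⟩ := hx
    obtain ⟨b, hb, hxb, hs⟩ := ih t ht hxt
    exact ⟨b, hb, hxb, hs.trans (Set.subset_sUnion_of_mem ht)⟩

/-- In `ℕ_τ \ pℕ` the difference of a progression around `x` can be taken of the form
`p ^ n * b` with `n ≥ 1`, `p ∤ b`. -/
lemma exists_modEq_subset {p : ℕ} (hp : p.Prime) {U : Set (Np p)} (hU : IsOpen U) {x : Np p}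
    (hx : x ∈ U) : ∃ n b : ℕ, 0 < n ∧ 0 < b ∧ ¬ p ∣ b ∧ Nat.Coprime (x : ℕ+) b ∧
      ∀ y : Np p, ((x : ℕ+) : ℕ) ≤ (y : ℕ+) → (x : ℕ+) ≡ (y : ℕ+) [MOD p ^ n * b] → y ∈ U := by
  obtain ⟨V, hV, rfl⟩ := isOpen_induced_iff.1 hU
  obtain ⟨d, hd, hxd, hdV⟩ := golomb_exists_progression hV hx
  obtain ⟨n, b, hb, hn⟩ := Nat.exists_eq_pow_mul_and_not_dvd hd.ne' p hp.ne_one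
  refine ⟨n + 1, b, n.succ_pos, Nat.pos_of_ne_zero (by rintro rfl; simp at hb), hb,
    hxd.coprime_dvd_right (hn ▸ dvd_mul_left _ _), fun y hxy h => hdV ?_⟩
  have h1 : d ∣ ((y : ℕ+) : ℕ) - (x : ℕ+) := by
    refine Dvd.dvd.trans ?_ ((Nat.modEq_iff_dvd' hxy).1 h)
    exact ⟨p, by rw [hn]; ring⟩
  obtain ⟨k, hk⟩ := h1
  exact ⟨k, by omega⟩

/-- The closure of a progression `x + p ^ n b ℕ₀` in `ℕ_τ \ pℕ` contains every multiple `w` of `b`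
with `w ≡ x [MOD p ^ n]`: differences of progressions around `w` are coprime to `b`, so the Chinese
remainder theorem applies. -/
lemma mem_of_isClosed {p : ℕ} (hp : p.Prime) {C : Set (Np p)} (hC : IsClosed C) {x w : Np p}
    {n b : ℕ} (hn : 0 < n) (hb : 0 < b)
    (h : ∀ y : Np p, ((x : ℕ+) : ℕ) ≤ (y : ℕ+) → (x : ℕ+) ≡ (y : ℕ+) [MOD p ^ n * b] → y ∈ C)
    (hbw : b ∣ (w : ℕ+)) (hxw : (x : ℕ+) ≡ (w : ℕ+) [MOD p ^ n]) : w ∈ C := by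
  by_contra hw
  obtain ⟨m, d, hm, hd, -, hwd, hU⟩ := exists_modEq_subset hp hC.isOpen_compl hw
  have hdb : Nat.Coprime d b := (hwd.coprime_dvd_left hbw).symm
  have hpb : Nat.Coprime (p ^ m) b :=
    ((((Nat.Prime.coprime_iff_not_dvd hp).2 w.2).coprime_dvd_right hbw).pow_left m)
  have hgcd : Nat.gcd (p ^ m * d) (p ^ n * b) ∣ p ^ n :=
    Nat.Coprime.dvd_of_dvd_mul_right
      (((hpb.mul_left hdb).coprime_dvd_left (Nat.gcd_dvd_left _ _))) (Nat.gcd_dvd_right _ _)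
  obtain ⟨t, ht1, ht2⟩ := Nat.chineseRemainder' (hxw.symm.of_dvd hgcd)
  -- Shift `t` by a common multiple of both moduli to get above `x` and `w`.
  set P := p ^ m * d * (p ^ n * b) with hP
  have hPpos : 0 < P := by have := hp.pos; positivity
  set s := t + P * ((x : ℕ+) + (w : ℕ+) : ℕ) with hs
  have hle : ((x : ℕ+) + (w : ℕ+) : ℕ) ≤ s := by nlinarith [Nat.zero_le t]
  have hs1 : s ≡ (w : ℕ+) [MOD p ^ m * d] := by
    refine Nat.ModEq.trans ?_ ht1
    rw [hs, hP, mul_assoc]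
    simp [Nat.ModEq]
  have hs2 : s ≡ (x : ℕ+) [MOD p ^ n * b] := by
    refine Nat.ModEq.trans ?_ ht2
    rw [hs, hP, mul_comm (p ^ m * d), mul_assoc]
    simp [Nat.ModEq]
  have hps : ¬ p ∣ s := fun hdv => x.2
    ((hs2.dvd_iff ((dvd_pow_self p hn.ne').mul_right b)).1 hdv)
  have hspos : 0 < s := by have := (x : ℕ+).pos; omega
  let y : Np p := ⟨⟨s, hspos⟩, hps⟩
  exact hU y (by change _ ≤ s; omega) hs1.symm (h y (by change _ ≤ s; omega) hs2.symm)

/-- The heart of the matter: a clopen set containing `x` contains a whole `p`-adic ball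
around `x`. -/
lemma exists_padic_ball_subset {p : ℕ} (hp : p.Prime) {S : Set (Np p)} (hS : IsClopen S)
    {x : Np p} (hx : x ∈ S) :
    ∃ n : ℕ, 0 < n ∧ ∀ z : Np p, (x : ℕ+) ≡ (z : ℕ+) [MOD p ^ n] → z ∈ S := by
  obtain ⟨n, b, hn, hb, hpb, -, h⟩ := exists_modEq_subset hp hS.isOpen hx
  refine ⟨n, hn, fun z hxz => ?_⟩
  by_contra hz
  obtain ⟨m, c, hm, hc, hpc, -, h'⟩ := exists_modEq_subset hp hS.compl.isOpen hz
  have hcop : Nat.Coprime (p ^ (m + n)) (b * c) :=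
    ((((Nat.Prime.coprime_iff_not_dvd hp).2 hpb).mul_right
      ((Nat.Prime.coprime_iff_not_dvd hp).2 hpc)).pow_left _)
  obtain ⟨w, hw1, hw2⟩ := Nat.chineseRemainder hcop (z : ℕ+) 0
  have hpw : ¬ p ∣ w := fun hdv => z.2
    ((hw1.dvd_iff (dvd_pow_self p (by omega))).1 hdv)
  have hwpos : 0 < w := Nat.pos_of_ne_zero (by rintro rfl; simp at hpw)
  have hbc : b * c ∣ w := (Nat.modEq_zero_iff_dvd).1 hw2
  let y : Np p := ⟨⟨w, hwpos⟩, hpw⟩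
  have hy : y ∈ S := mem_of_isClosed hp hS.isClosed hn hb h ((dvd_mul_right b c).trans hbc)
    (hxz.trans (hw1.symm.of_dvd (pow_dvd_pow p (by omega))))
  exact mem_of_isClosed (w := y) hp hS.compl.isClosed hm hc h' ((dvd_mul_left c b).trans hbc)
    (hw1.symm.of_dvd (pow_dvd_pow p (by omega))) hy

/-- Unions of residue classes modulo `p ^ n` are open in `ℕ_τ \ pℕ`. -/
lemma isOpen_residue {p : ℕ} (hp : p.Prime) (n : ℕ) (A : Set ℕ)
    (hA : ∀ a b : ℕ, a ≡ b [MOD p ^ n] → a ∈ A → b ∈ A) :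
    IsOpen {z : Np p | ((z : ℕ+) : ℕ) ∈ A} := by
  rw [isOpen_iff_forall_mem_open]
  intro z hz
  refine ⟨Subtype.val ⁻¹' golombBasic (z : ℕ+) (p ^ n), ?_, ?_, ⟨0, by simp⟩⟩
  · rintro y ⟨k, hk⟩
    refine hA _ _ ?_ hz
    rw [hk]
    simp [Nat.ModEq]
  · refine IsOpen.preimage continuous_subtype_val (isOpen_generateFrom_of_mem ?_)
    exact ⟨_, _, (z : ℕ+).pos, pow_pos hp.pos n,
      (((Nat.Prime.coprime_iff_not_dvd hp).2 z.2).pow_left n).symm, rfl⟩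

lemma isClopen_residue {p : ℕ} (hp : p.Prime) (n x : ℕ) :
    IsClopen {z : Np p | x ≡ (z : ℕ+) [MOD p ^ n]} := by
  constructor
  · rw [← isOpen_compl_iff]
    exact isOpen_residue hp n {a | ¬ x ≡ a [MOD p ^ n]} fun a b hab ha hb => ha (hb.trans hab.symm)
  · exact isOpen_residue hp n {a | x ≡ a [MOD p ^ n]} fun a b hab ha => ha.trans hab

/-- The `p`-adic topology on `ℕ \ pℕ` coincides with the zero-dimensional reflection
(the topology generated by the clopen sets) of the subspace `ℕ_τ \ pℕ` of the Golomb
space. -/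
theorem padic_eq_zeroDimReflection (p : ℕ) (hp : p.Prime) :
    padicTop p = generateFrom {S : Set (Np p) | IsClopen S} := by
  apply le_antisymm
  · refine le_generateFrom fun S hS => ?_
    refine (@isOpen_iff_forall_mem_open _ (padicTop p) S).2 fun x hx => ?_
    obtain ⟨n, hn, h⟩ := exists_padic_ball_subset hp hS hx
    refine ⟨{y : Np p | ∃ k : ℕ, ((y : ℕ+) : ℕ) = (x : ℕ+) + p ^ n * k}, ?_,
      isOpen_generateFrom_of_mem ⟨_, n, (x : ℕ+).pos, hn, rfl⟩, ⟨0, by simp⟩⟩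
    rintro y ⟨k, hk⟩
    refine h y ?_
    rw [hk]
    simp [Nat.ModEq]
  · refine le_generateFrom ?_
    rintro _ ⟨x, n, -, -, rfl⟩
    refine (@isOpen_iff_forall_mem_open _ (generateFrom {S : Set (Np p) | IsClopen S}) _).2 ?_
    rintro y ⟨k, hk⟩
    -- As `y < p ^ (n + y)`, the residue class of `y` modulo `p ^ (n + y)` has least member `y`.
    refine ⟨{z : Np p | ((y : ℕ+) : ℕ) ≡ (z : ℕ+) [MOD p ^ (n + (y : ℕ+))]}, ?_,
      isOpen_generateFrom_of_mem (isClopen_residue hp _ _), Nat.ModEq.refl _⟩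
    intro z hz
    have hlt : ((y : ℕ+) : ℕ) < p ^ (n + (y : ℕ+) : ℕ) :=
      (Nat.lt_pow_self hp.one_lt).trans_le (Nat.pow_le_pow_right hp.pos (by omega))
    have hle : ((y : ℕ+) : ℕ) ≤ (z : ℕ+) := by
      have h1 : ((y : ℕ+) : ℕ) = _ % _ := (Nat.mod_eq_of_lt hlt).symm.trans hz
      rw [h1]
      exact Nat.mod_le _ _
    obtain ⟨j, hj⟩ := (Nat.modEq_iff_dvd' hle).1 hz
    refine ⟨k + p ^ ((y : ℕ+) : ℕ) * j, ?_⟩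
    have : ((z : ℕ+) : ℕ) = (y : ℕ+) + p ^ (n + (y : ℕ+) : ℕ) * j := by omega
    rw [this, pow_add]
    nth_rewrite 1 [hk]
    ring
end

section
/- For any homeomorphism h : ℕ_τ → ℕ_τ of the Golomb space and any prime number p, one has h(pℕ) = h(p)ℕ; consequently h restricts to a homeomorphism of the subspace ℕ_τ \ pℕ onto the subspace ℕ_τ \ h(p)ℕ. -/
/-!
The prime divisors of a point are visible in how closures of neighbourhoods of two points meet.
By the Chinese remainder theorem (`mem_closure_basic`) `t` lies in the closure of `a + dℕ₀` iff
`t ≡ a` modulo every divisor of `d` coprime to `t`. For a pair `x, y` consider the filter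
generated by the sets `cl U ∩ cl V`, with `U, V` neighbourhoods of `x, y`; the relation
`FilterLE x y z` says that the filter of `x, y` is contained in that of `x, z`, so it is preserved
by homeomorphisms. It yields two invariants.

* For `x ≠ 1`, `FilterLE x 1 z` forces `z = 1` (`eq_one_of_filterLE`), whereas
  `FilterLE 1 y (y ^ 2)` holds for all `y ≠ 1`. So `1` is topologically distinguished, and `h 1 = 1`.
* For `y, z ≠ 1`, `FilterLE 1 y z` holds iff every prime dividing `z` divides `y`
  (`filterLE_one_iff`). So `h` preserves inclusion between sets of prime divisors. In particular,
  for `p` prime there are a prime `q` and `k, j ≥ 1` with `h p = q ^ k` and `h (p ^ j) = q`, and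
  `p ∣ x ↔ q ∣ h x`.

It remains to see that `j = 1`. Suppose `j ≥ 2` and put `R = p ^ j - 1`. The map
`y ↦ h⁻¹ (h y ^ k)` sends `p ^ j` to `p`, and by continuity of `h` and `h⁻¹` it sends all `s` in
some progression `p ^ j + nℕ₀` into `p + Rℕ₀`. Dirichlet's theorem provides a prime `s` there with
`s ≡ p ^ j ≡ 1` modulo `R`. Since `h s ^ k` and `h s` have the same prime divisors, `s` is sent to a
power of `s`, which is `1` modulo `R`. Hence `p ≡ 1` modulo `R`, which is absurd as `R > p - 1 > 0`.
-/

open TopologicalSpace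

namespace GolombAux

/-! ### Neighbourhoods and closures -/

lemma isOpen_basic {a b : ℕ} (ha : 0 < a) (hb : 0 < b) (hab : a.Coprime b) :
    IsOpen (golombBasic a b) :=
  isOpen_generateFrom_of_mem ⟨a, b, ha, hb, hab, rfl⟩

lemma self_mem_basic (x : ℕ+) (b : ℕ) : x ∈ golombBasic x b := ⟨0, by simp⟩

lemma basic_subset {a b c : ℕ} (h : b ∣ c) : golombBasic a c ⊆ golombBasic a b := by
  rintro y ⟨n, hn⟩
  obtain ⟨d, rfl⟩ := h
  exact ⟨d * n, by rw [hn]; ring⟩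

lemma exists_basic_subset {U : Set ℕ+} (hU : IsOpen U) {x : ℕ+} (hx : x ∈ U) :
    ∃ b : ℕ, 0 < b ∧ (x : ℕ).Coprime b ∧ golombBasic x b ⊆ U := by
  induction hU with
  | basic s hs =>
    obtain ⟨a, b, ha, hb, hab, rfl⟩ := hs
    obtain ⟨n, hn⟩ := hx
    refine ⟨b, hb, ?_, ?_⟩
    · rw [hn]
      simpa using hab
    · rintro y ⟨m, hm⟩
      exact ⟨n + m, by rw [hm, hn]; ring⟩
  | univ => exact ⟨1, one_pos, by simp, Set.subset_univ _⟩
  | inter s t _ _ ihs iht =>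
    obtain ⟨b, hb, hxb, hs⟩ := ihs hx.1
    obtain ⟨c, hc, hxc, ht⟩ := iht hx.2
    exact ⟨b * c, Nat.mul_pos hb hc, hxb.mul_right hxc, Set.subset_inter
      ((basic_subset (Dvd.intro _ rfl)).trans hs) ((basic_subset (Dvd.intro_left _ rfl)).trans ht)⟩
  | sUnion S _ ih =>
    obtain ⟨s, hs, hxs⟩ := hx
    obtain ⟨b, hb, hxb, hsub⟩ := ih s hs hxs
    exact ⟨b, hb, hxb, hsub.trans (Set.subset_sUnion_of_mem hs)⟩

/-- Two progressions `a + dℕ₀` and `t + eℕ₀` meet as soon as `a ≡ t` modulo `gcd d e`. -/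
lemma exists_common {a d t e : ℕ} (ha : 0 < a) (hd : 0 < d) (he : 0 < e)
    (h : a ≡ t [MOD d.gcd e]) : ∃ y : ℕ+, y ∈ golombBasic a d ∧ y ∈ golombBasic t e := by
  obtain ⟨k, hk1, hk2⟩ := Nat.chineseRemainder' h
  -- Adding a large multiple of `d * e` makes the solution exceed both `a` and `t`.
  set y := k + d * e * (a + t) with hy
  have hde : 0 < d * e := Nat.mul_pos hd he
  have hle : a + t ≤ y := by nlinarith
  have h1 : a ≡ y [MOD d] := by
    refine hk1.symm.trans ?_
    rw [hy, mul_assoc]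
    exact (Nat.ModEq.refl k |>.add (Nat.modEq_zero_iff_dvd.2 (Dvd.intro _ rfl))).symm
  have h2 : t ≡ y [MOD e] := by
    refine hk2.symm.trans ?_
    rw [hy, mul_comm d e, mul_assoc]
    exact (Nat.ModEq.refl k |>.add (Nat.modEq_zero_iff_dvd.2 (Dvd.intro _ rfl))).symm
  obtain ⟨m, hm⟩ := (Nat.modEq_iff_dvd' (by omega)).1 h1
  obtain ⟨n, hn⟩ := (Nat.modEq_iff_dvd' (by omega)).1 h2
  exact ⟨⟨y, by omega⟩, ⟨m, by simp only [PNat.mk_coe]; omega⟩,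
    ⟨n, by simp only [PNat.mk_coe]; omega⟩⟩

lemma mem_closure_basic {a d : ℕ} (ha : 0 < a) (hd : 0 < d) (t : ℕ+) :
    t ∈ closure (golombBasic a d) ↔ ∀ g, g ∣ d → g.Coprime t → (t : ℕ) ≡ a [MOD g] := by
  constructor
  · intro ht g hg hgt
    obtain ⟨y, ⟨m, hm⟩, ⟨n, hn⟩⟩ := mem_closure_iff.1 ht (golombBasic t g)
      (isOpen_basic t.pos (Nat.pos_of_dvd_of_pos hg hd) hgt.symm) (self_mem_basic t g)
    obtain ⟨c, rfl⟩ := hg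
    have h1 : (y : ℕ) ≡ t [MOD g] := by rw [hm]; simp [Nat.ModEq]
    have h2 : (y : ℕ) ≡ a [MOD g] := by rw [hn, mul_assoc]; simp [Nat.ModEq]
    exact h1.symm.trans h2
  · intro H
    refine mem_closure_iff.2 fun U hU htU => ?_
    obtain ⟨e, he, hte, hsub⟩ := exists_basic_subset hU htU
    have hg := H (d.gcd e) (Nat.gcd_dvd_left _ _)
      (hte.symm.coprime_dvd_left (Nat.gcd_dvd_right _ _))
    obtain ⟨y, hy1, hy2⟩ := exists_common ha hd he hg.symm
    exact ⟨y, hsub hy2, hy1⟩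

/-- If progressions at `x` and `z` impose at the prime `q` no condition other than `t ≡ w`,
then their closures have a common point `t`, not divisible by `q`, with `t ≡ w` modulo a given
power of `q`. All conditions at other primes are met by making `t` divisible by them. -/
lemma exists_in_closures {x z : ℕ+} {B C q w K : ℕ} (hB : 0 < B) (hC : 0 < C)
    (hxB : (x : ℕ).Coprime B) (hzC : (z : ℕ).Coprime C) (hq : q.Prime) (hw : ¬ q ∣ w)
    (hx : ¬ q ∣ x → w = x) (hz : ¬ q ∣ z → w = z) :
    ∃ t : ℕ+, t ∈ closure (golombBasic x B) ∧ t ∈ closure (golombBasic z C) ∧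
      ¬ q ∣ t ∧ (t : ℕ) ≡ w [MOD q ^ K] := by
  obtain ⟨m, B', hB', rfl⟩ := Nat.exists_eq_pow_mul_and_not_dvd hB.ne' q hq.ne_one
  obtain ⟨n, C', hC', rfl⟩ := Nat.exists_eq_pow_mul_and_not_dvd hC.ne' q hq.ne_one
  have hcop : (q ^ (K + m + n + 1)).Coprime (B' * C') :=
    Nat.Coprime.pow_left _ (((hq.coprime_iff_not_dvd).2 hB').mul_right
      ((hq.coprime_iff_not_dvd).2 hC'))
  obtain ⟨t, ht1, ht2⟩ := Nat.chineseRemainder hcop w 0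
  have htw : ∀ i, i ≤ K + m + n + 1 → t ≡ w [MOD q ^ i] := fun i hi =>
    ht1.of_dvd (pow_dvd_pow q hi)
  have hqt : ¬ q ∣ t := by
    have h1 := htw 1 (by omega)
    rw [pow_one] at h1
    exact fun h => hw ((h1.dvd_iff dvd_rfl).1 h)
  have htd : B' * C' ∣ t := Nat.modEq_zero_iff_dvd.1 ht2
  have htpos : 0 < t := Nat.pos_of_ne_zero fun h => hqt (h ▸ dvd_zero q)
  have key : ∀ (u : ℕ+) (i D : ℕ), (u : ℕ).Coprime (q ^ i * D) → (¬ q ∣ u → w = u) → D ∣ t →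
      i ≤ K + m + n + 1 → ∀ g, g ∣ q ^ i * D → g.Coprime t → t ≡ u [MOD g] := by
    intro u i D huD hu hDt hi g hg hgt
    have hgq : g ∣ q ^ i := (hgt.coprime_dvd_right hDt).dvd_of_dvd_mul_right hg
    by_cases hqu : q ∣ u
    · have hi0 : i = 0 := by
        by_contra hne
        exact hq.one_lt.ne' (Nat.eq_one_of_dvd_coprimes huD hqu
          ((dvd_pow_self q hne).mul_right D))
      subst hi0
      rw [pow_zero, Nat.dvd_one] at hgq
      rw [hgq]
      exact Nat.modEq_one
    · rw [← hu hqu]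
      exact (htw i hi).of_dvd hgq
  refine ⟨⟨t, htpos⟩, (mem_closure_basic x.pos hB _).2 ?_, (mem_closure_basic z.pos hC _).2 ?_,
    hqt, htw K (by omega)⟩
  · exact key x m B' hxB hx ((Dvd.intro _ rfl).trans htd) (by omega)
  · exact key z n C' hzC hz ((Dvd.intro_left _ rfl).trans htd) (by omega)

/-! ### The topological relation between pairs of points -/

/-- The filter generated by the sets `cl U ∩ cl V`, for `U, V` open neighbourhoods of `x, y`, is
contained in the analogous filter for `x, z`. -/
def FilterLE (x y z : ℕ+) : Prop :=
  ∀ U V : Set ℕ+, IsOpen U → IsOpen V → x ∈ U → y ∈ V →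
    ∃ U' V' : Set ℕ+, IsOpen U' ∧ IsOpen V' ∧ x ∈ U' ∧ z ∈ V' ∧
      closure U' ∩ closure V' ⊆ closure U ∩ closure V

lemma FilterLE.map (h : ℕ+ ≃ₜ ℕ+) {x y z : ℕ+} (H : FilterLE x y z) :
    FilterLE (h x) (h y) (h z) := by
  intro U V hU hV hx hy
  obtain ⟨U', V', hU', hV', hx', hz', hsub⟩ := H (h ⁻¹' U) (h ⁻¹' V)
    (hU.preimage h.continuous) (hV.preimage h.continuous) hx hy
  refine ⟨h '' U', h '' V', h.isOpenMap _ hU', h.isOpenMap _ hV', ⟨x, hx', rfl⟩, ⟨z, hz', rfl⟩, ?_⟩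
  rw [← h.image_closure, ← h.image_closure, ← Set.image_inter h.injective]
  rintro _ ⟨t, ht, rfl⟩
  have := hsub ht
  rwa [← h.preimage_closure, ← h.preimage_closure] at this

lemma eq_one_of_filterLE {x z : ℕ+} (hx : x ≠ 1) (H : FilterLE x 1 z) : z = 1 := by
  by_contra hz
  obtain ⟨q, hq, hqx⟩ := Nat.exists_prime_and_dvd (n := x) (by simpa using hx)
  have hq0 : 0 < q := hq.pos
  -- `k` is such that `q ^ k` exceeds both `z` and `2`.
  set k := (z : ℕ) + 2 with hk
  have hqk : k < q ^ k := Nat.lt_pow_self hq.one_lt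
  obtain ⟨U', V', hU', hV', hxU, hzV, hsub⟩ := H Set.univ (golombBasic 1 (q ^ k)) isOpen_univ
    (isOpen_basic one_pos (by positivity) (by simp)) trivial (self_mem_basic 1 _)
  obtain ⟨B, hB, hxB, hBU⟩ := exists_basic_subset hU' hxU
  obtain ⟨C, hC, hzC, hCV⟩ := exists_basic_subset hV' hzV
  have hz1 : 1 < (z : ℕ) := by
    have := z.pos
    have : (z : ℕ) ≠ 1 := by simpa using hz
    omega
  obtain ⟨w, hw, hw1, hwz⟩ : ∃ w : ℕ, ¬ q ∣ w ∧ ¬ w ≡ 1 [MOD q ^ k] ∧ (¬ q ∣ z → w = z) := by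
    by_cases hqz : q ∣ z
    · refine ⟨q ^ k - 1, fun hd => ?_, fun hd => ?_, fun h => absurd hqz h⟩
      · have h1 : q ∣ q ^ k := dvd_pow_self q (by omega)
        have h2 := (Nat.dvd_sub_iff_right (by omega) h1).1 hd
        exact hq.one_lt.ne' (Nat.dvd_one.1 h2)
      · have := Nat.ModEq.eq_of_lt_of_lt hd (by omega) (by omega)
        omega
    · refine ⟨z, hqz, fun hd => ?_, fun _ => rfl⟩
      have := Nat.ModEq.eq_of_lt_of_lt hd (by omega) (by omega)
      omega
  obtain ⟨t, ht1, ht2, hqt, htw⟩ := exists_in_closures (K := k) hB hC hxB hzC hq hw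
    (fun h => absurd hqx h) hwz
  have ht := (hsub ⟨closure_mono hBU ht1, closure_mono hCV ht2⟩).2
  rw [mem_closure_basic one_pos (by positivity)] at ht
  exact hw1 (htw.symm.trans (ht _ dvd_rfl (((hq.coprime_iff_not_dvd).2 hqt).pow_left k)))

lemma filterLE_one_iff {y z : ℕ+} (hy : y ≠ 1) (hz : z ≠ 1) :
    FilterLE 1 y z ↔ ∀ q : ℕ, q.Prime → q ∣ z → q ∣ y := by
  constructor
  · intro H q hq hqz
    by_contra hqy
    have hq0 : 0 < q := hq.pos
    have hqk : (y : ℕ) < q ^ (y : ℕ) := Nat.lt_pow_self hq.one_lt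
    have hqy' : (y : ℕ).Coprime (q ^ (y : ℕ)) := (((hq.coprime_iff_not_dvd).2 hqy).pow_left _).symm
    obtain ⟨U', V', hU', hV', hxU, hzV, hsub⟩ := H (golombBasic 1 (q ^ (y : ℕ)))
      (golombBasic y (q ^ (y : ℕ))) (isOpen_basic one_pos (by positivity) (by simp))
      (isOpen_basic y.pos (by positivity) hqy') (self_mem_basic 1 _) (self_mem_basic y _)
    obtain ⟨B, hB, hxB, hBU⟩ := exists_basic_subset hU' hxU
    obtain ⟨C, hC, hzC, hCV⟩ := exists_basic_subset hV' hzV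
    obtain ⟨t, ht1, ht2, hqt, -⟩ := exists_in_closures (K := 0) (w := 1) hB hC hxB hzC hq
      (by simpa using hq.ne_one) (fun _ => rfl) (fun h => absurd hqz h)
    have ht := hsub ⟨closure_mono hBU ht1, closure_mono hCV ht2⟩
    have hc : (q ^ (y : ℕ)).Coprime t := ((hq.coprime_iff_not_dvd).2 hqt).pow_left _
    have e1 := (mem_closure_basic one_pos (by positivity) t).1 ht.1 _ dvd_rfl hc
    have e2 := (mem_closure_basic y.pos (by positivity) t).1 ht.2 _ dvd_rfl hc
    have hy1 : (y : ℕ) ≠ 1 := by simpa using hy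
    have := y.pos
    exact hy1 (Nat.ModEq.eq_of_lt_of_lt (e2.symm.trans e1) hqk (by omega))
  · intro H U V hU hV hxU hyV
    obtain ⟨b, hb, -, hbU⟩ := exists_basic_subset hU hxU
    obtain ⟨c, hc, hyc, hcV⟩ := exists_basic_subset hV hyV
    have hzc : (z : ℕ).Coprime c := Nat.coprime_of_dvd fun q hq hqz hqc =>
      hq.one_lt.ne' (Nat.eq_one_of_dvd_coprimes hyc (H q hq hqz) hqc)
    refine ⟨golombBasic 1 (b * c ^ (z : ℕ)), golombBasic z (c ^ (z : ℕ)),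
      isOpen_basic one_pos (by positivity) (by simp),
      isOpen_basic z.pos (by positivity) (hzc.pow_right _), self_mem_basic 1 _,
      self_mem_basic z _, fun t ht => ⟨?_, ?_⟩⟩
    · exact closure_mono ((basic_subset (Dvd.intro _ rfl)).trans hbU) ht.1
    · refine closure_mono hcV ((mem_closure_basic y.pos hc t).2 fun g hg hgt => ?_)
      -- A divisor `g` of `c` coprime to `t` satisfies `z ≡ t ≡ 1` modulo `g ^ z > z`, so `g = 1`.
      have e1 := (mem_closure_basic one_pos (by positivity) t).1 ht.1 _
        ((pow_dvd_pow_of_dvd hg (z : ℕ)).mul_left b) (hgt.pow_left _)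
      have e2 := (mem_closure_basic z.pos (by positivity) t).1 ht.2 _
        (pow_dvd_pow_of_dvd hg (z : ℕ)) (hgt.pow_left _)
      have hg0 : 0 < g := Nat.pos_of_dvd_of_pos hg hc
      obtain rfl | hg1 : g = 1 ∨ 1 < g := by omega
      · exact Nat.modEq_one
      · have hlt : (z : ℕ) < g ^ (z : ℕ) := Nat.lt_pow_self hg1
        have hz1 : (z : ℕ) ≠ 1 := by simpa using hz
        have := z.pos
        exact absurd (Nat.ModEq.eq_of_lt_of_lt (e2.symm.trans e1) hlt (by omega)) hz1

/-! ### Homeomorphisms and prime divisors -/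

lemma map_one_eq (h : ℕ+ ≃ₜ ℕ+) : h 1 = 1 := by
  by_contra hne
  have hy : h.symm 1 ≠ 1 := fun e => hne (by rw [← e, h.apply_symm_apply, e])
  set y := h.symm 1 with hydef
  have hy1 : (y : ℕ) ≠ 1 := by simpa using hy
  have hypos := y.pos
  have hyy : y ^ 2 ≠ y := fun e => by
    have := congrArg PNat.val e
    rw [PNat.pow_coe] at this
    nlinarith [show 2 ≤ (y : ℕ) by omega, this]
  have hy2 : y ^ 2 ≠ 1 := fun e => by
    have := congrArg PNat.val e
    rw [PNat.pow_coe, PNat.one_coe] at this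
    nlinarith [show 2 ≤ (y : ℕ) by omega, this]
  have H : FilterLE 1 y (y ^ 2) := (filterLE_one_iff hy hy2).2 fun q hq hd =>
    hq.dvd_of_dvd_pow (by simpa using hd)
  have H' := H.map h
  have hh : h y = 1 := h.apply_symm_apply 1
  rw [hh] at H'
  have := eq_one_of_filterLE hne H'
  exact hyy (h.injective (this.trans hh.symm))

/-- Every prime divisor of `z` divides `y`. -/
def PrimesLE (z y : ℕ+) : Prop := ∀ q : ℕ, q.Prime → q ∣ z → q ∣ y

lemma PrimesLE.map (h : ℕ+ ≃ₜ ℕ+) {z y : ℕ+} (H : PrimesLE z y) : PrimesLE (h z) (h y) := by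
  by_cases hz : z = 1
  · intro q hq hd
    rw [hz, map_one_eq] at hd
    exact absurd (Nat.dvd_one.1 hd) hq.ne_one
  by_cases hy : y = 1
  · obtain ⟨q, hq, hqz⟩ := Nat.exists_prime_and_dvd (n := z) (by simpa using hz)
    have := H q hq hqz
    rw [hy] at this
    exact absurd (Nat.dvd_one.1 this) hq.ne_one
  have hne : ∀ u : ℕ+, u ≠ 1 → h u ≠ 1 := fun u hu e =>
    hu (h.injective (e.trans (map_one_eq h).symm))
  have := ((filterLE_one_iff hy hz).2 H).map h
  rw [map_one_eq] at this
  exact (filterLE_one_iff (hne y hy) (hne z hz)).1 this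

lemma primesLE_map_iff (h : ℕ+ ≃ₜ ℕ+) {z y : ℕ+} : PrimesLE (h z) (h y) ↔ PrimesLE z y :=
  ⟨fun H => by simpa using H.map h.symm, fun H => H.map h⟩

lemma primesLE_prime_iff {p : ℕ+} (hp : (p : ℕ).Prime) {x : ℕ+} :
    PrimesLE p x ↔ (p : ℕ) ∣ x :=
  ⟨fun H => H p hp dvd_rfl, fun H q hq hd => by
    rwa [(Nat.prime_dvd_prime_iff_eq hq hp).1 hd]⟩

lemma exists_eq_pow {p : ℕ+} (hp : (p : ℕ).Prime) {x : ℕ+} (H : PrimesLE x p) :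
    ∃ i, (x : ℕ) = (p : ℕ) ^ i :=
  ⟨_, Nat.eq_prime_pow_of_unique_prime_dvd x.pos.ne' fun hd hx =>
    (Nat.prime_dvd_prime_iff_eq hd hp).1 (H _ hd hx)⟩

/-- A prime `p` with `h p = q ^ k`, `k ≠ 0`, and `h (p ^ j) = q` forces `j ≤ 1`: by Dirichlet's
theorem some prime `s ≡ p ^ j ≡ 1` modulo `p ^ j - 1` has a power congruent to `p`. -/
lemma not_two_le (h : ℕ+ ≃ₜ ℕ+) {p q w : ℕ+} {k j : ℕ} (hp : (p : ℕ).Prime)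
    (hpk : (h p : ℕ) = (q : ℕ) ^ k) (hw : (w : ℕ) = (p : ℕ) ^ j) (hwq : h w = q) (hk : k ≠ 0) :
    ¬ 2 ≤ j := by
  intro hj
  have hp2 := hp.two_le
  set R := (p : ℕ) ^ j - 1 with hR
  have hlt : (p : ℕ) < (p : ℕ) ^ j := by
    calc (p : ℕ) = (p : ℕ) ^ 1 := (pow_one _).symm
      _ < (p : ℕ) ^ j := Nat.pow_lt_pow_right hp.one_lt (by omega)
  have hRp : (p : ℕ).Coprime R := by
    refine (hp.coprime_iff_not_dvd).2 fun hd => ?_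
    have h1 : (p : ℕ) ∣ (p : ℕ) ^ j := dvd_pow_self _ (by omega)
    exact hp.one_lt.ne' (Nat.dvd_one.1 ((Nat.dvd_sub_iff_right (by omega) h1).1 hd))
  have hR0 : 0 < R := by omega
  have hV : IsOpen (h.symm ⁻¹' golombBasic p R) :=
    (isOpen_basic p.pos hR0 hRp).preimage h.symm.continuous
  obtain ⟨M, hM, hpM, hMV⟩ := exists_basic_subset hV (x := h p) (by
    simpa using self_mem_basic p R)
  have hqM : (q : ℕ).Coprime M := by
    rw [hpk] at hpM
    exact (Nat.coprime_pow_left_iff (Nat.pos_of_ne_zero hk) _ _).1 hpM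
  have hW : IsOpen (h ⁻¹' golombBasic q M) :=
    (isOpen_basic q.pos hM hqM).preimage h.continuous
  obtain ⟨n, hn, hwn, hnW⟩ := exists_basic_subset hW (x := w) (by
    simpa [hwq] using self_mem_basic q M)
  have hcop : (w : ℕ).Coprime (n * R) := hwn.mul_right (by rw [hw]; exact hRp.pow_left j)
  obtain ⟨s, hsw, hs, hsmod⟩ :=
    Nat.forall_exists_prime_gt_and_modEq (w : ℕ) (Nat.mul_pos hn hR0).ne' hcop
  have hsn : (⟨s, hs.pos⟩ : ℕ+) ∈ golombBasic w n := by
    obtain ⟨c, hc⟩ := (Nat.modEq_iff_dvd' hsw.le).1 (hsmod.symm.of_dvd (Dvd.intro _ rfl))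
    exact ⟨c, by simp only [PNat.mk_coe]; omega⟩
  set S : ℕ+ := ⟨s, hs.pos⟩ with hSdef
  obtain ⟨c, hc⟩ := hnW hsn
  have hT : h S ^ k ∈ golombBasic (h p) M := by
    have hle : (q : ℕ) ^ k ≤ (h S : ℕ) ^ k := Nat.pow_le_pow_left (by omega) k
    have hmod : (q : ℕ) ^ k ≡ (h S : ℕ) ^ k [MOD M] :=
      Nat.ModEq.pow k (by rw [hc]; simp [Nat.ModEq])
    obtain ⟨c', hc'⟩ := (Nat.modEq_iff_dvd' hle).1 hmod
    exact ⟨c', by rw [hpk, PNat.pow_coe]; omega⟩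
  obtain ⟨d, hd⟩ := hMV hT
  have hS : ((S : ℕ+) : ℕ).Prime := hs
  have hle : PrimesLE (h.symm (h S ^ k)) S := by
    rw [← primesLE_map_iff h, h.apply_symm_apply]
    intro r hr hd
    rw [PNat.pow_coe] at hd
    exact hr.dvd_of_dvd_pow hd
  obtain ⟨i, hi⟩ := exists_eq_pow hS hle
  have hs1 : s ≡ 1 [MOD R] := by
    have h1 : s ≡ w [MOD R] := hsmod.of_dvd (Dvd.intro_left _ rfl)
    refine h1.trans ?_
    rw [hw]
    exact ((Nat.modEq_iff_dvd' (by omega)).2 dvd_rfl).symm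
  have hp1 : (p : ℕ) ≡ 1 [MOD R] := by
    have h2 : (p : ℕ) ≡ s ^ i [MOD R] := by
      have : s ^ i = (p : ℕ) + R * d := hi.symm.trans hd
      rw [this]
      simp [Nat.ModEq]
    simpa using h2.trans (hs1.pow i)
  have := Nat.le_of_dvd (by omega) ((Nat.modEq_iff_dvd' (by omega)).1 hp1.symm)
  omega

lemma map_prime (h : ℕ+ ≃ₜ ℕ+) {p : ℕ+} (hp : (p : ℕ).Prime) : ((h p : ℕ+) : ℕ).Prime := by
  have hne : h p ≠ 1 := fun e => by
    have : p = 1 := h.injective (e.trans (map_one_eq h).symm)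
    rw [this] at hp
    exact Nat.not_prime_one hp
  obtain ⟨q', hq', hd⟩ := Nat.exists_prime_and_dvd (n := h p) (by simpa using hne)
  obtain ⟨q, rfl⟩ : ∃ q : ℕ+, (q : ℕ) = q' := ⟨⟨q', hq'.pos⟩, rfl⟩
  set w := h.symm q with hwdef
  have hwq : h w = q := h.apply_symm_apply q
  have hle : PrimesLE w p := by
    rw [← primesLE_map_iff h, hwq]
    exact (primesLE_prime_iff hq').2 hd
  obtain ⟨j, hj⟩ := exists_eq_pow hp hle
  have hj0 : j ≠ 0 := by
    rintro rfl
    have hw1 : w = 1 := by simpa using hj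
    rw [hw1, map_one_eq] at hwq
    rw [← hwq] at hq'
    exact Nat.not_prime_one hq'
  have hle' : PrimesLE (h p) q := by
    rw [← hwq, primesLE_map_iff h, primesLE_prime_iff hp, hj]
    exact dvd_pow_self _ hj0
  obtain ⟨k, hk⟩ := exists_eq_pow hq' hle'
  have hk0 : k ≠ 0 := by
    rintro rfl
    exact hne (by simpa using hk)
  have hj1 : j = 1 := by
    have := not_two_le h hp hk hj hwq hk0
    omega
  have hwp : w = p := PNat.coe_injective (by rw [hj, hj1, pow_one])
  rwa [← hwp, hwq]

lemma dvd_iff_map (h : ℕ+ ≃ₜ ℕ+) {p : ℕ+} (hp : (p : ℕ).Prime) (x : ℕ+) :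
    (p : ℕ) ∣ x ↔ ((h p : ℕ+) : ℕ) ∣ (h x : ℕ+) := by
  rw [← primesLE_prime_iff hp, ← primesLE_prime_iff (map_prime h hp), primesLE_map_iff h]

end GolombAux

/-- For any homeomorphism `h` of the Golomb space and any prime `p`, `h(pℕ) = h(p)ℕ`;
consequently `h` restricts to a homeomorphism of the subspace `ℕ_τ \ pℕ` onto the
subspace `ℕ_τ \ h(p)ℕ`. -/
theorem golomb_homeo_multiples (h : ℕ+ ≃ₜ ℕ+) (p : ℕ+) (hp : (p : ℕ).Prime) :
    h '' {x : ℕ+ | (p : ℕ) ∣ (x : ℕ)} = {x : ℕ+ | (↑(h p) : ℕ) ∣ (x : ℕ)} ∧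
    ∃ g : Np (p : ℕ) ≃ₜ Np (↑(h p) : ℕ), ∀ y : Np (p : ℕ), (↑(g y) : ℕ+) = h ↑y := by
  refine ⟨?_, h.subtype fun x => not_congr (GolombAux.dvd_iff_map h hp x), fun y => rfl⟩
  ext y
  constructor
  · rintro ⟨x, hx, rfl⟩
    exact (GolombAux.dvd_iff_map h hp x).1 hx
  · intro hy
    refine ⟨h.symm y, (GolombAux.dvd_iff_map h hp _).2 ?_, h.apply_symm_apply y⟩
    rwa [h.apply_symm_apply]
end
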